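/- For every fixed ε > 0 there is a constant C(ε) such that, with the notation of the context, for any permutation (i, j, k) of (1, 2, 3) and any fixed positive integers x_i, x_j, y_k, the number of triples (x_k, y_i, y_j) of positive integers for which the resulting sextuple (x₁, x₂, x₃, y₁, y₂, y₃) lies in S₀(B) is at most C(ε) · (1 + (Y_iY_j)^{2/3} Y_k^{−2}) · B^ε. -/

import Mathlib

/-- The set `S₀(B)` of sextuples `(x₁, x₂, x₃, y₁, y₂, y₃)` of positive integers (encoded as a
pair of functions `Fin 3 → ℤ`) such that `Xᵢ/2 < xᵢ ≤ Xᵢ` and `Yᵢ/2 < yᵢ ≤ Yᵢ`, the equation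
`a₁x₁²y₁³ + a₂x₂²y₂³ + a₃x₃²y₃³ = 0` holds, `gcd(x₁y₁, x₂y₂, x₃y₃) = 1`,
`gcd(a₁a₂a₃, x₁x₂x₃y₁y₂y₃) = 1`, and `a₁y₁, a₂y₂, a₃y₃` are all squarefree. -/
def S0 (a : Fin 3 → ℤ) (X Y : Fin 3 → ℝ) : Set ((Fin 3 → ℤ) × (Fin 3 → ℤ)) :=
  {p | (∀ i, 0 < p.1 i) ∧ (∀ i, 0 < p.2 i) ∧
    (∀ i, X i / 2 < (p.1 i : ℝ) ∧ (p.1 i : ℝ) ≤ X i) ∧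
    (∀ i, Y i / 2 < (p.2 i : ℝ) ∧ (p.2 i : ℝ) ≤ Y i) ∧
    a 0 * p.1 0 ^ 2 * p.2 0 ^ 3 + a 1 * p.1 1 ^ 2 * p.2 1 ^ 3 +
      a 2 * p.1 2 ^ 2 * p.2 2 ^ 3 = 0 ∧
    Int.gcd (p.1 0 * p.2 0) (Int.gcd (p.1 1 * p.2 1) (p.1 2 * p.2 2)) = 1 ∧
    Int.gcd (a 0 * a 1 * a 2) (p.1 0 * p.1 1 * p.1 2 * p.2 0 * p.2 1 * p.2 2) = 1 ∧
    (∀ i, Squarefree (a i * p.2 i))}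

open Polynomial

namespace FB

section Stepanov
variable {p : ℕ} [Fact p.Prime]

/-- The property that `f` is not a constant times a square (in a strong form). -/
def NotSq (f : (ZMod p)[X]) : Prop :=
  ∀ r s : (ZMod p)[X], ∀ c : ZMod p, c ≠ 0 → r ^ 2 * f = C c * s ^ 2 → r = 0 ∧ s = 0

lemma stepanov_nonvanish_aux (f : (ZMod p)[X]) (hf : NotSq f) (hf0 : f.coeff 0 ≠ 0)
    (h : ℕ) (hp : p = 2 * h + 1) (hdeg : f.natDegree ≤ 3) (r s : (ZMod p)[X])
    (hr : r.natDegree + 2 ≤ h) (hs : s.natDegree + 2 ≤ h)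
    (hdvd : X ^ p ∣ r + s * f ^ h) : r = 0 ∧ s = 0 := by
  apply hf r s (f.coeff 0) hf0
  have h1 : X ^ p ∣ r ^ 2 * f - s ^ 2 * f ^ p := by
    have : r ^ 2 * f - s ^ 2 * f ^ p = (r + s * f ^ h) * ((r - s * f ^ h) * f) := by
      have e : f ^ p = f ^ (2 * h + 1) := congrArg (fun n => f ^ n) hp
      rw [e]; ring
    rw [this]; exact Dvd.dvd.mul_right hdvd _
  have h2 : X ^ p ∣ f ^ p - C (f.coeff 0) := by
    have : C (f.coeff 0) = (C (f.coeff 0)) ^ p := by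
      rw [← C_pow, ZMod.pow_card]
    rw [this, ← sub_pow_char]
    apply pow_dvd_pow_of_dvd
    rw [X_dvd_iff]; simp
  have h3 : X ^ p ∣ r ^ 2 * f - C (f.coeff 0) * s ^ 2 := by
    have : r ^ 2 * f - C (f.coeff 0) * s ^ 2
      = (r ^ 2 * f - s ^ 2 * f ^ p) + s ^ 2 * (f ^ p - C (f.coeff 0)) := by ring
    rw [this]; exact dvd_add h1 (Dvd.dvd.mul_left h2 _)
  have h4 : r ^ 2 * f - C (f.coeff 0) * s ^ 2 = 0 := by
    by_contra hne
    have h5 := natDegree_le_of_dvd h3 hne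
    rw [natDegree_X_pow] at h5
    have h6 : (r ^ 2 * f - C (f.coeff 0) * s ^ 2).natDegree ≤ 2 * h - 1 := by
      apply (natDegree_sub_le _ _).trans
      apply max_le
      · refine natDegree_mul_le.trans ?_
        have := natDegree_pow_le (p := r) (n := 2)
        omega
      · refine (natDegree_C_mul_le _ _).trans ?_
        have := natDegree_pow_le (p := s) (n := 2)
        omega
    omega
  exact sub_eq_zero.mp h4

lemma stepanov_nonvanish (f : (ZMod p)[X]) (hf : NotSq f) (hf0 : f.coeff 0 ≠ 0)
    (h : ℕ) (hp : p = 2 * h + 1) (hdeg : f.natDegree ≤ 3) (J : ℕ) (r s : ℕ → (ZMod p)[X])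
    (hr : ∀ j, (r j).natDegree + 2 ≤ h) (hs : ∀ j, (s j).natDegree + 2 ≤ h)
    (hz : ∑ j ∈ Finset.range J, (r j + s j * f ^ h) * X ^ (j * p) = 0) :
    ∀ j < J, r j = 0 ∧ s j = 0 := by
  induction J generalizing r s with
  | zero => intro j hj; omega
  | succ J ih =>
    rw [Finset.sum_range_succ'] at hz
    have e : ∑ j ∈ Finset.range J, (r (j+1) + s (j+1) * f ^ h) * X ^ ((j+1) * p)
        = X ^ p * ∑ j ∈ Finset.range J, (r (j+1) + s (j+1) * f ^ h) * X ^ (j * p) := by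
      rw [Finset.mul_sum]
      apply Finset.sum_congr rfl
      intro j _
      rw [show (j+1) * p = j * p + p by ring, pow_add]; ring
    rw [e] at hz
    have h0 : r 0 = 0 ∧ s 0 = 0 := by
      apply stepanov_nonvanish_aux f hf hf0 h hp hdeg _ _ (hr 0) (hs 0)
      refine ⟨- ∑ j ∈ Finset.range J, (r (j+1) + s (j+1) * f ^ h) * X ^ (j * p), ?_⟩
      simp only [zero_mul, pow_zero, mul_one] at hz
      linear_combination hz
    have hz' : ∑ j ∈ Finset.range J, (r (j+1) + s (j+1) * f ^ h) * X ^ (j * p) = 0 := by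
      simp only [h0.1, h0.2, zero_mul, add_zero] at hz
      exact (mul_eq_zero.mp hz).resolve_left (pow_ne_zero _ X_ne_zero)
    have := ih (fun j => r (j+1)) (fun j => s (j+1)) (fun j => hr _) (fun j => hs _) hz'
    intro j hj
    rcases j with _ | j
    · exact h0
    · exact this j (by omega)

/-- derivative recursion as a linear map -/
noncomputable def stepD (f : (ZMod p)[X]) (c : ZMod p) : (ZMod p)[X] →ₗ[ZMod p] (ZMod p)[X] where
  toFun r := C c * derivative f * r + f * derivative r
  map_add' r s := by simp; ring
  map_smul' a r := by simp [smul_eq_C_mul]; ring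

/-- iterated: `k` steps starting with constants `c, c-1, ...`. -/
noncomputable def iterD (f : (ZMod p)[X]) (c : ZMod p) : ℕ → ((ZMod p)[X] →ₗ[ZMod p] (ZMod p)[X])
  | 0 => LinearMap.id
  | k+1 => (stepD f (c - k)).comp (iterD f c k)

lemma stepD_natDegree (f : (ZMod p)[X]) (hdeg : f.natDegree ≤ 3) (c : ZMod p) (r : (ZMod p)[X]) :
    (stepD f c r).natDegree ≤ r.natDegree + 2 := by
  simp only [stepD, LinearMap.coe_mk, AddHom.coe_mk]
  apply (natDegree_add_le _ _).trans
  apply max_le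
  · refine natDegree_mul_le.trans ?_
    have := natDegree_C_mul_le c (derivative f)
    have := natDegree_derivative_le f
    omega
  · by_cases h0 : r.natDegree = 0
    · have : derivative r = 0 := by
        rw [eq_C_of_natDegree_eq_zero h0]; simp
      simp [this]
    refine natDegree_mul_le.trans ?_
    have := natDegree_derivative_le r
    omega

lemma iterD_natDegree (f : (ZMod p)[X]) (hdeg : f.natDegree ≤ 3) (c : ZMod p) (r : (ZMod p)[X])
    (k : ℕ) : (iterD f c k r).natDegree ≤ r.natDegree + 2 * k := by
  induction k with
  | zero => simp [iterD]
  | succ k ih =>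
    have := stepD_natDegree f hdeg (c - k) (iterD f c k r)
    simp only [iterD, LinearMap.comp_apply]
    omega

lemma deriv_formula (f : (ZMod p)[X]) (h n j : ℕ) (hh : 1 ≤ h) (r s : (ZMod p)[X]) :
    derivative (f ^ (n+1) * ((r + s * f ^ h) * X ^ (j * p)))
      = f ^ n * ((stepD f ((n + 1 : ℕ) : ZMod p) r
          + stepD f ((n + 1 : ℕ) + h : ZMod p) s * f ^ h) * X ^ (j * p)) := by
  obtain ⟨h, rfl⟩ : ∃ h', h = h' + 1 := ⟨h - 1, by omega⟩
  have hX : derivative ((X : (ZMod p)[X]) ^ (j * p)) = 0 := by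
    rw [derivative_X_pow]; simp
  simp only [stepD, LinearMap.coe_mk, AddHom.coe_mk]
  rw [derivative_mul, derivative_mul, hX, derivative_add, derivative_mul,
    derivative_pow_succ, derivative_pow_succ]
  push_cast
  simp only [C_add, C_1, map_natCast, pow_succ]
  ring

lemma iter_formula (f : (ZMod p)[X]) (h l J : ℕ) (hh : 1 ≤ h) (r s : ℕ → (ZMod p)[X]) (k : ℕ)
    (hk : k ≤ l) :
    derivative^[k] (f ^ l * ∑ j ∈ Finset.range J, ((r j + s j * f ^ h) * X ^ (j * p)))
      = f ^ (l - k) * ∑ j ∈ Finset.range J, ((iterD f l k (r j)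
          + iterD f (l + h) k (s j) * f ^ h) * X ^ (j * p)) := by
  induction k with
  | zero => simp [iterD]
  | succ k ih =>
    rw [Function.iterate_succ_apply', ih (by omega)]
    obtain ⟨n, hn⟩ : ∃ n, l - k = n + 1 := ⟨l - k - 1, by omega⟩
    rw [hn, Finset.mul_sum, derivative_sum, show l - (k+1) = n by omega, Finset.mul_sum]
    apply Finset.sum_congr rfl
    intro j _
    rw [deriv_formula f h n j hh]
    have e : ((n + 1 : ℕ) : ZMod p) = (l : ZMod p) - k := by
      rw [← hn, Nat.cast_sub (by omega)]
    simp only [iterD, LinearMap.comp_apply, e]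
    rw [show (l : ZMod p) - k + h = l + h - k by ring]

end Stepanov
end FB

open Polynomial
namespace FB
section Stepanov2
variable {p : ℕ} [Fact p.Prime]

/-- Existence of the auxiliary polynomials. -/
lemma stepanov_exists (f : (ZMod p)[X]) (hdeg : f.natDegree ≤ 3) (h l J d : ℕ) (a : ZMod p)
    (hd : 1 ≤ d)
    (hcount : l * (d + 2 * l + J) < J * (2 * d)) :
    ∃ r s : ℕ → (ZMod p)[X], (∀ j, (r j).natDegree < d) ∧ (∀ j, (s j).natDegree < d) ∧
      (∃ j < J, ¬ (r j = 0 ∧ s j = 0)) ∧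
      ∀ k < l, ∑ j ∈ Finset.range J, (iterD f l k (r j) + C a * iterD f (l + h) k (s j)) * X ^ j
        = 0 := by
  classical
  let V := Fin J → (degreeLT (ZMod p) d × degreeLT (ZMod p) d)
  let M := d + 2 * l + J
  let W := Fin l → Fin M → ZMod p
  let Q : ℕ → V →ₗ[ZMod p] (ZMod p)[X] := fun k =>
    ∑ j : Fin J, (LinearMap.mulRight (ZMod p) ((X : (ZMod p)[X]) ^ (j : ℕ))).comp
      (((iterD f l k).comp ((Submodule.subtype _).comp
        ((LinearMap.fst _ _ _).comp (LinearMap.proj j)))) +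
      (LinearMap.mulLeft (ZMod p) (C a)).comp ((iterD f (l+h) k).comp ((Submodule.subtype _).comp
        ((LinearMap.snd _ _ _).comp (LinearMap.proj j)))))
  have hQ : ∀ k v, Q k v = ∑ j : Fin J, (iterD f l k ((v j).1 : (ZMod p)[X])
      + C a * iterD f (l + h) k ((v j).2 : (ZMod p)[X])) * X ^ (j : ℕ) := by
    intro k v
    simp [Q, LinearMap.sum_apply]
    rfl
  let L : V →ₗ[ZMod p] W := LinearMap.pi fun k => LinearMap.pi fun i => (lcoeff (ZMod p) (i : ℕ)).comp (Q k)
  have : Module.Finite (ZMod p) (degreeLT (ZMod p) d) :=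
    Module.Finite.equiv (degreeLTEquiv (ZMod p) d).symm
  have hfr : Module.finrank (ZMod p) (degreeLT (ZMod p) d) = d := by
    rw [LinearEquiv.finrank_eq (degreeLTEquiv (ZMod p) d)]; simp
  have hV : Module.finrank (ZMod p) V = J * (2 * d) := by
    simp only [V]
    rw [Module.finrank_pi_fintype]
    simp [Module.finrank_prod, hfr, two_mul]
  have hW : Module.finrank (ZMod p) W = l * M := by
    simp only [W]
    rw [Module.finrank_pi_fintype]; simp
  have hker : LinearMap.ker L ≠ ⊥ := by
    apply LinearMap.ker_ne_bot_of_finrank_lt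
    rw [hV, hW]; exact hcount
  obtain ⟨v, hv, hv0⟩ := Submodule.exists_mem_ne_zero_of_ne_bot hker
  have hdegLT : ∀ q : degreeLT (ZMod p) d, (q : (ZMod p)[X]).natDegree < d := by
    intro q
    by_cases hq : (q : (ZMod p)[X]) = 0
    · rw [hq]; simp; omega
    · rw [natDegree_lt_iff_degree_lt hq]
      exact mem_degreeLT.mp q.2
  let r : ℕ → (ZMod p)[X] := fun j => if hj : j < J then ((v ⟨j, hj⟩).1 : (ZMod p)[X]) else 0
  let s : ℕ → (ZMod p)[X] := fun j => if hj : j < J then ((v ⟨j, hj⟩).2 : (ZMod p)[X]) else 0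
  have hrd : ∀ j, (r j).natDegree < d := by
    intro j; simp only [r]; split_ifs
    · exact hdegLT _
    · simp; omega
  have hsd : ∀ j, (s j).natDegree < d := by
    intro j; simp only [s]; split_ifs
    · exact hdegLT _
    · simp; omega
  refine ⟨r, s, hrd, hsd, ?_, ?_⟩
  · by_contra hcon
    push Not at hcon
    apply hv0
    funext j
    have := hcon j j.2
    simp only [r, s, j.2, dif_pos] at this
    ext1
    · exact Subtype.ext this.1
    · exact Subtype.ext this.2
  · intro k hk
    have e : ∑ j ∈ Finset.range J, (iterD f l k (r j) + C a * iterD f (l + h) k (s j)) * X ^ j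
        = Q k v := by
      rw [hQ, Finset.sum_range]
      apply Finset.sum_congr rfl
      intro j _
      simp only [r, s, j.2, dif_pos]
    rw [e]
    ext i
    rw [coeff_zero]
    by_cases hi : i < M
    · have h1 : L v = 0 := hv
      have := congrFun (congrFun h1 ⟨k, hk⟩) ⟨i, hi⟩
      exact this
    · apply coeff_eq_zero_of_natDegree_lt
      rw [← e]
      have hM : M = d + 2 * l + J := rfl
      have : (∑ j ∈ Finset.range J, (iterD f l k (r j) + C a * iterD f (l + h) k (s j)) * X ^ j).natDegree
          ≤ d - 1 + 2 * l + J := by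
        apply natDegree_sum_le_of_forall_le
        intro j hj
        have hj := Finset.mem_range.mp hj
        refine natDegree_mul_le.trans ?_
        rw [natDegree_X_pow]
        have a1 := iterD_natDegree f hdeg l (r j) k
        have a2 := iterD_natDegree f hdeg (l+h) (s j) k
        have a3 := natDegree_C_mul_le a (iterD f (l+h) k (s j))
        have a4 := natDegree_add_le (iterD f l k (r j)) (C a * iterD f (l + h) k (s j))
        have := hrd j
        have := hsd j
        have : max (iterD f l k (r j)).natDegree (C a * iterD f (l + h) k (s j)).natDegree ≤ d - 1 + 2 * l := by
          apply max_le <;> omega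
        omega
      omega

lemma stepanov_main (f : (ZMod p)[X]) (hf : NotSq f) (hf0 : f.coeff 0 ≠ 0)
    (h : ℕ) (hp : p = 2 * h + 1) (hdeg : f.natDegree ≤ 3) (l J : ℕ) (hl : 1 ≤ l) (hlp : l ≤ p)
    (hh : 2 ≤ h) (a : ZMod p)
    (hcount : l * (h - 1 + 2 * l + J) < J * (2 * (h - 1))) :
    l * (Finset.univ.filter fun x : ZMod p => (f.eval x) ^ h = a).card
      ≤ 3 * l + 2 * p + (J - 1) * p := by
  classical
  obtain ⟨r, s, hr, hs, ⟨j0, hj0, hne⟩, hQ⟩ :=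
    stepanov_exists f hdeg h l J (h - 1) a (by omega) hcount
  have hJ : 1 ≤ J := by omega
  set G := ∑ j ∈ Finset.range J, ((r j + s j * f ^ h) * X ^ (j * p)) with hG
  have hG0 : G ≠ 0 := by
    intro hz
    exact hne (stepanov_nonvanish f hf hf0 h hp hdeg J r s (fun j => by have := hr j; omega)
      (fun j => by have := hs j; omega) hz j0 hj0)
  have hf00 : f ≠ 0 := by rintro rfl; simp at hf0
  set R := f ^ l * G with hR
  have hR0 : R ≠ 0 := mul_ne_zero (pow_ne_zero _ hf00) hG0
  set S := (Finset.univ.filter fun x : ZMod p => (f.eval x) ^ h = a) with hS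
  have hmult : ∀ x ∈ S, l ≤ R.rootMultiplicity x := by
    intro x hx
    have hx' : (f.eval x) ^ h = a := (Finset.mem_filter.mp hx).2
    have : l - 1 < R.rootMultiplicity x := by
      apply lt_rootMultiplicity_of_isRoot_iterate_derivative_of_mem_nonZeroDivisors hR0
      · intro k hk
        have hkl : k < l := by omega
        rw [IsRoot, hR, hG, iter_formula f h l J (by omega) r s k (by omega), eval_mul]
        have := congrArg (eval x) (hQ k hkl)
        rw [eval_finsetSum, eval_zero] at this
        rw [eval_finsetSum]
        convert mul_zero _
        rw [← this]
        apply Finset.sum_congr rfl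
        intro j _
        simp only [eval_mul, eval_add, eval_pow, eval_X, eval_C, hx']
        rw [mul_comm j p, pow_mul, ZMod.pow_card]; ring
      · rw [mem_nonZeroDivisors_iff_ne_zero]
        intro h0
        rw [ZMod.natCast_eq_zero_iff, (Fact.out : p.Prime).dvd_factorial] at h0
        omega
    omega
  have h1 : l * S.card ≤ R.natDegree := by
    calc l * S.card = ∑ x ∈ S, l := by simp [mul_comm]
      _ ≤ ∑ x ∈ S, R.roots.count x := by
          apply Finset.sum_le_sum; intro x hx; rw [count_roots]; exact hmult x hx
      _ ≤ ∑ x ∈ R.roots.toFinset, R.roots.count x := by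
          apply Finset.sum_le_sum_of_subset
          intro x hx
          rw [Multiset.mem_toFinset, ← Multiset.count_pos, count_roots]
          exact lt_of_lt_of_le hl (hmult x hx)
      _ = Multiset.card R.roots := Multiset.toFinset_sum_count_eq R.roots
      _ ≤ R.natDegree := card_roots' R
  refine h1.trans ?_
  rw [hR]
  refine natDegree_mul_le.trans ?_
  have h2 : (f ^ l).natDegree ≤ 3 * l := natDegree_pow_le.trans (by nlinarith)
  have h3 : G.natDegree ≤ 2 * p + (J - 1) * p := by
    apply natDegree_sum_le_of_forall_le
    intro j hj
    have hj := Finset.mem_range.mp hj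
    refine natDegree_mul_le.trans ?_
    rw [natDegree_X_pow]
    have a1 : (f ^ h).natDegree ≤ 3 * h := natDegree_pow_le.trans (by nlinarith)
    have a2 : (s j * f ^ h).natDegree ≤ (s j).natDegree + (f ^ h).natDegree := natDegree_mul_le
    have a3 := natDegree_add_le (r j) (s j * f ^ h)
    have := hr j
    have := hs j
    have a5 : max (r j).natDegree (s j * f ^ h).natDegree ≤ 4 * h := by apply max_le <;> omega
    have : j * p ≤ (J - 1) * p := Nat.mul_le_mul_right _ (by omega)
    omega
  omega

lemma stepanov_bound0 (f : (ZMod p)[X]) (hf : NotSq f) (hf0 : f.coeff 0 ≠ 0)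
    (h : ℕ) (hp : p = 2 * h + 1) (hdeg : f.natDegree ≤ 3) (a : ZMod p) :
    ((Finset.univ.filter fun x : ZMod p => (f.eval x) ^ h = a).card : ℝ) ≤ p / 2 + 15 * √p := by
  classical
  have hsq : √(p:ℝ) ^ 2 = p := Real.sq_sqrt (Nat.cast_nonneg p)
  have hsq0 : 0 ≤ √(p:ℝ) := Real.sqrt_nonneg _
  by_cases hsmall : p ≤ 900
  · have h1 : ((Finset.univ.filter fun x : ZMod p => (f.eval x) ^ h = a).card : ℝ) ≤ p := by
      have := Finset.card_le_univ (Finset.univ.filter fun x : ZMod p => (f.eval x) ^ h = a)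
      rw [ZMod.card] at this
      exact_mod_cast this
    have h2 : √(p:ℝ) ≤ 30 := by
      rw [Real.sqrt_le_left (by norm_num)]
      have : (p:ℝ) ≤ 900 := by exact_mod_cast hsmall
      linarith
    nlinarith
  · push Not at hsmall
    set l := Nat.sqrt p with hl
    have hl1 : l * l ≤ p := Nat.sqrt_le p
    have hl2 : p < (l+1) * (l+1) := Nat.lt_succ_sqrt p
    have hl30 : 30 ≤ l := by
      by_contra hc; push Not at hc; nlinarith
    have hJ1 : 2 * (l / 2 + 5) ≤ l + 10 := by omega
    have hJ2 : l + 9 ≤ 2 * (l / 2 + 5) := by omega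
    have hm := stepanov_main f hf hf0 h hp hdeg l (l/2 + 5) (by omega) (by nlinarith) (by omega) a
      (by
        obtain ⟨H, rfl⟩ : ∃ H, h = H + 1 := ⟨h - 1, by omega⟩
        simp only [Nat.add_sub_cancel]
        set J := l / 2 + 5
        nlinarith)
    set N := (Finset.univ.filter fun x : ZMod p => (f.eval x) ^ h = a).card
    have hm' : (l:ℝ) * N ≤ 3 * l + 2 * p + (l / 2 + 4) * p := by
      have : l * N ≤ 3 * l + 2 * p + (l/2 + 4) * p := hm
      have h2 : ((l/2 : ℕ) : ℝ) ≤ l / 2 := Nat.cast_div_le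
      have h3 : ((l * N : ℕ):ℝ) ≤ ((3 * l + 2 * p + (l/2 + 4) * p : ℕ) : ℝ) := by exact_mod_cast this
      push_cast at h3
      nlinarith [(Nat.cast_nonneg p : (0:ℝ) ≤ p)]
    have hlr : √(p:ℝ) ≤ l + 1 := by
      rw [Real.sqrt_le_left (by positivity)]
      have : (p:ℝ) ≤ ((l+1)*(l+1) : ℕ) := by exact_mod_cast hl2.le
      push_cast at this; nlinarith
    have hlr30 : (30:ℝ) ≤ l := by exact_mod_cast hl30
    -- N ≤ 3 + 6p/l + p/2
    have hpl : (p:ℝ) ≤ (√p * (31/30)) * l := by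
      nlinarith
    have hs1 : 1 ≤ √(p:ℝ) := by
      rw [Real.one_le_sqrt]
      have : 1 ≤ p := by omega
      exact_mod_cast this
    have : (l:ℝ) * N ≤ l * (p/2 + 15 * √p) := by
      nlinarith [mul_nonneg (by linarith : (0:ℝ) ≤ l) (by linarith : (0:ℝ) ≤ √(p:ℝ) - 1)]
    exact le_of_mul_le_mul_left this (by linarith)

end Stepanov2
end FB

open Polynomial
namespace FB
section CharSum
variable {p : ℕ} [Fact p.Prime]

lemma notSq_of_squarefree (f : (ZMod p)[X]) (hf : Squarefree f) (hu : ¬ IsUnit f) (hf0 : f ≠ 0) :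
    NotSq f := by
  intro r s c hc h
  have hCc : (C c : (ZMod p)[X]) ≠ 0 := by simpa using hc
  by_cases hr : r = 0
  · refine ⟨hr, ?_⟩
    rw [hr] at h
    have : C c * s ^ 2 = 0 := by rw [← h]; ring
    have := (mul_eq_zero.mp this).resolve_left hCc
    exact pow_eq_zero_iff (two_ne_zero) |>.mp this
  · exfalso
    have hs : s ≠ 0 := by
      rintro rfl
      have : r ^ 2 * f = 0 := by rw [h]; ring
      rcases mul_eq_zero.mp this with h1 | h1
      · exact hr (pow_eq_zero_iff two_ne_zero |>.mp h1)
      · exact hf0 h1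
    obtain ⟨q, hq, hqf⟩ := WfDvdMonoid.exists_irreducible_factor hu hf0
    have hqp : Prime q := hq.prime
    have fin : ∀ t : (ZMod p)[X], t ≠ 0 → FiniteMultiplicity q t := fun t ht =>
      FiniteMultiplicity.of_prime_left hqp ht
    have h1 : multiplicity q (r ^ 2 * f) = 2 * multiplicity q r + multiplicity q f := by
      rw [multiplicity_mul hqp (fin _ (mul_ne_zero (pow_ne_zero _ hr) hf0)),
        (fin r hr).multiplicity_pow hqp]
    have h2 : multiplicity q (C c * s ^ 2) = 2 * multiplicity q s := by
      rw [multiplicity_mul hqp (fin _ (mul_ne_zero hCc (pow_ne_zero _ hs))),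
        (fin s hs).multiplicity_pow hqp]
      have : multiplicity q (C c) = 0 := by
        rw [multiplicity_eq_zero]
        intro hd
        exact hq.not_isUnit (isUnit_of_dvd_unit hd (isUnit_C.mpr (isUnit_iff_ne_zero.mpr hc)))
      omega
    have h3 : multiplicity q f = 1 := by
      have a1 : 1 ≤ multiplicity q f := by
        rw [← (fin f hf0).pow_dvd_iff_le_multiplicity]; simpa using hqf
      have a2 : ¬ 2 ≤ multiplicity q f := by
        rw [← (fin f hf0).pow_dvd_iff_le_multiplicity]
        intro hd
        exact hq.not_isUnit (hf q (by rwa [← pow_two]))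
      omega
    rw [h, h2] at h1
    omega

lemma NotSq.translate {f : (ZMod p)[X]} (hf : NotSq f) (t : ZMod p) : NotSq (f.comp (X + C t)) := by
  intro r s c hc h
  have h1 := congrArg (fun q => q.comp (X - C t)) h
  simp only [mul_comp, pow_comp, C_comp, comp_assoc, add_comp, X_comp, sub_add_cancel, comp_X] at h1
  have h2 := hf _ _ c hc h1
  have key : ∀ q : (ZMod p)[X], q.comp (X - C t) = 0 → q = 0 := by
    intro q hq
    have := congrArg (fun q => q.comp (X + C t)) hq
    simpa [comp_assoc, sub_comp] using this
  exact ⟨key _ h2.1, key _ h2.2⟩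

lemma stepanov_bound (f : (ZMod p)[X]) (hf : NotSq f)
    (h : ℕ) (hp : p = 2 * h + 1) (hdeg : f.natDegree ≤ 3) (hp3 : 3 < p) (a : ZMod p) :
    ((Finset.univ.filter fun x : ZMod p => (f.eval x) ^ h = a).card : ℝ) ≤ p / 2 + 15 * √p := by
  classical
  have hf0 : f ≠ 0 := by
    rintro rfl
    have := hf 1 0 1 one_ne_zero (by simp)
    simp at this
  obtain ⟨t, ht⟩ : ∃ t, f.eval t ≠ 0 := by
    by_contra hcon
    push Not at hcon
    apply hf0
    apply eq_zero_of_natDegree_lt_card_of_eval_eq_zero f (f := (id : ZMod p → ZMod p))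
      Function.injective_id (fun i => hcon i)
    rw [ZMod.card]; omega
  have h1 := stepanov_bound0 (f.comp (X + C t)) (hf.translate t)
    (by rw [coeff_zero_eq_eval_zero, eval_comp]; simpa using ht) h hp
    (by refine natDegree_comp_le.trans ?_; rw [natDegree_X_add_C]; omega) a
  refine le_trans (le_of_eq ?_) h1
  congr 1
  apply Finset.card_bij' (fun x _ => x - t) (fun x _ => x + t)
  · intro x hx; simpa using hx
  · intro x hx; simpa using hx
  · intro x _; simp
  · intro x _; simp

/-- Weil-type bound, and count of `f(x)` square-or-zero. -/
lemma weil_bound (f : (ZMod p)[X]) (hf : NotSq f) (hdeg : f.natDegree ≤ 3) (hp3 : 3 < p) :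
    |∑ x : ZMod p, (quadraticChar (ZMod p) (f.eval x) : ℝ)| ≤ 33 * √p ∧
    ((Finset.univ.filter fun x : ZMod p => quadraticChar (ZMod p) (f.eval x) ≠ -1).card : ℝ)
      ≤ p / 2 + 18 * √p := by
  classical
  have hpp : p.Prime := Fact.out
  obtain ⟨h, hp⟩ : ∃ h, p = 2 * h + 1 := hpp.odd_of_ne_two (by omega)
  have hchar : ringChar (ZMod p) ≠ 2 := by rw [ZMod.ringChar_zmod_n]; omega
  have hf0 : f ≠ 0 := by
    rintro rfl
    have := hf 1 0 1 one_ne_zero (by simp)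
    simp at this
  have hpow : ∀ x : ZMod p, ((quadraticChar (ZMod p) x : ℤ) : ZMod p) = x ^ h := by
    intro x
    rw [quadraticChar_eq_pow_of_char_ne_two' hchar, ZMod.card]
    congr 1; omega
  have hne : (-1 : ZMod p) ≠ 1 := by
    intro hc
    have := Ring.neg_one_ne_one_of_char_ne_two hchar
    exact this hc
  set χ := quadraticChar (ZMod p)
  set A := Finset.univ.filter fun x : ZMod p => χ (f.eval x) = 1
  set Bm := Finset.univ.filter fun x : ZMod p => χ (f.eval x) = -1
  set Z := Finset.univ.filter fun x : ZMod p => χ (f.eval x) = 0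
  have tri : ∀ y : ZMod p, χ y = 0 ∨ χ y = 1 ∨ χ y = -1 := by
    intro y
    by_cases hy : y = 0
    · left; rw [hy]; exact quadraticChar_zero
    · right; exact quadraticChar_dichotomy hy
  have hA : (A.card : ℝ) ≤ p/2 + 15 * √p := by
    refine le_trans ?_ (stepanov_bound f hf h hp hdeg hp3 1)
    norm_cast
    apply Finset.card_le_card
    intro x hx
    simp only [A, Finset.mem_filter, Finset.mem_univ, true_and] at hx ⊢
    rw [← hpow]; simp [χ] at hx ⊢; rw [hx]; simp
  have hB : (Bm.card : ℝ) ≤ p/2 + 15 * √p := by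
    refine le_trans ?_ (stepanov_bound f hf h hp hdeg hp3 (-1))
    norm_cast
    apply Finset.card_le_card
    intro x hx
    simp only [Bm, Finset.mem_filter, Finset.mem_univ, true_and] at hx ⊢
    rw [← hpow]; simp [χ] at hx ⊢; rw [hx]; simp
  have hZ : Z.card ≤ 3 := by
    have : Z ⊆ f.roots.toFinset := by
      intro x hx
      simp only [Z, Finset.mem_filter, Finset.mem_univ, true_and] at hx
      rw [quadraticChar_eq_zero_iff] at hx
      rw [Multiset.mem_toFinset, mem_roots hf0]; exact hx
    exact (Finset.card_le_card this).trans ((Multiset.toFinset_card_le _).trans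
      ((card_roots' f).trans hdeg))
  have hsum : A.card + Bm.card + Z.card = p := by
    have e : (∑ x : ZMod p, ((if χ (f.eval x) = 1 then 1 else 0) + (if χ (f.eval x) = -1 then 1 else 0)
        + (if χ (f.eval x) = 0 then 1 else 0))) = p := by
      trans ∑ x : ZMod p, 1
      · apply Finset.sum_congr rfl
        intro x _
        rcases tri (f.eval x) with h | h | h <;> simp [h]
      · simp
    rw [Finset.sum_add_distrib, Finset.sum_add_distrib] at e
    simpa [A, Bm, Z, Finset.sum_boole] using e
  have hsumχ : ∑ x : ZMod p, (χ (f.eval x) : ℝ) = A.card - Bm.card := by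
    have e : ∑ x : ZMod p, (χ (f.eval x) : ℝ) = ∑ x : ZMod p, ((if χ (f.eval x) = 1 then (1:ℝ) else 0) - (if χ (f.eval x) = -1 then 1 else 0)) := by
      apply Finset.sum_congr rfl
      intro x _
      rcases tri (f.eval x) with h | h | h <;> simp [h]
    rw [e, Finset.sum_sub_distrib]
    simp [A, Bm]
  have hs1 : 1 ≤ √(p:ℝ) := by
    rw [Real.one_le_sqrt]
    have : 1 ≤ p := by omega
    exact_mod_cast this
  have hsumR : (A.card : ℝ) + Bm.card + Z.card = p := by exact_mod_cast hsum
  have hZR : (Z.card : ℝ) ≤ 3 := by exact_mod_cast hZ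
  have hZ0 : (0:ℝ) ≤ Z.card := Nat.cast_nonneg _
  constructor
  · rw [hsumχ, abs_le]
    constructor <;> linarith
  · have : (Finset.univ.filter fun x : ZMod p => χ (f.eval x) ≠ -1).card ≤ A.card + Z.card := by
      refine le_trans (Finset.card_le_card ?_) (Finset.card_union_le A Z)
      intro x hx
      simp only [Finset.mem_filter, Finset.mem_univ, true_and, Finset.mem_union, A, Z] at hx ⊢
      rcases tri (f.eval x) with h | h | h
      · right; exact h
      · left; exact h
      · exact absurd h hx
    have : ((Finset.univ.filter fun x : ZMod p => χ (f.eval x) ≠ -1).card : ℝ) ≤ A.card + Z.card := by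
      exact_mod_cast this
    linarith

/-- The cubic on an affine line. -/
noncomputable def lineP (α β x y e e' : ZMod p) : (ZMod p)[X] :=
  C α * (C x + C e * X) ^ 3 + C β * (C y + C e' * X) ^ 3

lemma lineP_eval (α β x y e e' t : ZMod p) :
    (lineP α β x y e e').eval t = α * (x + e * t) ^ 3 + β * (y + e' * t) ^ 3 := by
  simp [lineP]

lemma lineP_natDegree (α β x y e e' : ZMod p) : (lineP α β x y e e').natDegree ≤ 3 := by
  unfold lineP
  compute_degree

lemma lineP_notSq (hp3 : 3 < p) (α β x y e e' : ZMod p) (hα : α ≠ 0) (hβ : β ≠ 0)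
    (hΔ : e * y - e' * x ≠ 0) : NotSq (lineP α β x y e e') := by
  have h3 : (3 : ZMod p) ≠ 0 := by
    have : ((3:ℕ) : ZMod p) ≠ 0 := by
      rw [Ne, ZMod.natCast_eq_zero_iff]
      intro hd; have := Nat.le_of_dvd (by norm_num) hd; omega
    simpa using this
  set f := lineP α β x y e e' with hf
  set L1 : (ZMod p)[X] := C x + C e * X with hL1
  set L2 : (ZMod p)[X] := C y + C e' * X with hL2
  have hfe : f = C α * L1 ^ 3 + C β * L2 ^ 3 := rfl
  have hd : derivative f = C 3 * C α * C e * L1 ^ 2 + C 3 * C β * C e' * L2 ^ 2 := by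
    rw [hfe, hL1, hL2]
    simp [derivative_pow]
    ring
  have hdet : C e * L2 - C e' * L1 = C (e * y - e' * x) := by
    rw [hL1, hL2]; simp; ring
  set Δ := e * y - e' * x with hΔd
  have e1 : C 3 * C e * f - derivative f * L1 = C 3 * C β * C Δ * L2 ^ 2 := by
    rw [hd, hfe, ← hdet]; ring
  have e2 : C 3 * C e' * f - derivative f * L2 = - (C 3 * C α * C Δ * L1 ^ 2) := by
    rw [hd, hfe, ← hdet]; ring
  have hcop : IsCoprime (L1 ^ 2) (L2 ^ 2) := by
    apply IsCoprime.pow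
    refine ⟨- C (Δ⁻¹ * e'), C (Δ⁻¹ * e), ?_⟩
    have : - C (Δ⁻¹ * e') * L1 + C (Δ⁻¹ * e) * L2 = C (Δ⁻¹) * (C e * L2 - C e' * L1) := by
      simp only [C_mul]; ring
    rw [this, hdet, ← C_mul, inv_mul_cancel₀ hΔ, C_1]
  have hsep : f.Separable := by
    obtain ⟨u, v, huv⟩ := hcop
    have k1 : (C (3 * α * Δ) : (ZMod p)[X]) * C ((3 * α * Δ)⁻¹) = 1 := by
      rw [← C_mul, mul_inv_cancel₀ (by simp [h3, hα, hΔ]), C_1]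
    have k2 : (C (3 * β * Δ) : (ZMod p)[X]) * C ((3 * β * Δ)⁻¹) = 1 := by
      rw [← C_mul, mul_inv_cancel₀ (by simp [h3, hβ, hΔ]), C_1]
    simp only [C_mul] at k1 k2
    refine ⟨u * C ((3 * α * Δ)⁻¹) * (- (C 3 * C e')) + v * C ((3 * β * Δ)⁻¹) * (C 3 * C e),
      u * C ((3 * α * Δ)⁻¹) * L2 - v * C ((3 * β * Δ)⁻¹) * L1, ?_⟩
    linear_combination huv - u * C ((3 * α * Δ)⁻¹) * e2 + v * C ((3 * β * Δ)⁻¹) * e1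
      + u * L1 ^ 2 * k1 + v * L2 ^ 2 * k2
  have hev : ∀ t, (derivative f).eval t = 3 * α * e * (x + e * t) ^ 2 + 3 * β * e' * (y + e' * t) ^ 2 := by
    intro t
    rw [hd, hL1, hL2]; simp
  have hd0 : derivative f ≠ 0 := by
    intro h0
    have hev0 : ∀ t, 3 * α * e * (x + e * t) ^ 2 + 3 * β * e' * (y + e' * t) ^ 2 = 0 := by
      intro t; rw [← hev, h0, eval_zero]
    by_cases he : e = 0
    · have he' : e' ≠ 0 := by rintro rfl; apply hΔ; rw [hΔd, he]; ring
      have := hev0 ((1 - y) / e')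
      rw [he, mul_div_cancel₀ _ he'] at this
      simp [h3, hβ, he'] at this
    · have h1 := hev0 (- x / e)
      rw [mul_div_cancel₀ _ he] at h1
      have h2 : y + e' * (-x / e) ≠ 0 := by
        intro hc
        apply hΔ
        field_simp at hc
        rw [hΔd]; linear_combination hc
      have he' : e' = 0 := by
        simp at h1
        rcases h1 with h1 | h1
        · rcases h1 with h1 | h1
          · exact absurd h1 (by simp [h3, hβ])
          · exact h1
        · exact absurd h1 h2
      have h3' := hev0 ((1 - x) / e)
      rw [he', mul_div_cancel₀ _ he] at h3'
      simp [h3, hα, he] at h3'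
  apply notSq_of_squarefree f hsep.squarefree
  · intro hu
    apply hd0
    obtain ⟨c, _, hc⟩ := Polynomial.isUnit_iff.mp hu
    rw [← hc]; simp
  · rintro h0
    apply hd0; rw [h0]; simp

lemma line_bound (hp3 : 3 < p) (α β x y e e' : ZMod p) (hα : α ≠ 0) (hβ : β ≠ 0)
    (hΔ : e * y - e' * x ≠ 0) :
    |∑ t : ZMod p, (quadraticChar (ZMod p) (α * (x + e * t) ^ 3 + β * (y + e' * t) ^ 3) : ℝ)| ≤ 33 * √p ∧
    ((Finset.univ.filter fun t : ZMod p =>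
      quadraticChar (ZMod p) (α * (x + e * t) ^ 3 + β * (y + e' * t) ^ 3) ≠ -1).card : ℝ)
      ≤ p / 2 + 18 * √p := by
  have := weil_bound _ (lineP_notSq hp3 α β x y e e' hα hβ hΔ) (lineP_natDegree _ _ _ _ _ _) hp3
  simpa only [lineP_eval] using this

end CharSum
end FB

namespace FB
section Fourier
variable {p : ℕ} [Fact p.Prime]

lemma W_bound_aux (hp3 : 3 < p) (α β h k : ZMod p) (hα : α ≠ 0) (hβ : β ≠ 0) (hh : h ≠ 0) :
    |∑ x : ZMod p, ∑ y : ZMod p, (quadraticChar (ZMod p) (α * x ^ 3 + β * y ^ 3) : ℝ)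
      * (quadraticChar (ZMod p) (h * x + k * y) : ℝ)| ≤ (p - 1) * (33 * √p) := by
  classical
  set χ := quadraticChar (ZMod p) with hχ
  have e1 : ∑ x : ZMod p, ∑ y : ZMod p, (χ (α * x ^ 3 + β * y ^ 3) : ℝ) * (χ (h * x + k * y) : ℝ)
      = ∑ c : ZMod p, (χ c : ℝ) *
        ∑ y : ZMod p, (χ (α * (c / h + (-k / h) * y) ^ 3 + β * (0 + 1 * y) ^ 3) : ℝ) := by
    rw [Finset.sum_comm]
    simp_rw [Finset.mul_sum]
    conv_rhs => rw [Finset.sum_comm]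
    apply Finset.sum_congr rfl
    intro y _
    let E : ZMod p ≃ ZMod p :=
      { toFun := fun x => h * x + k * y
        invFun := fun c => c / h + (-k/h) * y
        left_inv := by intro x; field_simp; ring
        right_inv := by intro x; field_simp; ring }
    conv_rhs => rw [← Equiv.sum_comp E]
    apply Finset.sum_congr rfl
    intro x _
    have : (h * x + k * y) / h + (-k/h) * y = x := E.left_inv x
    simp only [E, Equiv.coe_fn_mk]
    rw [this, zero_add, one_mul, mul_comm]
  rw [e1]
  refine (Finset.abs_sum_le_sum_abs _ _).trans ?_
  have hb : ∀ c : ZMod p, |(χ c : ℝ) *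
        ∑ y : ZMod p, (χ (α * (c / h + (-k / h) * y) ^ 3 + β * (0 + 1 * y) ^ 3) : ℝ)|
        ≤ if c = 0 then 0 else 33 * √p := by
    intro c
    split_ifs with hc
    · rw [hc]; simp [hχ]
    · rw [abs_mul]
      have h1 : |(χ c : ℝ)| ≤ 1 := by
        rcases quadraticChar_dichotomy hc with h | h <;> simp [hχ, h]
      have h2 := (line_bound hp3 α β (c/h) 0 (-k/h) 1 hα hβ (by simp [hc, hh])).1
      calc _ ≤ 1 * (33 * √p) := mul_le_mul h1 h2 (abs_nonneg _) zero_le_one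
        _ = _ := one_mul _
  refine (Finset.sum_le_sum fun c _ => hb c).trans ?_
  have : ∀ c : ZMod p, (if c = 0 then (0:ℝ) else 33 * √p) = 33 * √p - if c = 0 then 33 * √p else 0 := by
    intro c; split_ifs <;> simp
  simp_rw [this]
  rw [Finset.sum_sub_distrib]
  simp
  linarith

lemma W_bound (hp3 : 3 < p) (α β h k : ZMod p) (hα : α ≠ 0) (hβ : β ≠ 0) :
    |∑ x : ZMod p, ∑ y : ZMod p, (quadraticChar (ZMod p) (α * x ^ 3 + β * y ^ 3) : ℝ)
      * (quadraticChar (ZMod p) (h * x + k * y) : ℝ)| ≤ (p - 1) * (33 * √p) := by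
  by_cases hh : h = 0
  · by_cases hk : k = 0
    · have h1 : (1:ℝ) ≤ p := by
        have : 1 ≤ p := by omega
        exact_mod_cast this
      simp [hh, hk]
      apply mul_nonneg (by linarith); positivity
    · have := W_bound_aux hp3 β α k h hβ hα hk
      rw [Finset.sum_comm] at this
      convert this using 7
      · ring
      · rename_i x _ y _; rw [add_comm]
  · exact W_bound_aux hp3 α β h k hα hβ hh

/-- the cubic character function -/
noncomputable def phi (α β : ZMod p) (z : ZMod p × ZMod p) : ℂ :=
  (quadraticChar (ZMod p) (α * z.1 ^ 3 + β * z.2 ^ 3) : ℂ)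

/-- its Fourier transform -/
noncomputable def phat (α β : ZMod p) (h : ZMod p × ZMod p) : ℂ :=
  ∑ z : ZMod p × ZMod p, phi α β z * ZMod.stdAddChar (h.1 * z.1 + h.2 * z.2)

lemma phat_bound (hp3 : 3 < p) (α β : ZMod p) (hα : α ≠ 0) (hβ : β ≠ 0) (h : ZMod p × ZMod p) :
    ‖phat α β h‖ ≤ 33 * p := by
  classical
  have hchar : ringChar (ZMod p) ≠ 2 := by rw [ZMod.ringChar_zmod_n]; omega
  set ψ : AddChar (ZMod p) ℂ := ZMod.stdAddChar with hψ
  have hprim : ψ.IsPrimitive := ZMod.isPrimitive_stdAddChar p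
  set χ : MulChar (ZMod p) ℂ := (quadraticChar (ZMod p)).ringHomComp (Int.castRingHom ℂ) with hχ
  have hχv : ∀ x, χ x = (quadraticChar (ZMod p) x : ℂ) := fun x => rfl
  have hq : χ.IsQuadratic := (quadraticChar_isQuadratic (ZMod p)).comp _
  have hχ1 : χ ≠ 1 := by
    have h0 := quadraticChar_ne_one hchar
    intro hc
    apply h0
    ext u
    have := congrArg (fun f : MulChar (ZMod p) ℂ => f u) hc
    simp only [hχv] at this
    simp at this ⊢
    exact_mod_cast this
  set τ := gaussSum χ ψ with hτ
  have hτn : ‖τ‖ = √p := by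
    have h1 := gaussSum_sq hχ1 hq hprim
    rw [ZMod.card] at h1
    have h2 : ‖τ‖ ^ 2 = p := by
      rw [← norm_pow, hτ, h1, norm_mul]
      have : ‖χ (-1)‖ = 1 := by
        rcases hq (-1) with h | h | h
        · exfalso
          have hu : IsUnit (χ (-1)) := (isUnit_one.neg).map χ
          rw [h] at hu; exact not_isUnit_zero hu
        · rw [h]; simp
        · rw [h]; simp
      rw [this]; simp
    rw [← h2, Real.sqrt_sq (norm_nonneg _)]
  have hgs : ∀ a : ZMod p, ∑ l : ZMod p, χ l * ψ (l * a) = χ a * τ := by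
    intro a
    by_cases ha : a = 0
    · rw [ha]
      simp only [mul_zero, AddChar.map_zero_eq_one, mul_one]
      rw [MulChar.sum_eq_zero_of_ne_one hχ1, hχv]; simp
    · have h1 := gaussSum_mulShift χ ψ (Units.mk0 a ha)
      have h2 : χ a * χ a = 1 := by
        rw [hχv]
        rcases quadraticChar_dichotomy ha with h | h <;> simp [h]
      rw [hτ, ← h1, Units.val_mk0, ← mul_assoc, h2, one_mul, gaussSum]
      apply Finset.sum_congr rfl
      intro l _
      rw [AddChar.mulShift_apply, mul_comm a l]
  -- scaling
  have hscale : ∀ l : ZMod p, l ≠ 0 → phat α β h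
      = ∑ z : ZMod p × ZMod p, phi α β z * (χ l * ψ (l * (h.1 * z.1 + h.2 * z.2))) := by
    intro l hl
    let E : (ZMod p × ZMod p) ≃ (ZMod p × ZMod p) :=
      { toFun := fun z => (l * z.1, l * z.2)
        invFun := fun z => (l⁻¹ * z.1, l⁻¹ * z.2)
        left_inv := by intro z; simp [hl]
        right_inv := by intro z; simp [hl] }
    unfold phat
    rw [← Equiv.sum_comp E]
    apply Finset.sum_congr rfl
    intro z _
    simp only [E, Equiv.coe_fn_mk, phi]
    have e1 : α * (l * z.1) ^ 3 + β * (l * z.2) ^ 3 = l ^ 3 * (α * z.1 ^ 3 + β * z.2 ^ 3) := by ring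
    have e2 : h.1 * (l * z.1) + h.2 * (l * z.2) = l * (h.1 * z.1 + h.2 * z.2) := by ring
    rw [e1, e2, map_mul, map_pow]
    have h2 : (quadraticChar (ZMod p) l) ^ 3 = quadraticChar (ZMod p) l := by
      rcases quadraticChar_dichotomy hl with h | h <;> simp [h]
    rw [h2, hχv]; push_cast; ring
  have hsum : ((p:ℂ) - 1) * phat α β h
      = τ * ∑ z : ZMod p × ZMod p, phi α β z * χ (h.1 * z.1 + h.2 * z.2) := by
    have h1 : ∑ l : ZMod p, ∑ z : ZMod p × ZMod p,
        phi α β z * (χ l * ψ (l * (h.1 * z.1 + h.2 * z.2))) = ((p:ℂ) - 1) * phat α β h := by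
      have : ∀ l : ZMod p, ∑ z : ZMod p × ZMod p,
        phi α β z * (χ l * ψ (l * (h.1 * z.1 + h.2 * z.2)))
        = phat α β h - if l = 0 then phat α β h else 0 := by
        intro l
        split_ifs with hl
        · rw [hl]; simp [hχv]
        · rw [sub_zero, hscale l hl]
      simp_rw [this]
      rw [Finset.sum_sub_distrib]
      simp
      ring
    rw [← h1, Finset.sum_comm, Finset.mul_sum]
    apply Finset.sum_congr rfl
    intro z _
    rw [← Finset.mul_sum, hgs]; ring
  have hW : ‖∑ z : ZMod p × ZMod p, phi α β z * χ (h.1 * z.1 + h.2 * z.2)‖ ≤ (p - 1) * (33 * √p) := by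
    have e : ∑ z : ZMod p × ZMod p, phi α β z * χ (h.1 * z.1 + h.2 * z.2)
        = ((∑ x : ZMod p, ∑ y : ZMod p, (quadraticChar (ZMod p) (α * x ^ 3 + β * y ^ 3) : ℝ)
      * (quadraticChar (ZMod p) (h.1 * x + h.2 * y) : ℝ) : ℝ) : ℂ) := by
      rw [Fintype.sum_prod_type]
      push_cast
      rfl
    rw [e, Complex.norm_real]
    exact W_bound hp3 α β h.1 h.2 hα hβ
  have hn := congrArg norm hsum
  rw [norm_mul, norm_mul, hτn] at hn
  have hp1 : ‖(p:ℂ) - 1‖ = p - 1 := by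
    have : (p:ℂ) - 1 = ((p - 1 : ℝ) : ℂ) := by push_cast; ring
    rw [this, Complex.norm_real, Real.norm_of_nonneg]
    have : 1 ≤ p := by omega
    have : (1:ℝ) ≤ p := by exact_mod_cast this
    linarith
  rw [hp1] at hn
  have hpos : (0:ℝ) < p - 1 := by
    have : (3:ℝ) < p := by exact_mod_cast hp3
    linarith
  have hss : √(p:ℝ) * √p = p := Real.mul_self_sqrt (Nat.cast_nonneg p)
  have : ((p:ℝ) - 1) * ‖phat α β h‖ ≤ (p - 1) * (33 * p) := by
    rw [hn]
    calc _ ≤ √p * ((p - 1) * (33 * √p)) := by gcongr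
      _ = (p - 1) * (33 * (√p * √p)) := by ring
      _ = _ := by rw [hss]
  exact le_of_mul_le_mul_left this hpos

/-- pairing -/
def dotp (h z : ZMod p × ZMod p) : ZMod p := h.1 * z.1 + h.2 * z.2

lemma orth (z : ZMod p × ZMod p) :
    ∑ h : ZMod p × ZMod p, (ZMod.stdAddChar (dotp h z) : ℂ) = if z = 0 then (p:ℂ)^2 else 0 := by
  classical
  have hprim : (ZMod.stdAddChar (N := p)).IsPrimitive := ZMod.isPrimitive_stdAddChar p
  rw [Fintype.sum_prod_type]
  have : ∀ x y : ZMod p, (ZMod.stdAddChar (dotp (x, y) z) : ℂ)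
    = ZMod.stdAddChar (x * z.1) * ZMod.stdAddChar (y * z.2) := by
    intro x y; rw [← AddChar.map_add_eq_mul]; rfl
  simp_rw [this, ← Finset.mul_sum, ← Finset.sum_mul]
  rw [AddChar.sum_mulShift _ hprim, AddChar.sum_mulShift _ hprim, ZMod.card]
  rcases z with ⟨a, b⟩
  by_cases ha : a = 0 <;> by_cases hb : b = 0 <;> simp [ha, hb, pow_two]

lemma phi_inv (α β : ZMod p) (z : ZMod p × ZMod p) :
    ∑ h : ZMod p × ZMod p, phat α β h * ZMod.stdAddChar (- dotp h z) = (p:ℂ)^2 * phi α β z := by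
  classical
  unfold phat
  simp_rw [Finset.sum_mul]
  rw [Finset.sum_comm]
  have : ∀ w h : ZMod p × ZMod p, phi α β w * ZMod.stdAddChar (h.1 * w.1 + h.2 * w.2)
      * ZMod.stdAddChar (- dotp h z) = phi α β w * ZMod.stdAddChar (dotp h (w - z)) := by
    intro w h
    rw [mul_assoc, ← AddChar.map_add_eq_mul]
    congr 2
    simp [dotp]; ring
  simp_rw [this, ← Finset.mul_sum, orth, sub_eq_zero]
  simp
  ring

end Fourier

section Double
variable {p q : ℕ} [Fact p.Prime] [Fact q.Prime]

lemma double_bound (hp3 : 3 < p) (hq3 : 3 < q) (α β : ZMod p) (α' β' : ZMod q)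
    (hα : α ≠ 0) (hβ : β ≠ 0) (hα' : α' ≠ 0) (hβ' : β' ≠ 0)
    {ι : Type*} (A : Finset ι) (u : ι → ZMod p × ZMod p) (w : ι → ZMod q × ZMod q)
    (hinj : ∀ x ∈ A, ∀ y ∈ A, u x = u y → w x = w y → x = y) :
    ‖∑ x ∈ A, ∑ y ∈ A, phi α β (u x - u y) * phi α' β' (w x - w y)‖
      ≤ 33 ^ 2 * p * q * A.card := by
  classical
  let e : (ZMod p × ZMod p) × (ZMod q × ZMod q) → ι → ℂ := fun g x =>
    ZMod.stdAddChar (- dotp g.1 (u x)) * ZMod.stdAddChar (- dotp g.2 (w x))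
  have hee : ∀ g x y, e g x * (starRingEnd ℂ) (e g y)
      = ZMod.stdAddChar (- dotp g.1 (u x - u y)) * ZMod.stdAddChar (- dotp g.2 (w x - w y)) := by
    intro g x y
    simp only [e, map_mul]
    rw [← AddChar.map_neg_eq_conj, ← AddChar.map_neg_eq_conj, mul_mul_mul_comm,
      ← AddChar.map_add_eq_mul, ← AddChar.map_add_eq_mul]
    congr 2 <;> simp [dotp] <;> ring
  have key : ((p:ℂ)^2 * (q:ℂ)^2) * ∑ x ∈ A, ∑ y ∈ A, phi α β (u x - u y) * phi α' β' (w x - w y)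
      = ∑ g, phat α β g.1 * phat α' β' g.2 * ((‖∑ x ∈ A, e g x‖ ^ 2 : ℝ) : ℂ) := by
    have h1 : ∀ g, ((‖∑ x ∈ A, e g x‖ ^ 2 : ℝ) : ℂ)
        = ∑ x ∈ A, ∑ y ∈ A, e g x * (starRingEnd ℂ) (e g y) := by
      intro g
      rw [← Finset.sum_mul_sum, ← map_sum, Complex.mul_conj, Complex.normSq_eq_norm_sq]
    simp_rw [h1, Finset.mul_sum]
    conv_rhs => rw [Finset.sum_comm]
    apply Finset.sum_congr rfl
    intro x _
    conv_rhs => rw [Finset.sum_comm]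
    apply Finset.sum_congr rfl
    intro y _
    simp_rw [hee]
    rw [Fintype.sum_prod_type]
    have h2 : ∀ g1 g2, phat α β g1 * phat α' β' g2 *
        (ZMod.stdAddChar (- dotp g1 (u x - u y)) * ZMod.stdAddChar (- dotp g2 (w x - w y)))
        = (phat α β g1 * ZMod.stdAddChar (- dotp g1 (u x - u y))) *
          (phat α' β' g2 * ZMod.stdAddChar (- dotp g2 (w x - w y))) := by
      intros; ring
    simp_rw [h2]
    rw [← Finset.sum_mul_sum, phi_inv, phi_inv]; ring
  have pars : ∑ g, ‖∑ x ∈ A, e g x‖ ^ 2 = (p:ℝ)^2 * q^2 * A.card := by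
    have : ((∑ g, ‖∑ x ∈ A, e g x‖ ^ 2 : ℝ) : ℂ) = (((p:ℝ)^2 * q^2 * A.card : ℝ) : ℂ) := by
      rw [Complex.ofReal_sum]
      have h1 : ∀ g, ((‖∑ x ∈ A, e g x‖ ^ 2 : ℝ) : ℂ)
          = ∑ x ∈ A, ∑ y ∈ A, e g x * (starRingEnd ℂ) (e g y) := by
        intro g
        rw [← Finset.sum_mul_sum, ← map_sum, Complex.mul_conj, Complex.normSq_eq_norm_sq]
      simp_rw [h1, hee]
      rw [Finset.sum_comm]
      have h3 : ∀ x ∈ A, ∑ g : (ZMod p × ZMod p) × (ZMod q × ZMod q), ∑ y ∈ A,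
          (ZMod.stdAddChar (- dotp g.1 (u x - u y)) : ℂ) * ZMod.stdAddChar (- dotp g.2 (w x - w y))
          = (p:ℂ)^2 * q^2 := by
        intro x hx
        rw [Finset.sum_comm]
        have h4 : ∀ y ∈ A, ∑ g : (ZMod p × ZMod p) × (ZMod q × ZMod q),
          (ZMod.stdAddChar (- dotp g.1 (u x - u y)) : ℂ) * ZMod.stdAddChar (- dotp g.2 (w x - w y))
          = if y = x then (p:ℂ)^2 * q^2 else 0 := by
          intro y hy
          rw [Fintype.sum_prod_type]
          have n1 : ∀ g, - dotp g (u x - u y) = dotp g (u y - u x) := by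
            intro g; simp [dotp]; ring
          have n2 : ∀ g, - dotp g (w x - w y) = dotp g (w y - w x) := by
            intro g; simp [dotp]; ring
          simp_rw [n1, n2]
          rw [← Finset.sum_mul_sum, orth, orth]
          by_cases hxy : y = x
          · simp [hxy]
          · rw [if_neg hxy]
            by_cases h5 : u y - u x = 0
            · have : ¬ (w y - w x = 0) := by
                intro h6
                exact hxy (hinj y hy x hx (sub_eq_zero.mp h5) (sub_eq_zero.mp h6))
              rw [if_neg this, mul_zero]
            · rw [if_neg h5, zero_mul]
        rw [Finset.sum_congr rfl h4]
        simp [hx]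
      rw [Finset.sum_congr rfl h3]
      simp; ring
    exact_mod_cast this
  have hp0 : (0:ℝ) < p := by exact_mod_cast (by omega : 0 < p)
  have hq0 : (0:ℝ) < q := by exact_mod_cast (by omega : 0 < q)
  have hn : (p:ℝ)^2 * q^2 * ‖∑ x ∈ A, ∑ y ∈ A, phi α β (u x - u y) * phi α' β' (w x - w y)‖
      ≤ (33 * p) * (33 * q) * ((p:ℝ)^2 * q^2 * A.card) := by
    have := congrArg norm key
    rw [norm_mul] at this
    have hl : ‖((p:ℂ)^2 * (q:ℂ)^2)‖ = (p:ℝ)^2 * q^2 := by simp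
    rw [hl] at this
    rw [this, ← pars, Finset.mul_sum]
    refine (norm_sum_le _ _).trans (Finset.sum_le_sum fun g _ => ?_)
    rw [norm_mul, norm_mul, Complex.norm_real, Real.norm_of_nonneg (by positivity)]
    have b1 := phat_bound hp3 α β hα hβ g.1
    have b2 := phat_bound hq3 α' β' hα' hβ' g.2
    gcongr
  have : (p:ℝ)^2 * q^2 * ‖∑ x ∈ A, ∑ y ∈ A, phi α β (u x - u y) * phi α' β' (w x - w y)‖
      ≤ (p:ℝ)^2 * q^2 * (33 ^ 2 * p * q * A.card) := by
    refine hn.trans (le_of_eq ?_); ring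
  exact le_of_mul_le_mul_left this (by positivity)

end Double
end FB

namespace FB
open Real

lemma log_le_four_rpow (n : ℕ) (hn : 1 ≤ n) : Real.log n ≤ 4 * (n:ℝ) ^ ((1:ℝ)/4) := by
  have := Real.log_le_rpow_div (x := (n:ℝ)) (by positivity) (ε := 1/4) (by norm_num)
  linarith

lemma summ_aux : Summable (fun n : ℕ => Real.log n / ((n:ℝ) * √n)) := by
  have hs : Summable (fun n : ℕ => 4 * (1 / (n:ℝ) ^ ((5:ℝ)/4))) :=
    (Real.summable_one_div_nat_rpow.mpr (by norm_num)).mul_left 4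
  refine Summable.of_nonneg_of_le (fun n => ?_) (fun n => ?_) hs
  · exact div_nonneg (Real.log_natCast_nonneg n) (by positivity)
  · rcases Nat.eq_zero_or_pos n with h | h
    · simp [h]
    · have hn : (0:ℝ) < n := by exact_mod_cast h
      have := log_le_four_rpow n h
      rw [Real.sqrt_eq_rpow]
      have e : (n:ℝ) * (n:ℝ) ^ ((1:ℝ)/2) = (n:ℝ) ^ ((1:ℝ)/4) * (n:ℝ) ^ ((5:ℝ)/4) := by
        rw [← Real.rpow_one_add' hn.le (by norm_num), ← Real.rpow_add hn]; norm_num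
      rw [e]
      have p1 : 0 < (n:ℝ) ^ ((1:ℝ)/4) := by positivity
      have p2 : 0 < (n:ℝ) ^ ((5:ℝ)/4) := by positivity
      rw [div_le_iff₀ (by positivity)]
      calc _ ≤ _ := this
        _ = _ := by field_simp

lemma sum_aux : ∃ C : ℝ, 0 ≤ C ∧ ∀ s : Finset ℕ, ∑ n ∈ s, Real.log n / ((n:ℝ) * √n) ≤ C :=
  ⟨∑' n : ℕ, Real.log n / ((n:ℝ) * √n), tsum_nonneg fun n => div_nonneg (Real.log_natCast_nonneg n) (by positivity),
    fun s => summ_aux.sum_le_tsum s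
    (fun n _ => div_nonneg (Real.log_natCast_nonneg n) (by positivity))⟩

lemma mertens_lower : ∃ C : ℝ, ∀ N : ℕ, 1 ≤ N →
    Real.log N - C ≤ ∑ p ∈ (Finset.range (N+1)).filter Nat.Prime, Real.log p / p := by
  obtain ⟨C, hC0, hC⟩ := sum_aux
  refine ⟨2 * C + 1, fun N hN => ?_⟩
  have hN0 : (0:ℝ) < N := by exact_mod_cast hN
  set T := (Finset.range (N+1)).filter Nat.Prime with hT
  have h1 := Stirling.le_log_factorial_stirling (n := N) (by omega)
  have h2 : Real.log N * N - N ≤ Real.log (N.factorial) := by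
    have a1 : 0 ≤ Real.log N := Real.log_natCast_nonneg N
    have a2 : 0 ≤ Real.log (2 * π) := Real.log_nonneg (by nlinarith [Real.pi_gt_three])
    linarith
  have h3 : Real.log (N.factorial) ≤ N * ∑ p ∈ T, Real.log p / (p - 1) := by
    rw [Real.log_nat_eq_sum_factorization, Finsupp.sum, Finset.mul_sum]
    have hsub : (N.factorial).factorization.support ⊆ T := by
      intro p hp
      rw [Nat.support_factorization, Nat.mem_primeFactors] at hp
      rw [hT, Finset.mem_filter, Finset.mem_range]
      exact ⟨Nat.lt_succ_of_le ((hp.1.dvd_factorial).mp hp.2.1), hp.1⟩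
    refine (Finset.sum_le_sum_of_subset_of_nonneg hsub (fun p _ _ => ?_)).trans
      (Finset.sum_le_sum fun p hp => ?_)
    · exact mul_nonneg (Nat.cast_nonneg _) (Real.log_natCast_nonneg p)
    · have hpp := (Finset.mem_filter.mp hp).2
      haveI : Fact p.Prime := ⟨hpp⟩
      have h4 := sub_one_mul_padicValNat_factorial (p := p) N
      rw [Nat.factorization_def _ hpp]
      have h5 : ((p - 1 : ℕ) : ℝ) * (padicValNat p N.factorial : ℝ) ≤ N := by
        exact_mod_cast (h4.le.trans (Nat.sub_le _ _))
      rw [Nat.cast_sub hpp.one_lt.le, Nat.cast_one] at h5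
      have h6 : (0:ℝ) < p - 1 := by
        have : (1:ℝ) < p := by exact_mod_cast hpp.one_lt
        linarith
      rw [mul_div_assoc', le_div_iff₀ h6]
      have := Real.log_natCast_nonneg p
      calc _ = ((p:ℝ) - 1) * (padicValNat p N.factorial : ℝ) * Real.log p := by ring
        _ ≤ _ := by gcongr
  have h4 : Real.log N - 1 ≤ ∑ p ∈ T, Real.log p / (p - 1) := by
    have : N * (Real.log N - 1) ≤ N * ∑ p ∈ T, Real.log p / ((p:ℝ) - 1) := by linarith
    exact le_of_mul_le_mul_left this hN0
  have h5 : ∑ p ∈ T, Real.log p / ((p:ℝ) - 1) ≤ ∑ p ∈ T, (Real.log p / p + 2 * (Real.log p / ((p:ℝ) * √p))) := by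
    refine Finset.sum_le_sum fun p hp => ?_
    have hpp := (Finset.mem_filter.mp hp).2
    have h2p : (2:ℝ) ≤ p := by exact_mod_cast hpp.two_le
    have hl := Real.log_natCast_nonneg p
    have e : Real.log p / ((p:ℝ) - 1) = Real.log p / p + Real.log p / (p * (p-1)) := by
      have : (p:ℝ) - 1 ≠ 0 := by linarith
      field_simp; ring
    rw [e]
    gcongr
    have hs : √(p:ℝ) ≤ 2 * (p - 1) := by
      rw [Real.sqrt_le_left (by linarith)]; nlinarith
    have hs0 : 0 < √(p:ℝ) := Real.sqrt_pos.mpr (by linarith)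
    have hm : 0 < (p:ℝ) - 1 := by linarith
    rw [mul_div_assoc', div_le_div_iff₀ (by positivity) (by positivity)]
    have : Real.log p * (p * √p) ≤ Real.log p * (p * (2 * (p-1))) := by gcongr
    linarith
  rw [Finset.sum_add_distrib, ← Finset.mul_sum] at h5
  have := hC T
  linarith

lemma bad_primes (ε : ℝ) (hε : 0 < ε) : ∃ C : ℝ, 0 ≤ C ∧ ∀ D : ℕ, D ≠ 0 → ∀ T : Finset ℕ,
    (∀ p ∈ T, p.Prime ∧ p ∣ D) → ∑ p ∈ T, Real.log p / p ≤ C + ε * Real.log D := by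
  set R := Finset.range (⌊1/ε⌋₊ + 1) with hR
  refine ⟨∑ p ∈ R, Real.log p / p, Finset.sum_nonneg fun p _ => div_nonneg (Real.log_natCast_nonneg p) (by positivity), fun D hD T hT => ?_⟩
  have hpt : ∀ p ∈ T, Real.log p / p ≤ (if p ∈ R then Real.log p / p else 0) + ε * Real.log p := by
    intro p hp
    have hl := Real.log_natCast_nonneg p
    have hp0 : (0:ℝ) < p := by exact_mod_cast (hT p hp).1.pos
    split_ifs with h
    · have : 0 ≤ ε * Real.log p := by positivity
      linarith
    · rw [hR, Finset.mem_range, not_lt, ← Nat.lt_iff_add_one_le, Nat.floor_lt (by positivity), div_lt_iff₀ hε] at h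
      rw [zero_add, div_le_iff₀ hp0]
      nlinarith
  refine (Finset.sum_le_sum hpt).trans ?_
  rw [Finset.sum_add_distrib, ← Finset.mul_sum]
  have h1 : ∑ p ∈ T, (if p ∈ R then Real.log p / p else 0) ≤ ∑ p ∈ R, Real.log p / p := by
    rw [← Finset.sum_filter]
    apply Finset.sum_le_sum_of_subset_of_nonneg
    · intro p hp; exact (Finset.mem_filter.mp hp).2
    · intro p _ _; exact div_nonneg (Real.log_natCast_nonneg p) (by positivity)
  have h2 : ∑ p ∈ T, Real.log p ≤ Real.log D := by
    rw [← Real.log_prod (fun p hp => by exact_mod_cast (hT p hp).1.ne_zero)]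
    apply Real.log_le_log
    · exact Finset.prod_pos fun p hp => by exact_mod_cast (hT p hp).1.pos
    · rw [← Nat.cast_prod]
      have : ∏ p ∈ T, p ∣ D := Finset.prod_primes_dvd D (fun p hp => (hT p hp).1.prime) (fun p hp => (hT p hp).2)
      exact_mod_cast Nat.le_of_dvd (Nat.pos_of_ne_zero hD) this
  have := mul_le_mul_of_nonneg_left h2 hε.le
  linarith

/-- good primes up to `N` -/
def goodP (N D : ℕ) : Finset ℕ :=
  (Finset.range (N+1)).filter fun p => p.Prime ∧ 3 < p ∧ ¬ p ∣ D

lemma good_sum (ε : ℝ) (hε : 0 < ε) : ∃ C : ℝ, 0 ≤ C ∧ ∀ D : ℕ, D ≠ 0 → ∀ N : ℕ, 1 ≤ N →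
    2 * Real.log N - C - ε * Real.log D ≤ ∑ p ∈ goodP N D, Real.log p / ((p:ℝ)/2 + 18 * √p) := by
  obtain ⟨C1, h1⟩ := mertens_lower
  obtain ⟨C2, hC2, h2⟩ := bad_primes (ε/2) (by linarith)
  obtain ⟨C3, hC3, h3⟩ := sum_aux
  refine ⟨2 * |C1| + 2 * (C2 + (ε/2) * Real.log 6) + 72 * C3, ?_, fun D hD N hN => ?_⟩
  · have : 0 ≤ Real.log 6 := Real.log_nonneg (by norm_num)
    positivity
  have hm := h1 N hN
  have hpt : ∀ p ∈ goodP N D, 2 * (Real.log p / p) - 72 * (Real.log p / ((p:ℝ) * √p))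
      ≤ Real.log p / ((p:ℝ)/2 + 18 * √p) := by
    intro p hp
    have hpp := (Finset.mem_filter.mp hp).2.1
    have hl := Real.log_natCast_nonneg p
    have hp0 : (0:ℝ) < p := by exact_mod_cast hpp.pos
    have hs0 : 0 < √(p:ℝ) := Real.sqrt_pos.mpr hp0
    have hss : (p:ℝ) = √(p:ℝ) ^ 2 := (Real.sq_sqrt hp0.le).symm
    set s := √(p:ℝ)
    rw [le_div_iff₀ (by positivity)]
    generalize Real.log (p:ℝ) = L at *
    rw [hss]
    have : (2 * (L / s ^ 2) - 72 * (L / (s ^ 2 * s))) * (s ^ 2 / 2 + 18 * s) = L - L * 1296 / s ^ 2 := by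
      field_simp; ring
    rw [this]
    have : 0 ≤ L * 1296 / s^2 := by positivity
    linarith
  refine le_trans ?_ (Finset.sum_le_sum hpt)
  rw [Finset.sum_sub_distrib, ← Finset.mul_sum, ← Finset.mul_sum]
  have hc := h3 (goodP N D)
  have hsplit : ∑ p ∈ (Finset.range (N+1)).filter Nat.Prime, Real.log p / p
      = ∑ p ∈ goodP N D, Real.log p / p +
        ∑ p ∈ (Finset.range (N+1)).filter (fun p => p.Prime ∧ ¬ (3 < p ∧ ¬ p ∣ D)), Real.log p / p := by
    rw [goodP, ← Finset.sum_filter_add_sum_filter_not ((Finset.range (N+1)).filter Nat.Prime)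
      (fun p => 3 < p ∧ ¬ p ∣ D), Finset.filter_filter, Finset.filter_filter]
  have hb := h2 (6 * D) (by omega) ((Finset.range (N+1)).filter (fun p => p.Prime ∧ ¬ (3 < p ∧ ¬ p ∣ D))) (by
    intro p hp
    obtain ⟨-, hp1, hp2⟩ := Finset.mem_filter.mp hp
    refine ⟨hp1, ?_⟩
    by_cases h3 : 3 < p
    · have : p ∣ D := by tauto
      exact this.mul_left 6
    · have h2 := hp1.two_le
      have : p = 2 ∨ p = 3 := by omega
      apply Dvd.dvd.mul_right
      rcases this with h | h <;> subst h <;> norm_num)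
  have hlog : Real.log ((6 * D : ℕ) : ℝ) = Real.log 6 + Real.log D := by
    push_cast
    rw [Real.log_mul (by norm_num) (by exact_mod_cast hD)]
  rw [hlog] at hb
  have := le_abs_self C1
  have hm1 := (sub_le_iff_le_add.mp hm)
  rw [hsplit] at hm
  nlinarith

lemma card_primes_dvd_le (D : ℕ) (hD : D ≠ 0) (T : Finset ℕ) (hT : ∀ p ∈ T, p.Prime ∧ p ∣ D) :
    (T.card : ℝ) ≤ 2 * Real.log D := by
  have : ∏ p ∈ T, p ∣ D := Finset.prod_primes_dvd D (fun p hp => (hT p hp).1.prime) (fun p hp => (hT p hp).2)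
  have h1 := Nat.le_of_dvd (Nat.pos_of_ne_zero hD) this
  have h2 : 2 ^ T.card ≤ ∏ p ∈ T, p := Finset.pow_card_le_prod T _ _ (fun p hp => (hT p hp).1.two_le)
  have h3 : ((2:ℝ) ^ T.card) ≤ D := by exact_mod_cast h2.trans h1
  have h4 := Real.log_le_log (by positivity) h3
  rw [Real.log_pow] at h4
  have h5 := Real.log_two_gt_d9
  have : (0:ℝ) ≤ T.card := Nat.cast_nonneg _
  nlinarith

lemma prime_count (η : ℝ) (hη : 0 < η) : ∃ c : ℝ, 0 < c ∧ ∀ n : ℕ, 2 ≤ n →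
    c * (n:ℝ) ^ (1 - η) ≤ (((Finset.range (n+1)).filter Nat.Prime).card : ℝ) := by
  refine ⟨η / 8, by positivity, fun n hn => ?_⟩
  have hpi := Chebyshev.pi_ge n
  have hcard : ((Finset.range (n+1)).filter Nat.Prime).card = n.primeCounting := by
    rw [Nat.primeCounting, Nat.primeCounting', Nat.count_eq_card_filter_range]
  rw [hcard]
  refine le_trans ?_ hpi
  have hn0 : (2:ℝ) ≤ n := by exact_mod_cast hn
  have hl : 0 < Real.log n := Real.log_pos (by linarith)
  rw [le_div_iff₀ hl]
  have h1 : Real.log n ≤ (n:ℝ) ^ η / η := Real.log_le_rpow_div (by linarith) hη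
  have h2 : η / 8 * (n:ℝ) ^ (1 - η) * Real.log n ≤ n / 8 := by
    calc _ ≤ η / 8 * (n:ℝ) ^ (1 - η) * ((n:ℝ) ^ η / η) := by gcongr
      _ = ((n:ℝ) ^ (1 - η) * (n:ℝ) ^ η) / 8 := by field_simp
      _ = _ := by rw [← Real.rpow_add (by linarith)]; simp
  refine h2.trans ?_
  -- n/8 ≤ n log 2 - log (n+1), n ≥ 2
  have hlg : Real.log ((n:ℝ)+1) ≤ (n+1) / 4 + 2 * Real.log 2 - 1 := by
    have := Real.log_le_sub_one_of_pos (x := ((n:ℝ)+1)/4) (by positivity)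
    rw [Real.log_div (by positivity) (by norm_num)] at this
    have h4 : Real.log 4 = 2 * Real.log 2 := by
      rw [show (4:ℝ) = 2^2 by norm_num, Real.log_pow]; norm_num
    rw [h4] at this; linarith
  have := Real.log_two_gt_d9
  have := Real.log_two_lt_d9
  nlinarith

end FB

namespace FB
open Real

lemma gallagher (S : Finset ℤ) (L : ℝ) (hL : 1 ≤ L)
    (hS : ∀ n ∈ S, ∀ n' ∈ S, |((n - n' : ℤ) : ℝ)| ≤ L)
    (T : Finset ℕ) (hT : ∀ p ∈ T, p.Prime) (ν : ℕ → ℝ)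
    (hν0 : ∀ p ∈ T, 0 < ν p)
    (hν : ∀ p ∈ T, ((S.image (fun n : ℤ => (n : ZMod p))).card : ℝ) ≤ ν p) :
    (S.card : ℝ) * (∑ p ∈ T, Real.log p / ν p - Real.log L) ≤ ∑ p ∈ T, Real.log p := by
  classical
  set Θ := ∑ p ∈ T, Real.log p with hΘ
  have hΘ0 : 0 ≤ Θ := Finset.sum_nonneg fun p _ => Real.log_natCast_nonneg p
  have hL0 : 0 ≤ Real.log L := Real.log_nonneg hL
  rcases S.eq_empty_or_nonempty with hSe | hSn
  · simp [hSe, hΘ0]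
  have hcpos : (0:ℝ) < S.card := by exact_mod_cast hSn.card_pos
  -- lower bound
  have low : ∀ p ∈ T, (S.card : ℝ) ^ 2 / ν p
      ≤ ∑ n ∈ S, ∑ n' ∈ S, if (n' : ZMod p) = (n : ZMod p) then (1:ℝ) else 0 := by
    intro p hp
    have e1 : ∑ n ∈ S, ∑ n' ∈ S, (if (n' : ZMod p) = (n : ZMod p) then (1:ℝ) else 0)
        = ∑ b ∈ S.image (fun n : ℤ => (n : ZMod p)),
          ((S.filter fun n : ℤ => (n : ZMod p) = b).card : ℝ) ^ 2 := by
      have : ∀ n ∈ S, ∑ n' ∈ S, (if (n' : ZMod p) = (n : ZMod p) then (1:ℝ) else 0)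
          = (fun b : ZMod p => ((S.filter fun n : ℤ => (n : ZMod p) = b).card : ℝ)) ((fun n : ℤ => (n : ZMod p)) n) := by
        intro n _
        rw [Finset.sum_boole]
      rw [Finset.sum_congr rfl this, Finset.sum_comp
        (fun b : ZMod p => ((S.filter fun n : ℤ => (n : ZMod p) = b).card : ℝ))
        (fun n : ℤ => (n : ZMod p))]
      apply Finset.sum_congr rfl
      intro b _
      rw [nsmul_eq_mul, sq]
    have e2 : (S.card : ℝ) = ∑ b ∈ S.image (fun n : ℤ => (n : ZMod p)),
          ((S.filter fun n : ℤ => (n : ZMod p) = b).card : ℝ) := by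
      rw [Finset.card_eq_sum_card_image (fun n : ℤ => (n : ZMod p)) S]
      push_cast; rfl
    rw [div_le_iff₀ (hν0 p hp), e1, e2]
    refine (sq_sum_le_card_mul_sum_sq).trans ?_
    rw [mul_comm]
    exact mul_le_mul_of_nonneg_left (hν p hp) (Finset.sum_nonneg fun _ _ => by positivity)
  have up : ∀ n ∈ S, ∀ n' ∈ S, ∑ p ∈ T, Real.log p * (if (n' : ZMod p) = (n : ZMod p) then (1:ℝ) else 0)
      ≤ (if n = n' then Θ else 0) + Real.log L := by
    intro n hn n' hn'
    by_cases h : n = n'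
    · subst h; simp only [if_true, mul_one]; linarith
    · rw [if_neg h, zero_add]
      have hne : n - n' ≠ 0 := sub_ne_zero.mpr h
      have : ∀ p ∈ T, Real.log p * (if (n' : ZMod p) = (n : ZMod p) then (1:ℝ) else 0)
          = if p ∣ (n - n').natAbs then Real.log p else 0 := by
        intro p _
        have : ((n' : ZMod p) = (n : ZMod p)) ↔ p ∣ (n - n').natAbs := by
          rw [ZMod.intCast_eq_intCast_iff_dvd_sub, ← Int.natCast_dvd]
        simp only [this]
        split_ifs <;> simp
      rw [Finset.sum_congr rfl this, ← Finset.sum_filter,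
        ← Real.log_prod (fun p hp => by
          exact_mod_cast (hT p (Finset.mem_filter.mp hp).1).ne_zero)]
      apply Real.log_le_log
      · exact Finset.prod_pos fun p hp => by exact_mod_cast (hT p (Finset.mem_filter.mp hp).1).pos
      · refine le_trans ?_ (hS n hn n' hn')
        rw [← Nat.cast_prod, ← Int.cast_abs, Int.abs_eq_natAbs, Int.cast_natCast]
        have : ∏ p ∈ T.filter (fun p => p ∣ (n - n').natAbs), p ∣ (n - n').natAbs :=
          Finset.prod_primes_dvd _ (fun p hp => (hT p (Finset.mem_filter.mp hp).1).prime)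
            (fun p hp => (Finset.mem_filter.mp hp).2)
        exact_mod_cast Nat.le_of_dvd (Int.natAbs_pos.mpr hne) this
  have main : (S.card : ℝ)^2 * ∑ p ∈ T, Real.log p / ν p ≤ S.card * Θ + (S.card:ℝ)^2 * Real.log L := by
    calc _ = ∑ p ∈ T, Real.log p * ((S.card : ℝ) ^ 2 / ν p) := by
          rw [Finset.mul_sum]; apply Finset.sum_congr rfl; intros; ring
      _ ≤ ∑ p ∈ T, Real.log p * ∑ n ∈ S, ∑ n' ∈ S, (if (n' : ZMod p) = (n : ZMod p) then (1:ℝ) else 0) := by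
          refine Finset.sum_le_sum fun p hp => mul_le_mul_of_nonneg_left (low p hp) (Real.log_natCast_nonneg p)
      _ = ∑ n ∈ S, ∑ n' ∈ S, ∑ p ∈ T, Real.log p * (if (n' : ZMod p) = (n : ZMod p) then (1:ℝ) else 0) := by
          simp_rw [Finset.mul_sum]
          rw [Finset.sum_comm]
          apply Finset.sum_congr rfl; intro n _
          rw [Finset.sum_comm]
      _ ≤ ∑ n ∈ S, ∑ n' ∈ S, ((if n = n' then Θ else 0) + Real.log L) :=
          Finset.sum_le_sum fun n hn => Finset.sum_le_sum fun n' hn' => up n hn n' hn'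
      _ = _ := by
          simp_rw [Finset.sum_add_distrib, Finset.sum_ite_eq]
          simp
          ring
  have : (S.card:ℝ) * ((S.card : ℝ) * (∑ p ∈ T, Real.log p / ν p - Real.log L)) ≤ S.card * Θ := by
    nlinarith
  exact le_of_mul_le_mul_left this hcpos

lemma square_char {p : ℕ} [Fact p.Prime] (g : ℤ) (hg : IsSquare g) :
    quadraticChar (ZMod p) (g : ZMod p) ≠ -1 := by
  intro h
  rw [quadraticChar_neg_one_iff_not_isSquare] at h
  obtain ⟨r, rfl⟩ := hg
  exact h ⟨(r : ZMod p), by push_cast; rfl⟩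

lemma line_count (δ K : ℝ) (hδ : 0 < δ) (hK : 0 ≤ K) : ∃ C : ℝ, 0 < C ∧
    ∀ (B U : ℝ) (α β x y e e' : ℤ) (S : Finset ℤ), 2 ≤ B → 1 ≤ U →
      α * β * (e * y - e' * x) ≠ 0 → |((α * β * (e * y - e' * x) : ℤ) : ℝ)| ≤ B ^ K →
      (∀ n ∈ S, IsSquare (α * (x + e * n) ^ 3 + β * (y + e' * n) ^ 3)) →
      (∀ n ∈ S, ∀ n' ∈ S, |((n - n' : ℤ) : ℝ)| ≤ U) →
      (S.card : ℝ) ≤ C * (√U * B ^ δ) := by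
  obtain ⟨C1, hC1, h1⟩ := good_sum (δ / (K + 1)) (by positivity)
  set A := Real.exp ((C1 + 1) / 2) with hA
  have hA1 : 1 ≤ A := Real.one_le_exp (by linarith)
  refine ⟨Real.log 4 * (2 * A), by positivity, ?_⟩
  intro B U α β x y e e' S hB hU hD hDB hsq hdiff
  set D := (α * β * (e * y - e' * x)).natAbs with hDdef
  have hD0 : D ≠ 0 := Int.natAbs_ne_zero.mpr hD
  have hsU : 1 ≤ √U := Real.one_le_sqrt.mpr hU
  have hBδ : 1 ≤ B ^ δ := Real.one_le_rpow (by linarith) hδ.le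
  set M := A * (√U * B ^ δ) with hM
  have hM1 : 1 ≤ M := by
    have : 1 ≤ √U * B ^ δ := one_le_mul_of_one_le_of_one_le hsU hBδ
    exact one_le_mul_of_one_le_of_one_le hA1 this
  set N := ⌈M⌉₊ with hN
  have hNM : M ≤ N := Nat.le_ceil M
  have hN1 : 1 ≤ N := by
    have : (1:ℝ) ≤ N := hM1.trans hNM
    exact_mod_cast this
  have hN2 : (N:ℝ) ≤ 2 * M := by
    have := Nat.ceil_lt_add_one (a := M) (by linarith)
    linarith
  have hg := h1 D hD0 N hN1
  have hgal := gallagher S U hU hdiff (goodP N D)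
    (fun p hp => (Finset.mem_filter.mp hp).2.1) (fun p => (p:ℝ)/2 + 18 * √p)
    (fun p hp => by
      have : (0:ℝ) < p := by exact_mod_cast (Finset.mem_filter.mp hp).2.1.pos
      positivity)
    (by
      intro p hp
      obtain ⟨-, hpp, hp3, hpD⟩ := Finset.mem_filter.mp hp
      have : Fact p.Prime := ⟨hpp⟩
      have hne : ((α * β * (e * y - e' * x) : ℤ) : ZMod p) ≠ 0 := by
        rw [Ne, ZMod.intCast_zmod_eq_zero_iff_dvd, Int.natCast_dvd]
        exact hpD
      push_cast at hne
      have hb := (line_bound hp3 (α : ZMod p) β x y e e'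
        (by rintro h; apply hne; rw [h]; ring) (by rintro h; apply hne; rw [h]; ring)
        (by rintro h; apply hne; rw [h]; ring)).2
      refine le_trans ?_ hb
      norm_cast
      apply Finset.card_le_card
      intro t ht
      obtain ⟨n, hn, rfl⟩ := Finset.mem_image.mp ht
      rw [Finset.mem_filter]
      refine ⟨Finset.mem_univ _, ?_⟩
      have := square_char (p := p) _ (hsq n hn)
      push_cast at this
      exact this)
  have hlogN : Real.log N ≥ (C1 + 1)/2 + Real.log U / 2 + δ * Real.log B := by
    have : Real.log M ≤ Real.log N := Real.log_le_log (by linarith) hNM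
    rw [hM, Real.log_mul (by positivity) (by positivity), Real.log_mul (by positivity) (by positivity),
      Real.log_sqrt (by linarith), Real.log_rpow (by linarith), hA, Real.log_exp] at this
    linarith
  have hlogD : Real.log D ≤ K * Real.log B := by
    rw [← Real.log_rpow (by linarith)]
    apply Real.log_le_log
    · exact_mod_cast Nat.pos_of_ne_zero hD0
    · refine le_trans (le_of_eq ?_) hDB
      rw [hDdef, ← Int.cast_abs, Int.abs_eq_natAbs, Int.cast_natCast]
  have hlB : 0 ≤ Real.log B := Real.log_nonneg (by linarith)
  have hx : δ / (K + 1) * Real.log D ≤ δ * Real.log B := by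
    rw [div_mul_eq_mul_div, div_le_iff₀ (by linarith)]
    have : δ * Real.log D ≤ δ * (K * Real.log B) := by gcongr
    nlinarith [mul_nonneg hδ.le hlB]
  have hge : 1 ≤ ∑ p ∈ goodP N D, Real.log p / ((p:ℝ)/2 + 18 * √p) - Real.log U := by
    nlinarith [mul_nonneg hδ.le hlB]
  have hth : ∑ p ∈ goodP N D, Real.log p ≤ Real.log 4 * N := by
    refine le_trans ?_ (Chebyshev.theta_le_log4_mul_x (Nat.cast_nonneg N))
    rw [Chebyshev.theta_eq_sum_primesLE_log]
    apply Finset.sum_le_sum_of_subset_of_nonneg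
    · intro p hp
      obtain ⟨h1, hpp, -⟩ := Finset.mem_filter.mp hp
      rw [Finset.mem_range] at h1
      rw [Nat.mem_primesLE]
      exact ⟨by omega, hpp⟩
    · intro p _ _; exact Real.log_natCast_nonneg p
  have hl4 : 0 ≤ Real.log 4 := Real.log_nonneg (by norm_num)
  calc (S.card : ℝ) = S.card * 1 := (mul_one _).symm
    _ ≤ _ := mul_le_mul_of_nonneg_left hge (Nat.cast_nonneg _)
    _ ≤ _ := hgal
    _ ≤ _ := hth
    _ ≤ Real.log 4 * (2 * M) := by gcongr
    _ = _ := by rw [hM]; ring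

end FB

namespace FB
open Real

/-- the cubic form -/
def GG (α β : ℤ) (s : ℤ × ℤ) : ℤ := α * s.1 ^ 3 + β * s.2 ^ 3

lemma jac_eq {p : ℕ} [Fact p.Prime] (α β : ℤ) (x y : ℤ × ℤ) :
    ((jacobiSym (GG α β (x - y)) p : ℤ) : ℂ) = phi (p := p) α β
      (((x.1 : ZMod p), (x.2 : ZMod p)) - ((y.1 : ZMod p), (y.2 : ZMod p))) := by
  rw [← jacobiSym.legendreSym.to_jacobiSym, legendreSym, phi, GG]
  push_cast
  simp

lemma jac_abs_le (g : ℤ) (p : ℕ) : |(jacobiSym g p : ℝ)| ≤ 1 := by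
  rcases jacobiSym.trichotomy g p with h | h | h <;> simp [h]

lemma pair_bound {p q : ℕ} (hp : p.Prime) (hq : q.Prime) (hp3 : 3 < p) (hq3 : 3 < q) (α β : ℤ)
    (hpab : ¬ (p:ℤ) ∣ α * β) (hqab : ¬ (q:ℤ) ∣ α * β) (A : Finset (ℤ × ℤ))
    (hinj : ∀ x ∈ A, ∀ y ∈ A, (p:ℤ) ∣ x.1 - y.1 → (p:ℤ) ∣ x.2 - y.2 →
      (q:ℤ) ∣ x.1 - y.1 → (q:ℤ) ∣ x.2 - y.2 → x = y) :
    |∑ x ∈ A, ∑ y ∈ A, (jacobiSym (GG α β (x - y)) p : ℝ) * (jacobiSym (GG α β (x - y)) q : ℝ)|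
      ≤ 33 ^ 2 * p * q * A.card := by
  have : Fact p.Prime := ⟨hp⟩
  have : Fact q.Prime := ⟨hq⟩
  have nz : ∀ {r : ℕ} [Fact r.Prime], ¬ (r:ℤ) ∣ α * β → (α : ZMod r) ≠ 0 ∧ (β : ZMod r) ≠ 0 := by
    intro r _ h
    rw [← ZMod.intCast_zmod_eq_zero_iff_dvd] at h
    push_cast at h
    exact mul_ne_zero_iff.mp h
  have hb := double_bound hp3 hq3 (α : ZMod p) (β : ZMod p) (α : ZMod q) (β : ZMod q)
    (nz hpab).1 (nz hpab).2 (nz hqab).1 (nz hqab).2 A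
    (fun x => ((x.1 : ZMod p), (x.2 : ZMod p))) (fun x => ((x.1 : ZMod q), (x.2 : ZMod q)))
    (by
      intro x hx y hy h1 h2
      rw [Prod.mk.injEq, ZMod.intCast_eq_intCast_iff_dvd_sub, ZMod.intCast_eq_intCast_iff_dvd_sub] at h1 h2
      exact (hinj y hy x hx h1.1 h1.2 h2.1 h2.2).symm)
  refine le_trans (le_of_eq ?_) hb
  rw [← Real.norm_eq_abs, ← Complex.norm_real]
  congr 1
  push_cast
  apply Finset.sum_congr rfl
  intro x _
  apply Finset.sum_congr rfl
  intro y _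
  rw [← jac_eq, ← jac_eq]

lemma square_sieve (α β : ℤ) (A A1 S : Finset (ℤ × ℤ)) (T : Finset ℕ) (P : ℝ)
    (hT : ∀ p ∈ T, p.Prime ∧ 3 < p ∧ ¬ (p:ℤ) ∣ α * β ∧ (p:ℝ) ≤ P)
    (hinj : ∀ p ∈ T, ∀ q ∈ T, p ≠ q → ∀ x ∈ A, ∀ y ∈ A, (p:ℤ) ∣ x.1 - y.1 → (p:ℤ) ∣ x.2 - y.2 →
      (q:ℤ) ∣ x.1 - y.1 → (q:ℤ) ∣ x.2 - y.2 → x = y)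
    (hA1 : A1 ⊆ A) (hS : ∀ s ∈ S, ∀ y ∈ A1, y + s ∈ A)
    (hsq : ∀ s ∈ S, (T.card : ℝ) / 2 ≤ ∑ p ∈ T, (jacobiSym (GG α β s) p : ℝ)) :
    (S.card : ℝ) * A1.card * ((T.card : ℝ) / 2) ^ 2
      ≤ T.card * (A.card:ℝ) ^ 2 + (T.card:ℝ) ^ 2 * (33 ^ 2 * P ^ 2 * A.card) := by
  classical
  set F : ℤ × ℤ → ℝ := fun d => ∑ p ∈ T, (jacobiSym (GG α β d) p : ℝ) with hF
  have low : (S.card : ℝ) * A1.card * ((T.card : ℝ) / 2) ^ 2 ≤ ∑ y ∈ A, ∑ x ∈ A, F (x - y) ^ 2 := by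
    calc _ = ∑ y ∈ A1, ∑ s ∈ S, ((T.card : ℝ) / 2) ^ 2 := by simp; ring
      _ ≤ ∑ y ∈ A1, ∑ s ∈ S, F s ^ 2 := by
          refine Finset.sum_le_sum fun y _ => Finset.sum_le_sum fun s hs => ?_
          have := hsq s hs
          gcongr
      _ ≤ ∑ y ∈ A1, ∑ x ∈ A, F (x - y) ^ 2 := by
          refine Finset.sum_le_sum fun y hy => ?_
          have e : ∑ s ∈ S, F s ^ 2 = ∑ x ∈ S.image (fun s => y + s), F (x - y) ^ 2 := by
            rw [Finset.sum_image (by intro a _ b _ h; exact add_left_cancel h)]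
            apply Finset.sum_congr rfl
            intro s _; rw [add_sub_cancel_left]
          rw [e]
          apply Finset.sum_le_sum_of_subset_of_nonneg
          · intro x hx
            obtain ⟨s, hs, rfl⟩ := Finset.mem_image.mp hx
            exact hS s hs y hy
          · intros; positivity
      _ ≤ _ := Finset.sum_le_sum_of_subset_of_nonneg hA1
          (fun _ _ _ => Finset.sum_nonneg fun _ _ => by positivity)
  refine low.trans ?_
  have e1 : ∑ y ∈ A, ∑ x ∈ A, F (x - y) ^ 2 = ∑ p ∈ T, ∑ q ∈ T, ∑ x ∈ A, ∑ y ∈ A,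
      (jacobiSym (GG α β (x - y)) p : ℝ) * (jacobiSym (GG α β (x - y)) q : ℝ) := by
    have : ∀ x y, F (x - y) ^ 2 = ∑ p ∈ T, ∑ q ∈ T,
      (jacobiSym (GG α β (x - y)) p : ℝ) * (jacobiSym (GG α β (x - y)) q : ℝ) := by
      intro x y
      rw [sq, hF, Finset.sum_mul_sum]
    simp_rw [this]
    rw [Finset.sum_comm]
    have sw : ∀ (f : ℤ × ℤ → ℤ × ℤ → ℕ → ℕ → ℝ), ∑ x ∈ A, ∑ y ∈ A, ∑ p ∈ T, ∑ q ∈ T, f x y p q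
        = ∑ p ∈ T, ∑ q ∈ T, ∑ x ∈ A, ∑ y ∈ A, f x y p q := by
      intro f
      calc _ = ∑ x ∈ A, ∑ p ∈ T, ∑ y ∈ A, ∑ q ∈ T, f x y p q :=
            Finset.sum_congr rfl fun x _ => Finset.sum_comm
        _ = ∑ p ∈ T, ∑ x ∈ A, ∑ y ∈ A, ∑ q ∈ T, f x y p q := Finset.sum_comm
        _ = ∑ p ∈ T, ∑ x ∈ A, ∑ q ∈ T, ∑ y ∈ A, f x y p q :=
            Finset.sum_congr rfl fun p _ => Finset.sum_congr rfl fun x _ => Finset.sum_comm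
        _ = _ := Finset.sum_congr rfl fun p _ => Finset.sum_comm
    exact sw _
  rw [e1]
  have hbd : ∀ p ∈ T, ∀ q ∈ T, ∑ x ∈ A, ∑ y ∈ A,
      (jacobiSym (GG α β (x - y)) p : ℝ) * (jacobiSym (GG α β (x - y)) q : ℝ)
      ≤ (if p = q then (A.card:ℝ)^2 else 0) + 33 ^ 2 * P ^ 2 * A.card := by
    intro p hp q hq
    obtain ⟨p1, p2, p3, p4⟩ := hT p hp
    obtain ⟨q1, q2, q3, q4⟩ := hT q hq
    split_ifs with h
    · have : ∑ x ∈ A, ∑ y ∈ A,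
        (jacobiSym (GG α β (x - y)) p : ℝ) * (jacobiSym (GG α β (x - y)) q : ℝ) ≤ ∑ x ∈ A, ∑ y ∈ A, 1 := by
        refine Finset.sum_le_sum fun x _ => Finset.sum_le_sum fun y _ => ?_
        refine (le_abs_self _).trans ?_
        rw [abs_mul]
        exact mul_le_one₀ (jac_abs_le _ _) (abs_nonneg _) (jac_abs_le _ _)
      have e : ∑ x ∈ A, ∑ y ∈ A, (1:ℝ) = (A.card:ℝ)^2 := by simp [sq]
      rw [e] at this
      have : 0 ≤ 33 ^ 2 * P ^ 2 * A.card := by positivity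
      linarith
    · rw [zero_add]
      refine (le_abs_self _).trans ((pair_bound p1 q1 p2 q2 α β p3 q3 A (hinj p hp q hq h)).trans ?_)
      have : (p:ℝ) * q ≤ P ^ 2 := by
        rw [sq]; exact mul_le_mul p4 q4 (Nat.cast_nonneg _) ((Nat.cast_nonneg _).trans p4)
      have h2 : (0:ℝ) ≤ A.card := Nat.cast_nonneg _
      calc _ = 33 ^ 2 * ((p:ℝ) * q) * A.card := by ring
        _ ≤ _ := by gcongr
  refine (Finset.sum_le_sum fun p hp => Finset.sum_le_sum fun q hq => hbd p hp q hq).trans ?_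
  simp_rw [Finset.sum_add_distrib, Finset.sum_ite_eq]
  simp
  apply le_of_eq; ring

lemma jac_sum_ge (g : ℤ) (hg : g ≠ 0) (hsq : IsSquare g) (T : Finset ℕ) (hT : ∀ p ∈ T, p.Prime) :
    (T.card : ℝ) - 2 * Real.log |(g:ℝ)| ≤ ∑ p ∈ T, (jacobiSym g p : ℝ) := by
  classical
  have h1 : ∀ p ∈ T, (1:ℝ) - (if p ∣ g.natAbs then 1 else 0) ≤ (jacobiSym g p : ℝ) := by
    intro p hp
    have : Fact p.Prime := ⟨hT p hp⟩
    obtain ⟨r, rfl⟩ := hsq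
    rw [jacobiSym.mul_left]
    push_cast
    split_ifs with h
    · nlinarith [mul_self_nonneg ((jacobiSym r p : ℤ):ℝ)]
    · have hne : jacobiSym r p ≠ 0 := by
        rw [← jacobiSym.legendreSym.to_jacobiSym]
        rw [Ne, legendreSym.eq_zero_iff, ZMod.intCast_zmod_eq_zero_iff_dvd, Int.natCast_dvd]
        intro h2; apply h; rw [Int.natAbs_mul]; exact h2.mul_right _
      rcases jacobiSym.trichotomy r p with h | h | h
      · exact absurd h hne
      · simp [h]
      · simp [h]
  have h2 := Finset.sum_le_sum h1
  rw [Finset.sum_sub_distrib, ← Finset.sum_filter] at h2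
  simp only [Finset.sum_const, nsmul_eq_mul, mul_one] at h2
  have h3 := card_primes_dvd_le g.natAbs (Int.natAbs_ne_zero.mpr hg) (T.filter fun p => p ∣ g.natAbs)
    (fun p hp => ⟨hT p (Finset.mem_filter.mp hp).1, (Finset.mem_filter.mp hp).2⟩)
  have h4 : ((g.natAbs : ℕ) : ℝ) = |(g:ℝ)| := by
    rw [← Int.cast_abs, Int.abs_eq_natAbs, Int.cast_natCast]
  rw [h4] at h3
  linarith

end FB

namespace FB
open Real

/-- weighted sup norm -/
def nm (Y Z : ℤ) (x : ℤ × ℤ) : ℤ := max (|x.1| * Z) (|x.2| * Y)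

/-- a shortest vector of the lattice -/
def ShortE (m l Y Z : ℤ) (e : ℤ × ℤ) : Prop :=
  e ≠ 0 ∧ m ∣ e.1 - l * e.2 ∧ ∀ w : ℤ × ℤ, m ∣ w.1 - l * w.2 → nm Y Z w < nm Y Z e → w = 0

/-- determinant with `e` -/
def dt (e x : ℤ × ℤ) : ℤ := e.1 * x.2 - e.2 * x.1

lemma nm_nonneg {Y Z : ℤ} (hY : 0 < Y) (hZ : 0 < Z) (x : ℤ × ℤ) : 0 ≤ nm Y Z x :=
  le_max_of_le_left (by positivity)

lemma nm_pos {Y Z : ℤ} (hY : 0 < Y) (hZ : 0 < Z) (x : ℤ × ℤ) (hx : x ≠ 0) : 0 < nm Y Z x := by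
  by_cases h1 : x.1 = 0
  · have h2 : x.2 ≠ 0 := by
      intro h2; apply hx; ext <;> simp [h1, h2]
    exact lt_max_of_lt_right (by positivity)
  · exact lt_max_of_lt_left (by positivity)

lemma exists_short (m l Y Z : ℤ) (hm : 0 < m) (hY : 0 < Y) (hZ : 0 < Z) : ∃ e, ShortE m l Y Z e := by
  classical
  have hex : ∃ n : ℕ, ∃ e : ℤ × ℤ, e ≠ 0 ∧ m ∣ e.1 - l * e.2 ∧ (nm Y Z e).toNat = n :=
    ⟨_, (m, 0), by simp [Prod.ext_iff, hm.ne'], by simp, rfl⟩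
  obtain ⟨e, he0, he1, he2⟩ := Nat.find_spec hex
  refine ⟨e, he0, he1, fun w hw hlt => ?_⟩
  by_contra hw0
  have := Nat.find_min hex (m := (nm Y Z w).toNat) (by
    rw [← he2]
    have := nm_nonneg hY hZ w
    omega)
  exact this ⟨w, hw0, hw, rfl⟩

lemma near_mult (p s : ℤ) (hp : p ≠ 0) : ∃ n : ℤ, 2 * |s - n * p| ≤ |p| := by
  have h1 := Int.emod_add_mul_ediv s p
  have h2 := Int.emod_nonneg s hp
  have h3 := Int.emod_lt_abs s hp
  by_cases h : 2 * (s % p) ≤ |p|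
  · refine ⟨s / p, ?_⟩
    have : s - s / p * p = s % p := by linarith [mul_comm p (s/p)]
    rw [this, abs_of_nonneg h2]; exact h
  · refine ⟨s / p + p.sign, ?_⟩
    have h4 : p.sign * p = |p| := Int.sign_mul_self_eq_abs p
    have : s - (s / p + p.sign) * p = s % p - |p| := by rw [add_mul, h4]; linarith [mul_comm p (s/p)]
    rw [this, abs_of_nonpos (by linarith)]
    linarith

lemma par_mult_aux (p q s t : ℤ) (hp : p ≠ 0) (h : p * t = q * s) :
    ∃ n : ℤ, 2 * |s - n * p| ≤ |p| ∧ 2 * |t - n * q| ≤ |q| := by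
  obtain ⟨n, hn⟩ := near_mult p s hp
  refine ⟨n, hn, ?_⟩
  have hp0 : 0 < |p| := abs_pos.mpr hp
  have : |p| * (2 * |t - n * q|) ≤ |p| * |q| := by
    have e : |p| * |t - n * q| = |q| * |s - n * p| := by
      rw [← abs_mul, ← abs_mul]
      congr 1
      linear_combination h
    nlinarith [mul_le_mul_of_nonneg_left hn (abs_nonneg q)]
  exact le_of_mul_le_mul_left this hp0

lemma par_mult {m l Y Z : ℤ} (hY : 0 < Y) (hZ : 0 < Z) {e : ℤ × ℤ} (he : ShortE m l Y Z e)
    (w : ℤ × ℤ) (hw : m ∣ w.1 - l * w.2) (hd : dt e w = 0) :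
    ∃ n : ℤ, w = (e.1 * n, e.2 * n) := by
  obtain ⟨he0, he1, he2⟩ := he
  have hpos := nm_pos hY hZ e he0
  unfold dt at hd
  have : ∃ n : ℤ, 2 * |w.1 - n * e.1| ≤ |e.1| ∧ 2 * |w.2 - n * e.2| ≤ |e.2| := by
    by_cases h1 : e.1 = 0
    · have h2 : e.2 ≠ 0 := by
        intro h2; apply he0; ext <;> simp [h1, h2]
      obtain ⟨n, a, b⟩ := par_mult_aux e.2 e.1 w.2 w.1 h2 (by linarith)
      exact ⟨n, b, a⟩
    · exact par_mult_aux e.1 e.2 w.1 w.2 h1 (by linarith)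
  obtain ⟨n, h1, h2⟩ := this
  refine ⟨n, ?_⟩
  have := he2 (w.1 - n * e.1, w.2 - n * e.2) (by
    have : w.1 - n * e.1 - l * (w.2 - n * e.2) = (w.1 - l * w.2) - n * (e.1 - l * e.2) := by ring
    simp only [this]
    exact dvd_sub hw (he1.mul_left n)) (by
    have a1 : 2 * (|w.1 - n * e.1| * Z) ≤ nm Y Z e := by
      refine le_trans ?_ (le_max_left _ _)
      nlinarith
    have a2 : 2 * (|w.2 - n * e.2| * Y) ≤ nm Y Z e := by
      refine le_trans ?_ (le_max_right _ _)
      nlinarith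
    unfold nm at a1 a2 hpos ⊢
    apply max_lt <;> simp only <;> linarith)
  rw [Prod.mk_eq_zero] at this
  ext
  · simp; linarith [this.1]
  · simp; linarith [this.2]

lemma nm_mul (Y Z : ℤ) (e : ℤ × ℤ) (n : ℤ) : nm Y Z (e.1 * n, e.2 * n) = |n| * nm Y Z e := by
  unfold nm
  simp only [abs_mul]
  rw [mul_max_of_nonneg _ _ (abs_nonneg n)]
  congr 1 <;> ring

lemma dt_dvd {m l : ℤ} {e x : ℤ × ℤ} (he : m ∣ e.1 - l * e.2) (hx : m ∣ x.1 - l * x.2) : m ∣ dt e x := by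
  have : dt e x = (e.1 - l * e.2) * x.2 - e.2 * (x.1 - l * x.2) := by unfold dt; ring
  rw [this]
  exact dvd_sub (he.mul_right _) (hx.mul_left _)

lemma dt_le {Y Z : ℤ} (e x : ℤ × ℤ) (c : ℤ) (hc : 0 ≤ c) (h1 : |x.1| ≤ c * Y)
    (h2 : |x.2| ≤ c * Z) : |dt e x| ≤ 2 * c * nm Y Z e := by
  have a1 : |e.1| * Z ≤ nm Y Z e := le_max_left _ _
  have a2 : |e.2| * Y ≤ nm Y Z e := le_max_right _ _
  have b1 : |e.1 * x.2| ≤ c * nm Y Z e := by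
    rw [abs_mul]
    calc _ ≤ |e.1| * (c * Z) := by gcongr
      _ = c * (|e.1| * Z) := by ring
      _ ≤ _ := by gcongr
  have b2 : |e.2 * x.1| ≤ c * nm Y Z e := by
    rw [abs_mul]
    calc _ ≤ |e.2| * (c * Y) := by gcongr
      _ = c * (|e.2| * Y) := by ring
      _ ≤ _ := by gcongr
  unfold dt
  have := abs_sub (e.1 * x.2) (e.2 * x.1)
  linarith

lemma dt_sub (e x y : ℤ × ℤ) : dt e (x - y) = dt e x - dt e y := by
  unfold dt; simp; ring

/-- points of a fibre are on an arithmetic progression -/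
lemma fibre_param {m l Y Z : ℤ} (hY : 0 < Y) (hZ : 0 < Z) {e : ℤ × ℤ} (he : ShortE m l Y Z e)
    (F : Finset (ℤ × ℤ)) (hF : ∀ x ∈ F, m ∣ x.1 - l * x.2) (x0 : ℤ × ℤ) (h0 : x0 ∈ F)
    (hd : ∀ x ∈ F, dt e x = dt e x0) (R : ℤ)
    (hR : ∀ x ∈ F, ∀ y ∈ F, nm Y Z (x - y) ≤ R) :
    ∃ S : Finset ℤ, S.card = F.card ∧ (∀ n ∈ S, (x0.1 + e.1 * n, x0.2 + e.2 * n) ∈ F) ∧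
      (∀ n ∈ S, ∀ n' ∈ S, |n - n'| * nm Y Z e ≤ R) ∧ 0 ∈ S := by
  classical
  have hex : ∀ x, ∃ n : ℤ, x ∈ F → x = (x0.1 + e.1 * n, x0.2 + e.2 * n) := by
    intro x
    by_cases hx : x ∈ F
    · obtain ⟨n, hn⟩ := par_mult hY hZ he (x - x0) (by
        have : (x - x0).1 - l * (x - x0).2 = (x.1 - l * x.2) - (x0.1 - l * x0.2) := by
          simp; ring
        rw [this]; exact dvd_sub (hF x hx) (hF x0 h0)) (by rw [dt_sub, hd x hx, sub_self])
      refine ⟨n, fun _ => ?_⟩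
      rw [Prod.ext_iff] at hn ⊢
      simp at hn ⊢
      constructor <;> linarith [hn.1, hn.2]
    · exact ⟨0, fun h => absurd h hx⟩
  choose g hg using hex
  refine ⟨F.image g, ?_, ?_, ?_, ?_⟩
  · apply Finset.card_image_of_injOn
    intro x hx y hy hxy
    rw [hg x hx, hg y hy, hxy]
  · intro n hn
    obtain ⟨x, hx, rfl⟩ := Finset.mem_image.mp hn
    rw [← hg x hx]; exact hx
  · intro n hn n' hn'
    obtain ⟨x, hx, rfl⟩ := Finset.mem_image.mp hn
    obtain ⟨y, hy, rfl⟩ := Finset.mem_image.mp hn'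
    rw [← nm_mul]
    refine le_trans (le_of_eq ?_) (hR x hx y hy)
    congr 1
    have a := hg x hx
    have b := hg y hy
    rw [Prod.ext_iff] at a b ⊢
    simp only [Prod.fst_sub, Prod.snd_sub] at a b ⊢
    constructor
    · rw [a.1, b.1]; ring
    · rw [a.2, b.2]; ring
  · rw [Finset.mem_image]
    refine ⟨x0, h0, ?_⟩
    have h := hg x0 h0
    rw [Prod.ext_iff] at h
    simp only at h
    have h1 : e.1 * g x0 = 0 := by linarith [h.1]
    have h2 : e.2 * g x0 = 0 := by linarith [h.2]
    by_contra hne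
    apply he.1
    ext
    · simpa [hne] using h1
    · simpa [hne] using h2

lemma cop_eq (e s s' : ℤ × ℤ) (he : e ≠ 0) (h : dt e s = 0) (h' : dt e s' = 0)
    (p1 : 0 < s.1) (p2 : 0 < s.2) (q1 : 0 < s'.1) (q2 : 0 < s'.2)
    (hc : IsCoprime s.1 s.2) (hc' : IsCoprime s'.1 s'.2) : s = s' := by
  unfold dt at h h'
  have hcross : s.1 * s'.2 = s'.1 * s.2 := by
    by_cases h1 : e.1 = 0
    · have h2 : e.2 ≠ 0 := by
        intro h2; apply he; ext <;> simp [h1, h2]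
      exfalso
      rw [h1] at h
      have : e.2 * s.1 = 0 := by linarith
      rcases mul_eq_zero.mp this with h | h
      · exact h2 h
      · omega
    · apply mul_left_cancel₀ h1
      linear_combination s.1 * h' - s'.1 * h
  have d1 : s.1 ∣ s'.1 := hc.dvd_of_dvd_mul_right (Dvd.intro _ hcross)
  have d2 : s'.1 ∣ s.1 := hc'.dvd_of_dvd_mul_right (Dvd.intro _ hcross.symm)
  have e1 : s.1 = s'.1 := Int.dvd_antisymm p1.le q1.le d1 d2
  have e2 : s.2 = s'.2 := by
    rw [e1] at hcross
    exact (mul_left_cancel₀ q1.ne' hcross).symm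
  exact Prod.ext e1 e2

end FB

namespace FB
open Real

/-- hypotheses for the lattice count -/
structure Hyp (B K : ℝ) (m l α β Y Z : ℤ) (S : Finset (ℤ × ℤ)) : Prop where
  hB : 2 ≤ B
  hm : 0 < m
  hY : 0 < Y
  hZ : 0 < Z
  hα : α ≠ 0
  hβ : β ≠ 0
  bα : |(α:ℝ)| ≤ B ^ K
  bβ : |(β:ℝ)| ≤ B ^ K
  bm : (m:ℝ) ≤ B ^ K
  bY : (Y:ℝ) ≤ B ^ K
  bZ : (Z:ℝ) ≤ B ^ K
  hS : ∀ s ∈ S, (0 < s.1 ∧ s.1 ≤ Y) ∧ (0 < s.2 ∧ s.2 ≤ Z) ∧ IsCoprime s.1 s.2 ∧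
    m ∣ s.1 - l * s.2 ∧ GG α β s ≠ 0 ∧ IsSquare (GG α β s)

lemma short_le {B K : ℝ} {m l α β Y Z : ℤ} {S : Finset (ℤ × ℤ)} (H : Hyp B K m l α β Y Z S)
    {e : ℤ × ℤ} (he : ShortE m l Y Z e) (hne : S.Nonempty) : nm Y Z e ≤ Y * Z := by
  obtain ⟨s, hs⟩ := hne
  obtain ⟨⟨h1, h2⟩, ⟨h3, h4⟩, -, h5, -⟩ := H.hS s hs
  have hY := H.hY
  have hZ := H.hZ
  by_contra! hlt
  have : nm Y Z s ≤ Y * Z := by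
    unfold nm
    apply max_le
    · rw [abs_of_pos h1]; nlinarith
    · rw [abs_of_pos h3]; nlinarith
  have := he.2.2 s h5 (by linarith)
  rw [this] at h1
  simp at h1

lemma nm_diff_le {Y Z : ℤ} (hY : 0 < Y) (hZ : 0 < Z) (c : ℤ) (x : ℤ × ℤ) (h1 : |x.1| ≤ c * Y) (h2 : |x.2| ≤ c * Z) :
    nm Y Z x ≤ c * (Y * Z) := by
  unfold nm
  apply max_le <;> nlinarith

lemma case1 (δ K : ℝ) (hδ : 0 < δ) (hK : 0 ≤ K) : ∃ C : ℝ, 0 < C ∧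
    ∀ (B : ℝ) (m l α β Y Z : ℤ) (S : Finset (ℤ × ℤ)) (e : ℤ × ℤ), Hyp B K m l α β Y Z S → S.Nonempty →
    ShortE m l Y Z e →
    2 * (nm Y Z e : ℝ) / m ≤ √((Y:ℝ) * Z / (nm Y Z e : ℝ)) →
    (S.card : ℝ) ≤ 1 + C * (2 * (nm Y Z e : ℝ) / m * √((Y:ℝ) * Z / (nm Y Z e : ℝ)) * B ^ δ) := by
  classical
  obtain ⟨C, hC, hline⟩ := line_count δ (4 * K + 1) hδ (by positivity)
  refine ⟨2 * C, by positivity, ?_⟩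
  intro B m l α β Y Z S e H hne he hVU
  have hm := H.hm
  have hY := H.hY
  have hZ := H.hZ
  have hB := H.hB
  have hn1 := nm_pos hY hZ e he.1
  have hn2 := short_le H he hne
  set n1 := nm Y Z e with hn1d
  have rn1 : (0:ℝ) < n1 := by exact_mod_cast hn1
  have rm : (0:ℝ) < m := by exact_mod_cast hm
  have rn2 : (n1:ℝ) ≤ Y * Z := by exact_mod_cast hn2
  set U := (Y:ℝ) * Z / n1 with hU
  set V := 2 * (n1:ℝ) / m with hV
  have hU1 : 1 ≤ U := by rw [hU, le_div_iff₀ rn1]; linarith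
  have hV0 : 0 ≤ V := by positivity
  have hbox : ∀ s ∈ S, |s.1| ≤ 1 * Y ∧ |s.2| ≤ 1 * Z := by
    intro s hs
    obtain ⟨⟨h1, h2⟩, ⟨h3, h4⟩, -⟩ := H.hS s hs
    rw [abs_of_pos h1, abs_of_pos h3]; constructor <;> linarith
  set S1 := S.filter (fun s => dt e s = 0) with hS1
  set S2 := S.filter (fun s => ¬ dt e s = 0) with hS2
  have hsplit : S1.card + S2.card = S.card := Finset.card_filter_add_card_filter_not _
  have hc1 : S1.card ≤ 1 := by
    rw [Finset.card_le_one]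
    intro a ha b hb
    obtain ⟨ha, da⟩ := Finset.mem_filter.mp ha
    obtain ⟨hb, db⟩ := Finset.mem_filter.mp hb
    obtain ⟨⟨a1, -⟩, ⟨a2, -⟩, ac, -⟩ := H.hS a ha
    obtain ⟨⟨b1, -⟩, ⟨b2, -⟩, bc, -⟩ := H.hS b hb
    exact cop_eq e a b he.1 da db a1 a2 b1 b2 ac bc
  -- the fibres
  set M := C * (√U * B ^ δ) with hM
  have hM0 : 0 ≤ M := by positivity
  have hdv : ∀ s ∈ S, m ∣ dt e s := fun s hs => dt_dvd he.2.1 (H.hS s hs).2.2.2.1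
  have hfib : ∀ a ∈ S2.image (fun s => dt e s / m), (S2.filter (fun s => dt e s / m = a)).card ≤ ⌊M⌋₊ := by
    intro a ha
    obtain ⟨x0, hx0, hax0⟩ := Finset.mem_image.mp ha
    set F := S2.filter (fun s => dt e s / m = a) with hF
    have hFS : ∀ x ∈ F, x ∈ S := fun x hx => (Finset.mem_filter.mp (Finset.mem_filter.mp hx).1).1
    have hx0F : x0 ∈ F := Finset.mem_filter.mpr ⟨hx0, hax0⟩
    have hx0S := hFS x0 hx0F
    have hdeq : ∀ x ∈ F, dt e x = dt e x0 := by
      intro x hx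
      have h1 := (Finset.mem_filter.mp hx).2
      rw [← Int.ediv_mul_cancel (hdv x (hFS x hx)), ← Int.ediv_mul_cancel (hdv x0 hx0S), h1, hax0]
    obtain ⟨T, hTc, hT1, hT2, -⟩ := fibre_param hY hZ he F
      (fun x hx => (H.hS x (hFS x hx)).2.2.2.1) x0 hx0F hdeq (1 * (Y * Z)) (by
        intro x hx y hy
        obtain ⟨⟨a1, a1'⟩, ⟨a2, a2'⟩, -⟩ := H.hS x (hFS x hx)
        obtain ⟨⟨b1, b1'⟩, ⟨b2, b2'⟩, -⟩ := H.hS y (hFS y hy)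
        apply nm_diff_le hY hZ
        · simp only [Prod.fst_sub]; rw [abs_le]; constructor <;> linarith
        · simp only [Prod.snd_sub]; rw [abs_le]; constructor <;> linarith)
    have hd0 : dt e x0 ≠ 0 := (Finset.mem_filter.mp hx0).2
    have hdle : |dt e x0| ≤ 2 * 1 * nm Y Z e := dt_le e x0 1 zero_le_one (hbox x0 hx0S).1 (hbox x0 hx0S).2
    have hdle' : |((dt e x0 : ℤ) : ℝ)| ≤ 2 * n1 := by
      rw [← Int.cast_abs]; exact_mod_cast (by linarith)
    have := hline B U α β x0.1 x0.2 e.1 e.2 T hB hU1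
      (mul_ne_zero (mul_ne_zero H.hα H.hβ) hd0) (by
        have e1 : ((α * β * (e.1 * x0.2 - e.2 * x0.1) : ℤ) : ℝ) = (α:ℝ) * β * (dt e x0 : ℤ) := by
          unfold dt; push_cast; ring
        rw [e1, abs_mul, abs_mul]
        have bK : 0 ≤ B ^ K := by positivity
        have y0 : (0:ℝ) ≤ Y := by exact_mod_cast hY.le
        have z0 : (0:ℝ) ≤ Z := by exact_mod_cast hZ.le
        have b3 : |((dt e x0 : ℤ) : ℝ)| ≤ B * (B ^ K * B ^ K) := by
          calc _ ≤ 2 * (n1:ℝ) := hdle'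
            _ ≤ 2 * (Y * Z) := by linarith
            _ ≤ B * (B ^ K * B ^ K) := by
              have : (Y:ℝ) * Z ≤ B ^ K * B ^ K := mul_le_mul H.bY H.bZ z0 bK
              have h0 : (0:ℝ) ≤ Y * Z := by positivity
              nlinarith
        calc _ ≤ B ^ K * B ^ K * (B * (B ^ K * B ^ K)) := by
              have := H.bα
              have := H.bβ
              gcongr
          _ = B ^ (4 * K + 1) := by
              have hB0 : (0:ℝ) < B := by linarith
              rw [show 4 * K + 1 = K + K + (1 + (K + K)) by ring, Real.rpow_add hB0, Real.rpow_add hB0,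
                Real.rpow_add hB0, Real.rpow_one, Real.rpow_add hB0])
      (by
        intro n hn
        exact (H.hS _ (hFS _ (hT1 n hn))).2.2.2.2.2)
      (by
        intro n hn n' hn'
        have h := hT2 n hn n' hn'
        rw [hU, le_div_iff₀ rn1, ← Int.cast_abs]
        have h' : ((|n - n'| * n1 : ℤ) : ℝ) ≤ ((1 * (Y * Z) : ℤ) : ℝ) := by exact_mod_cast h
        push_cast at h' ⊢
        linarith)
    rw [← hTc]
    exact Nat.le_floor this
  have hcard := Finset.card_le_mul_card_image S2 ⌊M⌋₊ hfib
  have himg : ((S2.image (fun s => dt e s / m)).card : ℝ) ≤ 2 * V := by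
    have hsub : S2.image (fun s => dt e s / m) ⊆ (Finset.Icc (-⌊V⌋) ⌊V⌋).erase 0 := by
      intro a ha
      obtain ⟨x, hx, rfl⟩ := Finset.mem_image.mp ha
      obtain ⟨hxS, hx0⟩ := Finset.mem_filter.mp hx
      have hd := Int.ediv_mul_cancel (hdv x hxS)
      set v := dt e x / m with hv
      have hdle : |dt e x| ≤ 2 * 1 * nm Y Z e := dt_le e x 1 zero_le_one (hbox x hxS).1 (hbox x hxS).2
      have hvV : (|v| : ℤ) ≤ ⌊V⌋ := by
        rw [Int.le_floor, hV, le_div_iff₀ rm]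
        rw [← hd, abs_mul, abs_of_pos hm] at hdle
        have : ((|v| * m : ℤ) : ℝ) ≤ ((2 * 1 * n1 : ℤ) : ℝ) := by exact_mod_cast hdle
        push_cast at this ⊢
        linarith
      rw [Finset.mem_erase, Finset.mem_Icc]
      refine ⟨?_, abs_le.mp hvV⟩
      intro h0
      rw [h0, zero_mul] at hd
      exact hx0 hd.symm
    have hfl : 0 ≤ ⌊V⌋ := Int.floor_nonneg.mpr hV0
    have h1 := Finset.card_le_card hsub
    rw [Finset.card_erase_of_mem (by rw [Finset.mem_Icc]; constructor <;> linarith), Int.card_Icc] at h1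
    have h2 : ((S2.image (fun s => dt e s / m)).card : ℤ) ≤ 2 * ⌊V⌋ := by omega
    have h3 : (((S2.image (fun s => dt e s / m)).card : ℤ) : ℝ) ≤ ((2 * ⌊V⌋ : ℤ) : ℝ) := by exact_mod_cast h2
    push_cast at h3
    have := Int.floor_le V
    linarith
  have hcard' : (S2.card : ℝ) ≤ M * (2 * V) := by
    calc (S2.card : ℝ) ≤ ((⌊M⌋₊ * (S2.image (fun s => dt e s / m)).card : ℕ) : ℝ) := by exact_mod_cast hcard
      _ = (⌊M⌋₊ : ℝ) * ((S2.image (fun s => dt e s / m)).card : ℝ) := by push_cast; ring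
      _ ≤ _ := mul_le_mul (Nat.floor_le hM0) himg (Nat.cast_nonneg _) hM0
  have hfin : (S.card : ℝ) = S1.card + S2.card := by rw [← hsplit]; push_cast; ring
  have hc1' : (S1.card : ℝ) ≤ 1 := by exact_mod_cast hc1
  rw [hfin]
  calc _ ≤ 1 + M * (2 * V) := by linarith
    _ = _ := by rw [hM]; ring

end FB

namespace FB
open Real

/-- lattice points in a box -/
noncomputable def boxL (m l Y Z c : ℤ) : Finset (ℤ × ℤ) :=
  (Finset.Icc (-(c * Y)) (c * Y) ×ˢ Finset.Icc (-(c * Z)) (c * Z)).filter (fun x => m ∣ x.1 - l * x.2)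

lemma mem_boxL {m l Y Z c : ℤ} {x : ℤ × ℤ} :
    x ∈ boxL m l Y Z c ↔ |x.1| ≤ c * Y ∧ |x.2| ≤ c * Z ∧ m ∣ x.1 - l * x.2 := by
  unfold boxL
  rw [Finset.mem_filter, Finset.mem_product, Finset.mem_Icc, Finset.mem_Icc, abs_le, abs_le, and_assoc]

lemma sub_lat {m l : ℤ} {x y : ℤ × ℤ} (hx : m ∣ x.1 - l * x.2) (hy : m ∣ y.1 - l * y.2) :
    m ∣ (x - y).1 - l * (x - y).2 := by
  have : (x - y).1 - l * (x - y).2 = (x.1 - l * x.2) - (y.1 - l * y.2) := by simp; ring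
  rw [this]; exact dvd_sub hx hy

lemma add_lat {m l : ℤ} {x y : ℤ × ℤ} (hx : m ∣ x.1 - l * x.2) (hy : m ∣ y.1 - l * y.2) :
    m ∣ (x + y).1 - l * (x + y).2 := by
  have : (x + y).1 - l * (x + y).2 = (x.1 - l * x.2) + (y.1 - l * y.2) := by simp; ring
  rw [this]; exact dvd_add hx hy

lemma ediv_diff {a b Y : ℤ} (hY : 0 < Y) (h : a / Y = b / Y) : |a - b| ≤ 1 * Y := by
  have h1 := Int.emod_add_mul_ediv a Y
  have h2 := Int.emod_add_mul_ediv b Y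
  have h3 := Int.emod_nonneg a hY.ne'
  have h4 := Int.emod_nonneg b hY.ne'
  have h5 := Int.emod_lt_of_pos a hY
  have h6 := Int.emod_lt_of_pos b hY
  rw [h] at h1
  rw [abs_le]; constructor <;> linarith

lemma ediv_range {a Y : ℤ} (hY : 0 < Y) (h : |a| ≤ 2 * Y) : a / Y ∈ Finset.Icc (-2:ℤ) 2 := by
  rw [abs_le] at h
  rw [Finset.mem_Icc]
  constructor
  · rw [Int.le_ediv_iff_mul_le hY]; linarith
  · apply Int.ediv_le_of_le_mul hY; linarith

lemma box2_le (m l Y Z : ℤ) (hY : 0 < Y) (hZ : 0 < Z) :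
    (boxL m l Y Z 2).card ≤ 25 * (boxL m l Y Z 1).card := by
  classical
  have h := Finset.card_le_mul_card_image (f := fun x : ℤ × ℤ => (x.1 / Y, x.2 / Z)) (boxL m l Y Z 2)
    (boxL m l Y Z 1).card (by
      intro a ha
      obtain ⟨x0, hx0, rfl⟩ := Finset.mem_image.mp ha
      apply Finset.card_le_card_of_injOn (fun x => x - x0)
      · intro x hx
        obtain ⟨hx, hxe⟩ := Finset.mem_filter.mp hx
        rw [Prod.mk.injEq] at hxe
        rw [Finset.mem_coe, mem_boxL]
        exact ⟨ediv_diff hY hxe.1, ediv_diff hZ hxe.2, sub_lat (mem_boxL.mp hx).2.2 (mem_boxL.mp hx0).2.2⟩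
      · intro x _ y _ hxy
        exact sub_left_injective hxy)
  have h2 : ((boxL m l Y Z 2).image fun x : ℤ × ℤ => (x.1 / Y, x.2 / Z)).card ≤ 25 := by
    have : (boxL m l Y Z 2).image (fun x : ℤ × ℤ => (x.1 / Y, x.2 / Z)) ⊆ Finset.Icc (-2:ℤ) 2 ×ˢ Finset.Icc (-2:ℤ) 2 := by
      intro a ha
      obtain ⟨x, hx, rfl⟩ := Finset.mem_image.mp ha
      obtain ⟨h1, h2, -⟩ := mem_boxL.mp hx
      rw [Finset.mem_product]
      exact ⟨ediv_range hY h1, ediv_range hZ h2⟩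
    exact (Finset.card_le_card this).trans (by decide)
  nlinarith

lemma card_Icc_le (V : ℝ) (hV : 0 ≤ V) : ((Finset.Icc (-⌊V⌋) ⌊V⌋).card : ℝ) ≤ 2 * V + 1 := by
  have hfl : 0 ≤ ⌊V⌋ := Int.floor_nonneg.mpr hV
  have h2 : ((Finset.Icc (-⌊V⌋) ⌊V⌋).card : ℤ) = 2 * ⌊V⌋ + 1 := by rw [Int.card_Icc]; omega
  have h3 : (((Finset.Icc (-⌊V⌋) ⌊V⌋).card : ℤ) : ℝ) = ((2 * ⌊V⌋ + 1 : ℤ) : ℝ) := by exact_mod_cast h2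
  push_cast at h3
  have := Int.floor_le V
  rw [h3]; linarith

lemma box2_size {m l Y Z : ℤ} (hm : 0 < m) (hY : 0 < Y) (hZ : 0 < Z) {e : ℤ × ℤ} (he : ShortE m l Y Z e)
    (U V : ℝ) (hU : U = (Y:ℝ) * Z / (nm Y Z e : ℝ)) (hV : V = 2 * (nm Y Z e : ℝ) / m)
    (hU1 : 1 ≤ U) (hV1 : 1 ≤ V) : ((boxL m l Y Z 2).card : ℝ) ≤ 45 * (U * V) := by
  classical
  have hn1 := nm_pos hY hZ e he.1
  have rn1 : (0:ℝ) < nm Y Z e := by exact_mod_cast hn1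
  have rm : (0:ℝ) < m := by exact_mod_cast hm
  set A := boxL m l Y Z 2 with hA
  have hdv : ∀ s ∈ A, m ∣ dt e s := fun s hs => dt_dvd he.2.1 (mem_boxL.mp hs).2.2
  have hcard := Finset.card_le_mul_card_image (f := fun s => dt e s / m) A
    (Finset.Icc (-⌊4*U⌋) ⌊4*U⌋).card (by
      intro a ha
      obtain ⟨x0, hx0, hax0⟩ := Finset.mem_image.mp ha
      set F := A.filter (fun s => dt e s / m = a) with hF
      have hx0F : x0 ∈ F := Finset.mem_filter.mpr ⟨hx0, hax0⟩
      have hFS : ∀ x ∈ F, x ∈ A := fun x hx => (Finset.mem_filter.mp hx).1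
      have hdeq : ∀ x ∈ F, dt e x = dt e x0 := by
        intro x hx
        have h1 := (Finset.mem_filter.mp hx).2
        rw [← Int.ediv_mul_cancel (hdv x (hFS x hx)), ← Int.ediv_mul_cancel (hdv x0 hx0), h1, hax0]
      obtain ⟨T, hTc, -, hT2, hT0⟩ := fibre_param hY hZ he F
        (fun x hx => (mem_boxL.mp (hFS x hx)).2.2) x0 hx0F hdeq (4 * (Y * Z)) (by
          intro x hx y hy
          obtain ⟨a1, a2, -⟩ := mem_boxL.mp (hFS x hx)
          obtain ⟨b1, b2, -⟩ := mem_boxL.mp (hFS y hy)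
          rw [abs_le] at a1 a2 b1 b2
          apply nm_diff_le hY hZ
          · simp only [Prod.fst_sub]; rw [abs_le]; constructor <;> linarith
          · simp only [Prod.snd_sub]; rw [abs_le]; constructor <;> linarith)
      rw [← hTc]
      apply Finset.card_le_card
      intro n hn
      have h := hT2 n hn 0 hT0
      rw [sub_zero] at h
      rw [Finset.mem_Icc, ← abs_le, Int.le_floor, hU, ← mul_div_assoc, le_div_iff₀ rn1]
      have h' : ((|n| * nm Y Z e : ℤ) : ℝ) ≤ ((4 * (Y * Z) : ℤ) : ℝ) := by exact_mod_cast h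
      push_cast at h' ⊢
      linarith)
  have himg : ((A.image (fun s => dt e s / m)).card : ℝ) ≤ 2 * (2 * V) + 1 := by
    refine le_trans ?_ (card_Icc_le (2*V) (by linarith))
    have : A.image (fun s => dt e s / m) ⊆ Finset.Icc (-⌊2*V⌋) ⌊2*V⌋ := by
      intro a ha
      obtain ⟨x, hx, rfl⟩ := Finset.mem_image.mp ha
      have hd := Int.ediv_mul_cancel (hdv x hx)
      set v := dt e x / m with hv
      obtain ⟨a1, a2, -⟩ := mem_boxL.mp hx
      have hdle : |dt e x| ≤ 2 * 2 * nm Y Z e := dt_le e x 2 (by norm_num) a1 a2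
      rw [Finset.mem_Icc, ← abs_le, Int.le_floor, hV, ← mul_div_assoc, le_div_iff₀ rm]
      rw [← hd, abs_mul, abs_of_pos hm] at hdle
      have : ((|v| * m : ℤ) : ℝ) ≤ ((2 * 2 * nm Y Z e : ℤ) : ℝ) := by exact_mod_cast hdle
      push_cast at this ⊢
      linarith
    exact_mod_cast Finset.card_le_card this
  have h4 := card_Icc_le (4*U) (by linarith)
  calc (A.card : ℝ) ≤ (((Finset.Icc (-⌊4*U⌋) ⌊4*U⌋).card * (A.image (fun s => dt e s / m)).card : ℕ) : ℝ) := by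
        exact_mod_cast hcard
    _ = ((Finset.Icc (-⌊4*U⌋) ⌊4*U⌋).card : ℝ) * ((A.image (fun s => dt e s / m)).card : ℝ) := by push_cast; ring
    _ ≤ (2 * (4 * U) + 1) * (2 * (2 * V) + 1) := mul_le_mul h4 himg (Nat.cast_nonneg _) (by linarith)
    _ ≤ (9 * U) * (5 * V) := by
        apply mul_le_mul <;> linarith
    _ = _ := by ring

lemma inj_mod {m l Y Z : ℤ} (hY : 0 < Y) (hZ : 0 < Z) {e : ℤ × ℤ} (he : ShortE m l Y Z e)
    {p q : ℕ} (hp : p.Prime) (hq : q.Prime) (hpq : p ≠ q) (hpm : ¬ (p:ℤ) ∣ m) (hqm : ¬ (q:ℤ) ∣ m)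
    (hbig : 4 * (Y * Z) < (p * q : ℤ) * nm Y Z e)
    (x : ℤ × ℤ) (hx : x ∈ boxL m l Y Z 2) (y : ℤ × ℤ) (hy : y ∈ boxL m l Y Z 2)
    (h1 : (p:ℤ) ∣ x.1 - y.1) (h2 : (p:ℤ) ∣ x.2 - y.2)
    (h3 : (q:ℤ) ∣ x.1 - y.1) (h4 : (q:ℤ) ∣ x.2 - y.2) : x = y := by
  have hcop : IsCoprime (p:ℤ) (q:ℤ) := Nat.isCoprime_iff_coprime.mpr ((Nat.coprime_primes hp hq).mpr hpq)
  obtain ⟨w1, hw1⟩ := hcop.mul_dvd h1 h3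
  obtain ⟨w2, hw2⟩ := hcop.mul_dvd h2 h4
  obtain ⟨a1, a2, a3⟩ := mem_boxL.mp hx
  obtain ⟨b1, b2, b3⟩ := mem_boxL.mp hy
  rw [abs_le] at a1 a2 b1 b2
  have hpp : Prime (p:ℤ) := Nat.prime_iff_prime_int.mp hp
  have hqq : Prime (q:ℤ) := Nat.prime_iff_prime_int.mp hq
  have hcm : IsCoprime m ((p:ℤ) * q) := by
    apply IsCoprime.mul_right
    · exact ((Prime.coprime_iff_not_dvd hpp).mpr hpm).symm
    · exact ((Prime.coprime_iff_not_dvd hqq).mpr hqm).symm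
  have hlat : m ∣ w1 - l * w2 := by
    apply hcm.dvd_of_dvd_mul_left
    have : ((p:ℤ) * q) * (w1 - l * w2) = (x - y).1 - l * (x - y).2 := by
      simp only [Prod.fst_sub, Prod.snd_sub]; rw [hw1, hw2]; ring
    rw [this]; exact sub_lat a3 b3
  have hnm : nm Y Z (x - y) ≤ 4 * (Y * Z) := by
    apply nm_diff_le hY hZ
    · simp only [Prod.fst_sub]; rw [abs_le]; constructor <;> linarith
    · simp only [Prod.snd_sub]; rw [abs_le]; constructor <;> linarith
  have hpq0 : (0:ℤ) < p * q := by
    have := hp.pos; have := hq.pos; positivity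
  have e1 : x - y = ((w1, w2).1 * ((p:ℤ) * q), (w1, w2).2 * ((p:ℤ) * q)) := by
    ext
    · simp only [Prod.fst_sub]; rw [hw1]; ring
    · simp only [Prod.snd_sub]; rw [hw2]; ring
  rw [e1, nm_mul, abs_of_pos hpq0] at hnm
  have := he.2.2 (w1, w2) hlat (by
    have : ((p:ℤ) * q) * nm Y Z (w1, w2) < (p * q : ℤ) * nm Y Z e := by linarith
    exact lt_of_mul_lt_mul_left this hpq0.le)
  rw [this] at e1
  have : x - y = 0 := by rw [e1]; simp
  exact sub_eq_zero.mp this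

end FB

namespace FB
open Real

set_option maxHeartbeats 1000000 in
lemma prime_set (δ K : ℝ) (hδ : 0 < δ) (hK : 0 ≤ K) : ∃ A : ℝ, 1 ≤ A ∧ ∀ (B w E : ℝ) (D : ℕ),
    2 ≤ B → 1 ≤ w → w ≤ B ^ (2 * K + 1) → D ≠ 0 → Real.log D ≤ 3 * K * Real.log B →
    E ≤ (4 * K + 1) * Real.log B →
    ∃ T : Finset ℕ, (∀ p ∈ T, p.Prime ∧ 3 < p ∧ ¬ p ∣ D ∧ 2 * w < p ∧ (p:ℝ) ≤ A * (w * B ^ (2 * δ))) ∧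
      w ≤ T.card ∧ 4 * E ≤ T.card := by
  classical
  set k := 2 * K + 1 + 2 * δ with hk
  have hk0 : 0 < k := by positivity
  set η := δ / k with hη
  have hη0 : 0 < η := by positivity
  have hη1 : η ≤ 1 / 2 := by
    rw [hη, div_le_iff₀ hk0]; linarith
  obtain ⟨c, hc, hcount⟩ := prime_count η hη0
  set M := 7 + 6 * K / δ + 4 * (4 * K + 1) / δ + 1 with hM
  have hM0 : 0 < M := by positivity
  set A := (2 * M / c) ^ 2 + 4 with hA
  have hA4 : 4 ≤ A := by have : 0 ≤ (2 * M / c) ^ 2 := by positivity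
                         linarith
  refine ⟨A, by linarith, ?_⟩
  intro B w E D hB hw hwB hD hlD hE
  have hB0 : 0 < B := by linarith
  have hlB : 0 ≤ Real.log B := Real.log_nonneg (by linarith)
  have hBδ : 1 ≤ B ^ δ := Real.one_le_rpow (by linarith) hδ.le
  have hB2 : B ^ (2 * δ) = B ^ δ * B ^ δ := by rw [two_mul, Real.rpow_add hB0]
  set P := A * (w * B ^ (2 * δ)) with hP
  have hwB1 : 1 ≤ w * B ^ (2*δ) := by rw [hB2]; nlinarith [mul_le_mul hBδ hBδ zero_le_one (by linarith)]
  have hP4 : 4 ≤ P := by nlinarith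
  set N := ⌊P⌋₊ with hN
  have hNP : (N:ℝ) ≤ P := Nat.floor_le (by linarith)
  have hNP2 : P / 2 ≤ N := by
    have := Nat.lt_floor_add_one P
    have : P - 1 < N := by linarith
    linarith
  have hN2 : 2 ≤ N := by
    have : (2:ℝ) ≤ N := by linarith
    exact_mod_cast this
  have hN0 : (0:ℝ) < N := by linarith
  have hcnt := hcount N hN2
  -- power bound
  have hPη : (N:ℝ) ^ η ≤ √A * B ^ δ := by
    have h1 : P ≤ A * B ^ k := by
      rw [hP]
      have : w * B ^ (2*δ) ≤ B ^ k := by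
        rw [hk, Real.rpow_add hB0]; gcongr
      gcongr
    calc (N:ℝ) ^ η ≤ (A * B ^ k) ^ η := by
          apply Real.rpow_le_rpow hN0.le (hNP.trans h1) hη0.le
      _ = A ^ η * B ^ δ := by
          rw [Real.mul_rpow (by linarith) (by positivity), ← Real.rpow_mul hB0.le]
          congr 2
          rw [hη]; field_simp
      _ ≤ A ^ ((1:ℝ)/2) * B ^ δ := by
          gcongr; linarith
      _ = _ := by rw [Real.sqrt_eq_rpow]
  have hsA : 2 * M / c ≤ √A := by
    apply Real.le_sqrt_of_sq_le; linarith
  have hsA0 : 0 < √A := Real.sqrt_pos.mpr (by linarith)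
  have hlow : M * (w * B ^ δ) ≤ c * (N:ℝ) ^ (1 - η) := by
    rw [Real.rpow_sub hN0, Real.rpow_one]
    have h1 : P / 2 / (√A * B ^ δ) ≤ N / (N:ℝ) ^ η := by
      apply div_le_div₀ hN0.le hNP2 (by positivity) hPη
    have h2 : P / 2 / (√A * B ^ δ) = √A / 2 * (w * B ^ δ) := by
      rw [hP, hB2]
      have : A = √A * √A := (Real.mul_self_sqrt (by linarith)).symm
      have hb : B ^ δ ≠ 0 := by positivity
      field_simp
      rw [sq]; exact this
    rw [h2] at h1
    have h3 : M ≤ c * (√A / 2) := by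
      rw [div_le_iff₀ hc] at hsA; linarith
    calc M * (w * B ^ δ) ≤ (c * (√A / 2)) * (w * B ^ δ) := by gcongr
      _ = c * (√A / 2 * (w * B ^ δ)) := by ring
      _ ≤ _ := by gcongr
  have hlogB : Real.log B ≤ B ^ δ / δ := Real.log_le_rpow_div hB0.le hδ
  set T := (Finset.range (N+1)).filter (fun p => p.Prime ∧ (3 < p ∧ ¬ p ∣ D ∧ 2 * w < p)) with hT
  set T' := (Finset.range (N+1)).filter (fun p => p.Prime ∧ ¬ (3 < p ∧ ¬ p ∣ D ∧ 2 * w < p)) with hT'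
  have hsplit : ((Finset.range (N+1)).filter Nat.Prime).card = T.card + T'.card := by
    have h0 := Finset.card_filter_add_card_filter_not (s := (Finset.range (N+1)).filter Nat.Prime)
      (fun p : ℕ => 3 < p ∧ ¬ p ∣ D ∧ 2 * w < (p:ℝ))
    rw [Finset.filter_filter, Finset.filter_filter] at h0
    exact h0.symm
  have hT'sub : T' ⊆ Finset.range 4 ∪ Finset.range (⌊2*w⌋₊ + 1) ∪ T'.filter (fun p => p ∣ D) := by
    intro p hp
    have hp' := hp
    rw [hT', Finset.mem_filter] at hp'
    rw [Finset.mem_union, Finset.mem_union, Finset.mem_range, Finset.mem_range, Finset.mem_filter]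
    by_cases h1 : 3 < p
    · by_cases h2 : p ∣ D
      · exact Or.inr ⟨hp, h2⟩
      · left; right
        have : ¬ 2 * w < p := by tauto
        rw [not_lt] at this
        exact Nat.lt_succ_of_le (Nat.le_floor this)
    · left; left; omega
  have hT'c : (T'.card : ℝ) ≤ 4 + (2 * w + 1) + 2 * Real.log D := by
    have h1 := (Finset.card_le_card hT'sub).trans ((Finset.card_union_le _ _).trans
      (Nat.add_le_add_right (Finset.card_union_le _ _) _))
    rw [Finset.card_range, Finset.card_range] at h1
    have h2 := card_primes_dvd_le D hD (T'.filter (fun p => p ∣ D)) (fun p hp => by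
      obtain ⟨a, b⟩ := Finset.mem_filter.mp hp
      exact ⟨(Finset.mem_filter.mp a).2.1, b⟩)
    have h3 := Nat.floor_le (a := 2*w) (by linarith)
    have h4 : (T'.card : ℝ) ≤ ((4 + (⌊2*w⌋₊ + 1) + (T'.filter (fun p => p ∣ D)).card : ℕ) : ℝ) := by exact_mod_cast h1
    push_cast at h4
    linarith
  have hTlow : M * (w * B ^ δ) - (7 * w + 6 * K * Real.log B) ≤ T.card := by
    rw [hsplit] at hcnt
    push_cast at hcnt
    have h9 : 2 * Real.log D ≤ 6 * K * Real.log B := by linarith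
    linarith
  have hwBδ : w ≤ w * B ^ δ := le_mul_of_one_le_right (by linarith) hBδ
  have hBw : B ^ δ ≤ w * B ^ δ := le_mul_of_one_le_left (by positivity) hw
  have hkey : 7 * w + 6 * K * Real.log B + 4 * ((4 * K + 1) * Real.log B) + w ≤ M * (w * B ^ δ) := by
    have a1 : 6 * K * Real.log B ≤ 6 * K / δ * (w * B ^ δ) := by
      calc _ ≤ 6 * K * (B ^ δ / δ) := by gcongr
        _ = 6 * K / δ * B ^ δ := by ring
        _ ≤ _ := by gcongr
    have a2 : 4 * ((4 * K + 1) * Real.log B) ≤ 4 * (4 * K + 1) / δ * (w * B ^ δ) := by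
      calc _ ≤ 4 * ((4 * K + 1) * (B ^ δ / δ)) := by gcongr
        _ = 4 * (4 * K + 1) / δ * B ^ δ := by ring
        _ ≤ _ := by gcongr
    rw [hM]
    calc _ ≤ 7 * (w * B ^ δ) + 6 * K / δ * (w * B ^ δ) + 4 * (4 * K + 1) / δ * (w * B ^ δ) + w * B ^ δ := by
          linarith
      _ = _ := by ring
  refine ⟨T, ?_, ?_, ?_⟩
  · intro p hp
    obtain ⟨h1, h2, h3, h4, h5⟩ := Finset.mem_filter.mp hp
    refine ⟨h2, h3, h4, h5, ?_⟩
    rw [Finset.mem_range] at h1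
    have : (p:ℝ) ≤ N := by exact_mod_cast (by omega : p ≤ N)
    linarith
  · have : 0 ≤ 4 * ((4 * K + 1) * Real.log B) := by positivity
    linarith
  · linarith

set_option maxHeartbeats 1000000 in
lemma case2 (δ K : ℝ) (hδ : 0 < δ) (hK : 0 ≤ K) : ∃ C : ℝ, 0 < C ∧
    ∀ (B : ℝ) (m l α β Y Z : ℤ) (S : Finset (ℤ × ℤ)) (e : ℤ × ℤ), Hyp B K m l α β Y Z S → S.Nonempty →
    ShortE m l Y Z e →
    √((Y:ℝ) * Z / (nm Y Z e : ℝ)) < 2 * (nm Y Z e : ℝ) / m →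
    (S.card : ℝ) ≤ C * ((2 * ((Y:ℝ) * Z) / m) ^ ((2:ℝ)/3) * B ^ (4 * δ)) := by
  classical
  obtain ⟨A0, hA0, hps⟩ := prime_set δ K hδ hK
  refine ⟨100 * (45 + 1089 * A0 ^ 2), by positivity, ?_⟩
  intro B m l α β Y Z S e H hne he hUV
  have hm := H.hm
  have hY := H.hY
  have hZ := H.hZ
  have hB := H.hB
  have hB0 : 0 < B := by linarith
  have hn1 := nm_pos hY hZ e he.1
  have hn2 := short_le H he hne
  set n1 := nm Y Z e with hn1d
  have rn1 : (0:ℝ) < n1 := by exact_mod_cast hn1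
  have rm1 : (1:ℝ) ≤ m := by exact_mod_cast hm
  have rm : (0:ℝ) < m := by linarith
  have rn2 : (n1:ℝ) ≤ Y * Z := by exact_mod_cast hn2
  set U := (Y:ℝ) * Z / n1 with hU
  set V := 2 * (n1:ℝ) / m with hV
  have hU1 : 1 ≤ U := by rw [hU, le_div_iff₀ rn1]; linarith
  have hsU : 1 ≤ √U := Real.one_le_sqrt.mpr hU1
  have hV1 : 1 ≤ V := by linarith
  set W := 2 * ((Y:ℝ) * Z) / m with hW
  have hUVW : U * V = W := by rw [hU, hV, hW]; field_simp
  have hW1 : 1 ≤ W := by rw [← hUVW]; nlinarith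
  set w := W ^ ((1:ℝ)/3) with hw
  have hw1 : 1 ≤ w := Real.one_le_rpow hW1 (by norm_num)
  have hw3 : w ^ 3 = W := by
    rw [hw, ← Real.rpow_natCast, ← Real.rpow_mul (by linarith)]; norm_num
  have hw2 : W ^ ((2:ℝ)/3) = w ^ 2 := by
    rw [hw, ← Real.rpow_natCast, ← Real.rpow_mul (by linarith)]; norm_num
  have hsUw : √U ≤ w := by
    apply le_of_pow_le_pow_left₀ (n := 3) (by norm_num) (by linarith)
    rw [hw3, ← hUVW]
    calc √U ^ 3 = (√U * √U) * √U := by ring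
      _ = U * √U := by rw [Real.mul_self_sqrt (by linarith)]
      _ ≤ _ := by gcongr
  have hUw : U ≤ w ^ 2 := by
    calc U = √U ^ 2 := (Real.sq_sqrt (by linarith)).symm
      _ ≤ _ := by gcongr
  have bK : 0 < B ^ K := by positivity
  have y0 : (0:ℝ) ≤ Y := by exact_mod_cast hY.le
  have z0 : (0:ℝ) ≤ Z := by exact_mod_cast hZ.le
  have hwB : w ≤ B ^ (2 * K + 1) := by
    have h1 : w ≤ W := by rw [← hw3]; nlinarith [sq_nonneg w, mul_self_nonneg (w-1), pow_le_pow_right₀ hw1 (show 1 ≤ 3 by norm_num)]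
    refine h1.trans ?_
    have h2 : W ≤ 2 * ((Y:ℝ) * Z) := div_le_self (by positivity) rm1
    refine h2.trans ?_
    rw [show 2 * K + 1 = 1 + (K + K) by ring, Real.rpow_add hB0, Real.rpow_one, Real.rpow_add hB0]
    have : (Y:ℝ) * Z ≤ B ^ K * B ^ K := mul_le_mul H.bY H.bZ z0 bK.le
    have h0 : (0:ℝ) ≤ Y * Z := by positivity
    nlinarith
  have hDne : α * β * m ≠ 0 := mul_ne_zero (mul_ne_zero H.hα H.hβ) hm.ne'
  have hlD : Real.log ((α * β * m).natAbs : ℕ) ≤ 3 * K * Real.log B := by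
    rw [← Real.log_rpow hB0]
    apply Real.log_le_log
    · exact_mod_cast Int.natAbs_pos.mpr hDne
    · have : (((α * β * m).natAbs : ℕ) : ℝ) = |(α:ℝ)| * |(β:ℝ)| * m := by
        have : (((α * β * m).natAbs : ℕ) : ℝ) = |((α * β * m : ℤ) : ℝ)| := by
          rw [← Int.cast_abs, Int.abs_eq_natAbs, Int.cast_natCast]
        rw [this]; push_cast; rw [abs_mul, abs_mul, abs_of_pos rm]
      rw [this, show 3 * K = K + K + K by ring, Real.rpow_add hB0, Real.rpow_add hB0]
      have := H.bα
      have := H.bβ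
      have := H.bm
      gcongr
  obtain ⟨T, hT, hTw, hTE⟩ := hps B w ((4 * K + 1) * Real.log B) (α * β * m).natAbs hB hw1 hwB
    (Int.natAbs_ne_zero.mpr hDne) hlD le_rfl
  set P := A0 * (w * B ^ (2 * δ)) with hP
  have hTnd : ∀ p ∈ T, ¬ (p:ℤ) ∣ α * β * m := fun p hp => by
    rw [Int.natCast_dvd]; exact (hT p hp).2.2.1
  have hsieve := square_sieve α β (boxL m l Y Z 2) (boxL m l Y Z 1) S T P
    (fun p hp => ⟨(hT p hp).1, (hT p hp).2.1, fun h => hTnd p hp (h.mul_right _), (hT p hp).2.2.2.2⟩)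
    (by
      intro p hp q hq hpq x hx y hy
      refine inj_mod hY hZ he (hT p hp).1 (hT q hq).1 hpq (fun h => hTnd p hp (h.mul_left _))
        (fun h => hTnd q hq (h.mul_left _)) ?_ x hx y hy
      have h1 := (hT p hp).2.2.2.1
      have h2 := (hT q hq).2.2.2.1
      have h3 : 4 * U < (p:ℝ) * q := by
        calc 4 * U ≤ (2 * w) * (2 * w) := by nlinarith
          _ < (p:ℝ) * q := by
            apply mul_lt_mul'' h1 h2 <;> linarith
      rw [hU, ← mul_div_assoc, div_lt_iff₀ rn1] at h3
      exact_mod_cast h3)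
    (by
      intro x hx
      obtain ⟨a1, a2, a3⟩ := mem_boxL.mp hx
      exact mem_boxL.mpr ⟨by linarith, by linarith, a3⟩)
    (by
      intro s hs y hy
      obtain ⟨a1, a2, a3⟩ := mem_boxL.mp hy
      obtain ⟨⟨b1, b2⟩, ⟨b3, b4⟩, -, b5, -⟩ := H.hS s hs
      rw [abs_le] at a1 a2
      refine mem_boxL.mpr ⟨?_, ?_, add_lat a3 b5⟩
      · simp only [Prod.fst_add]; rw [abs_le]; constructor <;> linarith
      · simp only [Prod.snd_add]; rw [abs_le]; constructor <;> linarith)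
    (by
      intro s hs
      obtain ⟨⟨b1, b2⟩, ⟨b3, b4⟩, -, b5, b6, b7⟩ := H.hS s hs
      have h1 := jac_sum_ge (GG α β s) b6 b7 T (fun p hp => (hT p hp).1)
      have hG : Real.log |((GG α β s : ℤ) : ℝ)| ≤ (4 * K + 1) * Real.log B := by
        rw [← Real.log_rpow hB0]
        apply Real.log_le_log
        · rw [abs_pos]; exact_mod_cast b6
        · have c1 : (s.1:ℝ) ≤ B ^ K := le_trans (by exact_mod_cast b2) H.bY
          have c2 : (s.2:ℝ) ≤ B ^ K := le_trans (by exact_mod_cast b4) H.bZ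
          have d1 : (0:ℝ) < s.1 := by exact_mod_cast b1
          have d2 : (0:ℝ) < s.2 := by exact_mod_cast b3
          have e1 : |(α:ℝ) * s.1 ^ 3| ≤ B ^ K * (B ^ K) ^ 3 := by
            rw [abs_mul, abs_of_pos (a := (s.1:ℝ)^3) (by positivity)]
            have := H.bα
            gcongr
          have e2 : |(β:ℝ) * s.2 ^ 3| ≤ B ^ K * (B ^ K) ^ 3 := by
            rw [abs_mul, abs_of_pos (a := (s.2:ℝ)^3) (by positivity)]
            have := H.bβ
            gcongr
          unfold GG
          push_cast
          refine (abs_add_le _ _).trans ((add_le_add e1 e2).trans ?_)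
          rw [show 4 * K + 1 = 1 + (K + (K + K + K)) by ring, Real.rpow_add hB0, Real.rpow_add hB0,
            Real.rpow_add hB0, Real.rpow_add hB0, Real.rpow_one]
          have : 0 ≤ B ^ K * (B ^ K * B ^ K * B ^ K) := by positivity
          nlinarith
      linarith)
  have hL2 := box2_size hm hY hZ he U V hU hV hU1 hV1
  rw [hUVW] at hL2
  have hL21 : ((boxL m l Y Z 2).card : ℝ) ≤ 25 * (boxL m l Y Z 1).card := by
    exact_mod_cast box2_le m l Y Z hY hZ
  have hL1 : (1:ℝ) ≤ (boxL m l Y Z 1).card := by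
    have : 0 < (boxL m l Y Z 1).card := Finset.card_pos.mpr ⟨0, mem_boxL.mpr ⟨by simp; linarith, by simp; linarith, by simp⟩⟩
    exact_mod_cast this
  set L1 : ℝ := ((boxL m l Y Z 1).card : ℝ)
  set L2 : ℝ := ((boxL m l Y Z 2).card : ℝ)
  set t : ℝ := (T.card : ℝ)
  have hL20 : 0 ≤ L2 := Nat.cast_nonneg _
  have ht0 : 0 < t := by linarith
  have hmain : (S.card : ℝ) ≤ 100 * (45 * w ^ 2 + 1089 * P ^ 2) := by
    have s1 : (S.card : ℝ) * L1 * (t / 2) ^ 2 ≤ (100 * (45 * w ^ 2 + 1089 * P ^ 2)) * (L1 * (t/2)^2) := by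
      refine hsieve.trans ?_
      have i1 : t * L2 ^ 2 ≤ t * ((25 * L1) * (45 * (w^2 * t))) := by
        have : L2 ≤ 45 * (w ^ 2 * t) := by
          refine hL2.trans ?_
          rw [← hw3]
          have : w ^ 3 = w ^ 2 * w := by ring
          rw [this]; gcongr
        rw [sq]
        gcongr
      have i2 : t ^ 2 * (33 ^ 2 * P ^ 2 * L2) ≤ t ^ 2 * (33 ^ 2 * P ^ 2 * (25 * L1)) := by gcongr
      calc _ ≤ t * ((25 * L1) * (45 * (w^2 * t))) + t ^ 2 * (33 ^ 2 * P ^ 2 * (25 * L1)) := add_le_add i1 i2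
        _ = _ := by ring
    rw [mul_assoc] at s1
    exact le_of_mul_le_mul_right s1 (by positivity)
  refine hmain.trans ?_
  rw [hw2]
  have hB4 : B ^ (4 * δ) = (B ^ (2 * δ)) ^ 2 := by
    rw [← Real.rpow_natCast, ← Real.rpow_mul hB0.le]; congr 1; push_cast; ring
  have hB41 : 1 ≤ B ^ (4 * δ) := Real.one_le_rpow (by linarith) (by positivity)
  have : 45 * w ^ 2 ≤ 45 * w ^ 2 * B ^ (4 * δ) := by
    have : 0 ≤ 45 * w ^ 2 := by positivity
    nlinarith
  calc _ ≤ 100 * (45 * w ^ 2 * B ^ (4*δ) + 1089 * P ^ 2) := by linarith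
    _ = _ := by rw [hP, hB4]; ring

end FB

namespace FB
open Real

lemma core (δ K : ℝ) (hδ : 0 < δ) (hK : 0 ≤ K) : ∃ C : ℝ, 0 < C ∧
    ∀ (B : ℝ) (m l α β Y Z : ℤ) (S : Finset (ℤ × ℤ)), Hyp B K m l α β Y Z S →
    (S.card : ℝ) ≤ C * (1 + ((Y:ℝ) * Z / m) ^ ((2:ℝ)/3)) * B ^ δ := by
  obtain ⟨C1, hC1, h1⟩ := case1 δ K hδ hK
  obtain ⟨C2, hC2, h2⟩ := case2 (δ/4) K (by positivity) hK
  refine ⟨1 + 2 * C1 + 2 * C2, by positivity, ?_⟩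
  intro B m l α β Y Z S H
  have hm := H.hm
  have hY := H.hY
  have hZ := H.hZ
  have hB := H.hB
  have hB0 : 0 < B := by linarith
  have rm : (0:ℝ) < m := by exact_mod_cast hm
  have rY : (0:ℝ) < Y := by exact_mod_cast hY
  have rZ : (0:ℝ) < Z := by exact_mod_cast hZ
  have hBδ : 1 ≤ B ^ δ := Real.one_le_rpow (by linarith) hδ.le
  set W0 := (Y:ℝ) * Z / m with hW0
  have hW00 : 0 < W0 := by positivity
  set R := W0 ^ ((2:ℝ)/3) with hR
  have hR0 : 0 < R := by positivity
  have hWR : (2 * ((Y:ℝ) * Z) / m) ^ ((2:ℝ)/3) ≤ 2 * R := by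
    rw [mul_div_assoc, Real.mul_rpow (by norm_num) hW00.le]
    have : (2:ℝ) ^ ((2:ℝ)/3) ≤ 2 ^ (1:ℝ) := Real.rpow_le_rpow_of_exponent_le (by norm_num) (by norm_num)
    rw [Real.rpow_one] at this
    gcongr
  have hRB : 0 < R * B ^ δ := by positivity
  have e1 : (1 + 2 * C1 + 2 * C2) * (1 + R) * B ^ δ =
    B ^ δ + R * B ^ δ + 2 * (C1 * B ^ δ) + 2 * (C2 * B ^ δ) + 2 * (C1 * (R * B ^ δ)) + 2 * (C2 * (R * B ^ δ)) := by ring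
  have p1 : 0 < C1 * B ^ δ := by positivity
  have p2 : 0 < C2 * B ^ δ := by positivity
  have p3 : 0 < C1 * (R * B ^ δ) := by positivity
  have p4 : 0 < C2 * (R * B ^ δ) := by positivity
  rw [e1]
  rcases S.eq_empty_or_nonempty with rfl | hne
  · simp only [Finset.card_empty, Nat.cast_zero]; linarith
  obtain ⟨e, he⟩ := exists_short m l Y Z hm hY hZ
  have hn1 := nm_pos hY hZ e he.1
  have rn : (0:ℝ) < nm Y Z e := by exact_mod_cast hn1
  by_cases hc : 2*(nm Y Z e:ℝ)/m ≤ √((Y:ℝ)*Z/(nm Y Z e:ℝ))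
  · have h3 := h1 B m l α β Y Z S e H hne he hc
    set U := (Y:ℝ)*Z/(nm Y Z e:ℝ) with hU
    set V := 2*(nm Y Z e:ℝ)/m with hV
    have hU0 : 0 < U := by positivity
    have hV0 : 0 < V := by positivity
    have hUV : 2 * ((Y:ℝ) * Z) / m = V * U := by rw [hU, hV]; field_simp
    have h4 : V * √U ≤ 2 * R := by
      refine le_trans ?_ hWR
      rw [hUV]
      apply le_of_pow_le_pow_left₀ (n := 3) (by norm_num) (by positivity)
      have : ((V * U) ^ ((2:ℝ)/3)) ^ 3 = (V * U) ^ 2 := by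
        rw [← Real.rpow_natCast, ← Real.rpow_mul (by positivity), ← Real.rpow_natCast]; norm_num
      rw [this]
      have hs : √U ^ 2 = U := Real.sq_sqrt hU0.le
      calc (V * √U) ^ 3 = V ^ 2 * (V * √U * √U ^ 2) := by ring
        _ ≤ V ^ 2 * (√U * √U * √U ^ 2) := by gcongr
        _ = (V * √U ^ 2) ^ 2 := by ring
        _ = _ := by rw [hs]
    have h5 : C1 * (V * √U * B ^ δ) ≤ C1 * (2 * R * B ^ δ) := by gcongr
    linarith
  · have h3 := h2 B m l α β Y Z S e H hne he (lt_of_not_ge hc)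
    rw [show 4 * (δ/4) = δ by ring] at h3
    have h5 : C2 * ((2 * ((Y:ℝ) * Z) / m) ^ ((2:ℝ)/3) * B ^ δ) ≤ C2 * (2 * R * B ^ δ) := by gcongr
    linarith
end FB

namespace FB
open Real

lemma cube_units (N : ℕ) : 0 < N → ∀ [NeZero N],
    ((Finset.univ : Finset (ZMod N)ˣ).filter (fun u => u ^ 3 = 1)).card ≤ 3 ^ N.primeFactors.card := by
  classical
  induction N using Nat.recOnPosPrimePosCoprime with
  | prime_pow p k hp hk =>
    intro _ _
    rw [Nat.primeFactors_prime_pow hk.ne' hp, Finset.card_singleton, pow_one]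
    by_cases h2 : p = 2
    · subst h2
      have : (Finset.univ : Finset (ZMod (2^k))ˣ).filter (fun u => u ^ 3 = 1) ⊆ {1} := by
        intro u hu
        rw [Finset.mem_filter] at hu
        rw [Finset.mem_singleton]
        have h1 : orderOf u ∣ 3 := orderOf_dvd_of_pow_eq_one hu.2
        have h3 : orderOf u ∣ 2 ^ (k-1) := by
          have := orderOf_dvd_card (x := u)
          rw [ZMod.card_units_eq_totient, Nat.totient_prime_pow hp hk] at this
          simpa using this
        have h4 : Nat.Coprime 3 (2^(k-1)) := by
          apply Nat.Coprime.pow_right; norm_num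
        have := Nat.eq_one_of_dvd_coprimes h4 h1 h3
        exact orderOf_eq_one_iff.mp this
      have := Finset.card_le_card this
      rw [Finset.card_singleton] at this
      omega
    · have : IsCyclic (ZMod (p^k))ˣ := ZMod.isCyclic_units_of_prime_pow p hp h2 k
      exact IsCyclic.card_pow_eq_one_le (by norm_num)
  | zero => intro h; omega
  | one =>
    intro _ _
    have : ((Finset.univ : Finset (ZMod 1)ˣ).filter (fun u => u ^ 3 = 1)).card ≤ 1 := by
      rw [Finset.card_le_one]; intros; exact Subsingleton.elim _ _
    simpa using this
  | coprime a b ha hb hab iha ihb =>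
    intro _ _
    have : NeZero a := ⟨by omega⟩
    have : NeZero b := ⟨by omega⟩
    have h1 := iha (by omega)
    have h2 := ihb (by omega)
    rw [Nat.Coprime.primeFactors_mul hab, Finset.card_union_of_disjoint hab.disjoint_primeFactors, pow_add]
    refine le_trans ?_ (Nat.mul_le_mul h1 h2)
    rw [← Finset.card_product]
    let φ : (ZMod (a*b))ˣ ≃* (ZMod a)ˣ × (ZMod b)ˣ :=
      (Units.mapEquiv (ZMod.chineseRemainder hab).toMulEquiv).trans MulEquiv.prodUnits
    apply Finset.card_le_card_of_injOn φ
    · intro u hu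
      simp only [Finset.coe_filter, Finset.mem_univ, true_and, Set.mem_setOf_eq] at hu
      have h3 : (φ u) ^ 3 = 1 := by rw [← map_pow, hu, map_one]
      simp only [Finset.coe_product, Finset.coe_filter, Finset.mem_univ, true_and, Set.mem_prod, Set.mem_setOf_eq]
      exact ⟨congrArg Prod.fst h3, congrArg Prod.snd h3⟩
    · exact φ.injective.injOn

lemma cube_units_c (N : ℕ) [NeZero N] (c : (ZMod N)ˣ) :
    ((Finset.univ : Finset (ZMod N)ˣ).filter (fun u => u ^ 3 = c)).card ≤ 3 ^ N.primeFactors.card := by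
  classical
  refine le_trans ?_ (cube_units N (Nat.pos_of_ne_zero (NeZero.ne N)))
  rcases ((Finset.univ : Finset (ZMod N)ˣ).filter (fun u => u ^ 3 = c)).eq_empty_or_nonempty with h | ⟨v, hv⟩
  · rw [h]; simp
  · apply Finset.card_le_card_of_injOn (fun u => u * v⁻¹)
    · intro u hu
      simp only [Finset.coe_filter, Finset.mem_univ, true_and, Set.mem_setOf_eq] at hu ⊢
      have hv' := (Finset.mem_filter.mp hv).2
      rw [mul_pow, inv_pow, hu, hv', mul_inv_cancel]
    · intro u _ w _ h
      exact mul_right_cancel h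

lemma omega_bound (ε : ℝ) (hε : 0 < ε) : ∃ C : ℝ, 0 < C ∧ ∀ n : ℕ, 0 < n →
    (3:ℝ) ^ n.primeFactors.card ≤ C * (n:ℝ) ^ ε := by
  classical
  set P := (3:ℝ) ^ (1/ε) with hP
  set M := ⌊P⌋₊ + 1 with hM
  refine ⟨3 ^ M, by positivity, ?_⟩
  intro n hn
  have h1 : (3:ℝ) ^ n.primeFactors.card ≤ ∏ p ∈ n.primeFactors, ((if p < M then 3 else 1) * (p:ℝ)^ε) := by
    rw [← Finset.prod_const]
    apply Finset.prod_le_prod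
    · intros; norm_num
    · intro p hp
      have hp1 : (1:ℝ) ≤ p := by exact_mod_cast (Nat.prime_of_mem_primeFactors hp).one_le
      split_ifs with h
      · have := Real.one_le_rpow hp1 hε.le
        linarith
      · rw [one_mul]
        have h2 : P ≤ p := by
          have := Nat.lt_floor_add_one P
          have h3 : ((⌊P⌋₊ + 1 : ℕ) : ℝ) ≤ p := by exact_mod_cast not_lt.mp h
          push_cast at h3
          linarith
        calc (3:ℝ) = P ^ ε := by
              rw [hP, ← Real.rpow_mul (by norm_num), one_div, inv_mul_cancel₀ hε.ne', Real.rpow_one]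
          _ ≤ _ := by gcongr
  refine h1.trans ?_
  rw [Finset.prod_mul_distrib]
  gcongr
  · rw [← Finset.prod_filter, Finset.prod_const]
    apply pow_le_pow_right₀ (by norm_num)
    calc _ ≤ (Finset.range M).card := by
          apply Finset.card_le_card
          intro p hp
          exact Finset.mem_range.mpr (Finset.mem_filter.mp hp).2
      _ = M := Finset.card_range M
  · rw [Real.finsetProd_rpow _ _ (fun p _ => by positivity)]
    apply Real.rpow_le_rpow (by positivity) _ hε.le
    rw [← Nat.cast_prod]
    exact_mod_cast Nat.le_of_dvd hn (Nat.prod_primeFactors_dvd n)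

end FB

namespace FB
open Real

lemma fibre (δ K : ℝ) (hδ : 0 < δ) (hK : 0 ≤ K) : ∃ C : ℝ, 0 < C ∧
    ∀ (B : ℝ) (n : ℕ) (a b c Y Z : ℤ) (S : Finset (ℤ × ℤ)), 2 ≤ B → 0 < n → a ≠ 0 → b ≠ 0 → c ≠ 0 →
    0 < Y → 0 < Z → |(a:ℝ)| ≤ B ^ K → |(b:ℝ)| ≤ B ^ K → |(c:ℝ)| ≤ B ^ K → (n:ℝ) ≤ B ^ K →
    (Y:ℝ) ≤ B ^ K → (Z:ℝ) ≤ B ^ K →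
    IsCoprime a n → IsCoprime b n →
    (∀ s ∈ S, (0 < s.1 ∧ s.1 ≤ Y) ∧ (0 < s.2 ∧ s.2 ≤ Z) ∧ IsCoprime s.1 s.2 ∧ IsCoprime s.1 n ∧
      IsCoprime s.2 n ∧ ∃ x : ℤ, x ≠ 0 ∧ a * s.1 ^ 3 + b * s.2 ^ 3 + c * n ^ 3 * x ^ 2 = 0) →
    (S.card : ℝ) ≤ C * (1 + ((Y:ℝ) * Z / (n:ℝ) ^ 3) ^ ((2:ℝ)/3)) * B ^ δ := by
  classical
  set η := δ / (2 * (K + 1)) with hη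
  have hη0 : 0 < η := by positivity
  obtain ⟨C1, hC1, hom⟩ := omega_bound η hη0
  obtain ⟨C2, hC2, hcore⟩ := core (δ/2) (3 * K) (by positivity) (by positivity)
  refine ⟨C1 * C2, by positivity, ?_⟩
  intro B n a b c Y Z S hB hn ha hb hc hY hZ ba bb bc bn bY bZ can cbn hS
  have hB0 : 0 < B := by linarith
  have hBK : 1 ≤ B ^ K := Real.one_le_rpow (by linarith) hK
  have hB3 : B ^ (3 * K) = B ^ K * B ^ K * B ^ K := by
    rw [show 3 * K = K + K + K by ring, Real.rpow_add hB0, Real.rpow_add hB0]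
  have hBB : B ^ K ≤ B ^ (3 * K) := Real.rpow_le_rpow_of_exponent_le (by linarith) (by linarith)
  set N := n ^ 3 with hN
  have hN0 : 0 < N := by positivity
  have : NeZero N := ⟨hN0.ne'⟩
  have unit_of : ∀ z : ℤ, IsCoprime z n → IsUnit (z : ZMod N) := by
    intro z hz
    rw [ZMod.coe_int_isUnit_iff_isCoprime, hN]
    push_cast
    exact (hz.symm).pow_left
  obtain ⟨ua, hua⟩ := unit_of a can
  obtain ⟨ub, hub⟩ := unit_of b cbn
  set T := ((Finset.univ : Finset (ZMod N)ˣ).filter (fun u => u ^ 3 = -(ub * ua⁻¹))) with hT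
  have hTc : (T.card : ℝ) ≤ C1 * B ^ (δ/2) := by
    have h1 : (T.card : ℝ) ≤ (3:ℝ) ^ n.primeFactors.card := by
      have := cube_units_c N (-(ub * ua⁻¹))
      have hpf : N.primeFactors = n.primeFactors := Nat.primeFactors_pow _ (by norm_num)
      rw [hpf] at this
      exact_mod_cast this
    refine h1.trans ((hom n hn).trans ?_)
    gcongr
    calc (n:ℝ) ^ η ≤ (B ^ K) ^ η := by gcongr
      _ = B ^ (K * η) := by rw [← Real.rpow_mul hB0.le]
      _ ≤ _ := by
        apply Real.rpow_le_rpow_of_exponent_le (by linarith)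
        rw [hη, ← mul_div_assoc, div_le_div_iff₀ (by positivity) (by positivity)]
        nlinarith
  have hcls : ∀ s ∈ S, ∃ u ∈ T, (s.1 : ZMod N) = (u : ZMod N) * (s.2 : ZMod N) := by
    intro s hs
    obtain ⟨-, -, -, h1, h2, x, hx, heq⟩ := hS s hs
    obtain ⟨u, hu⟩ := unit_of _ h1
    obtain ⟨v, hv⟩ := unit_of _ h2
    refine ⟨u * v⁻¹, ?_, ?_⟩
    · rw [hT, Finset.mem_filter]
      refine ⟨Finset.mem_univ _, ?_⟩
      have h3 : (ua : ZMod N) * (u:ZMod N) ^ 3 + (ub : ZMod N) * (v:ZMod N) ^ 3 = 0 := by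
        have h4 := congrArg (Int.cast : ℤ → ZMod N) heq
        push_cast at h4
        have h5 : ((n:ZMod N)) ^ 3 = 0 := by
          have := ZMod.natCast_self N
          rw [hN] at this
          push_cast at this
          exact this
        rw [h5] at h4
        rw [hua, hu, hub, hv]
        linear_combination h4
      have h6 : ua * u ^ 3 = - (ub * v ^ 3) := by
        apply Units.ext
        push_cast
        exact eq_neg_of_add_eq_zero_left h3
      have h7 : u ^ 3 = -(ub * ua⁻¹ * v ^ 3) := by
        calc u ^ 3 = ua⁻¹ * (ua * u ^ 3) := by rw [inv_mul_cancel_left]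
          _ = _ := by rw [h6, mul_neg]; congr 1; rw [← mul_assoc, mul_comm ua⁻¹]
      rw [mul_pow, h7, inv_pow, neg_mul, mul_inv_cancel_right]
    · rw [← hu, ← hv, ← Units.val_mul, inv_mul_cancel_right]
  have hsub : S ⊆ T.biUnion (fun u => S.filter (fun s => (s.1 : ZMod N) = (u : ZMod N) * (s.2 : ZMod N))) := by
    intro s hs
    obtain ⟨u, hu, h⟩ := hcls s hs
    exact Finset.mem_biUnion.mpr ⟨u, hu, Finset.mem_filter.mpr ⟨hs, h⟩⟩
  set R := C2 * (1 + ((Y:ℝ) * Z / (n:ℝ) ^ 3) ^ ((2:ℝ)/3)) * B ^ (δ/2) with hR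
  have hY0 : (0:ℝ) < Y := by exact_mod_cast hY
  have hZ0 : (0:ℝ) < Z := by exact_mod_cast hZ
  have hn0 : (0:ℝ) < n := by exact_mod_cast hn
  have hR0 : 0 ≤ R := by positivity
  have hclass : ∀ u ∈ T, ((S.filter (fun s => (s.1 : ZMod N) = (u : ZMod N) * (s.2 : ZMod N))).card : ℝ) ≤ R := by
    intro u hu
    have H : Hyp B (3 * K) ((n:ℤ) ^ 3) (((u : ZMod N).val : ℕ) : ℤ) (-(c * n * a)) (-(c * n * b)) Y Z
        (S.filter (fun s => (s.1 : ZMod N) = (u : ZMod N) * (s.2 : ZMod N))) := by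
      have hnz : (n:ℤ) ≠ 0 := by exact_mod_cast hn.ne'
      refine ⟨hB, by positivity, hY, hZ, ?_, ?_, ?_, ?_, ?_, bY.trans hBB, bZ.trans hBB, ?_⟩
      · exact neg_ne_zero.mpr (mul_ne_zero (mul_ne_zero hc hnz) ha)
      · exact neg_ne_zero.mpr (mul_ne_zero (mul_ne_zero hc hnz) hb)
      · push_cast
        rw [abs_neg, abs_mul, abs_mul, hB3, abs_of_pos hn0]; gcongr
      · push_cast
        rw [abs_neg, abs_mul, abs_mul, hB3, abs_of_pos hn0]; gcongr
      · push_cast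
        rw [hB3, show (n:ℝ)^3 = n * n * n by ring]; gcongr
      · intro s hs
        obtain ⟨hs1, hs2⟩ := Finset.mem_filter.mp hs
        obtain ⟨h1, h2, h3, -, -, x, hx, heq⟩ := hS s hs1
        have hGG : GG (-(c * n * a)) (-(c * n * b)) s = (c * n ^ 2 * x) * (c * n ^ 2 * x) := by
          unfold GG
          linear_combination (-(c * n)) * heq
        refine ⟨h1, h2, h3, ?_, ?_, ⟨_, hGG⟩⟩
        · have : ((N : ℕ) : ℤ) ∣ s.1 - (((u : ZMod N).val : ℕ) : ℤ) * s.2 := by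
            rw [← ZMod.intCast_zmod_eq_zero_iff_dvd]
            push_cast
            rw [ZMod.natCast_zmod_val, hs2, sub_self]
          have hNc : ((N : ℕ) : ℤ) = (n:ℤ) ^ 3 := by rw [hN]; push_cast; rfl
          rw [← hNc]
          exact this
        · rw [hGG]
          have : c * n ^ 2 * x ≠ 0 := mul_ne_zero (mul_ne_zero hc (pow_ne_zero _ hnz)) hx
          exact mul_ne_zero this this
    have := hcore _ _ _ _ _ _ _ _ H
    push_cast at this
    exact this
  have h1 : (S.card : ℝ) ≤ ∑ u ∈ T, ((S.filter (fun s => (s.1 : ZMod N) = (u : ZMod N) * (s.2 : ZMod N))).card : ℝ) := by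
    exact_mod_cast (Finset.card_le_card hsub).trans Finset.card_biUnion_le
  refine h1.trans ((Finset.sum_le_card_nsmul _ _ _ hclass).trans ?_)
  rw [nsmul_eq_mul]
  calc (T.card : ℝ) * R ≤ C1 * B ^ (δ/2) * R := by gcongr
    _ = _ := by
      have : B ^ δ = B ^ (δ/2) * B ^ (δ/2) := by rw [← Real.rpow_add hB0]; congr 1; ring
      rw [hR, this]; ring

end FB

namespace FB
open Real

lemma fin3_cases : ∀ i j k : Fin 3, i ≠ j → i ≠ k → j ≠ k → ∀ l, l = i ∨ l = j ∨ l = k := by decide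

lemma fin3_univ : ∀ i j k : Fin 3, i ≠ j → i ≠ k → j ≠ k → (Finset.univ : Finset (Fin 3)) = {i, j, k} := by
  decide

lemma S0_eq {a : Fin 3 → ℤ} {X Y : Fin 3 → ℝ} {p : (Fin 3 → ℤ) × (Fin 3 → ℤ)} (h : p ∈ S0 a X Y)
    {i j k : Fin 3} (hij : i ≠ j) (hik : i ≠ k) (hjk : j ≠ k) :
    a i * p.1 i ^ 2 * p.2 i ^ 3 + a j * p.1 j ^ 2 * p.2 j ^ 3 + a k * p.1 k ^ 2 * p.2 k ^ 3 = 0 := by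
  obtain ⟨-, -, -, -, h1, -⟩ := h
  have h2 : ∑ l : Fin 3, a l * p.1 l ^ 2 * p.2 l ^ 3 = 0 := by
    rw [Fin.sum_univ_three]; exact h1
  rw [fin3_univ i j k hij hik hjk, Finset.sum_insert (by simp [hij, hik]), Finset.sum_insert (by simp [hjk]),
    Finset.sum_singleton] at h2
  rw [add_assoc]; exact h2

lemma S0_a {a : Fin 3 → ℤ} {X Y : Fin 3 → ℝ} {p : (Fin 3 → ℤ) × (Fin 3 → ℤ)} (h : p ∈ S0 a X Y)
    (l l' : Fin 3) : IsCoprime (a l) (p.1 l' * p.2 l') := by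
  obtain ⟨-, -, -, -, -, -, h1, -⟩ := h
  have h2 := Int.isCoprime_iff_gcd_eq_one.mpr h1
  have e1 : a 0 * a 1 * a 2 = ∏ l, a l := by rw [Fin.prod_univ_three]
  have e2 : p.1 0 * p.1 1 * p.1 2 * p.2 0 * p.2 1 * p.2 2 = ∏ l, (p.1 l * p.2 l) := by
    rw [Fin.prod_univ_three]; ring
  rw [e1, e2] at h2
  exact (h2.of_isCoprime_of_dvd_left (Finset.dvd_prod_of_mem _ (Finset.mem_univ l))).of_isCoprime_of_dvd_right
    (Finset.dvd_prod_of_mem (fun l => p.1 l * p.2 l) (Finset.mem_univ l'))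

lemma S0_cop {a : Fin 3 → ℤ} {X Y : Fin 3 → ℝ} {p : (Fin 3 → ℤ) × (Fin 3 → ℤ)} (h : p ∈ S0 a X Y)
    {i j k : Fin 3} (hij : i ≠ j) (hik : i ≠ k) (hjk : j ≠ k) :
    IsCoprime (p.1 i * p.2 i) (p.1 j * p.2 j) := by
  have heq := S0_eq h hij hik hjk
  have ha := S0_a h k i
  obtain ⟨hx, hy, -, -, -, hg, -, -⟩ := h
  apply isCoprime_of_prime_dvd
  · rintro ⟨h0, -⟩
    exact (mul_pos (hx i) (hy i)).ne' h0
  · intro q hq h1 h2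
    have h3 : q ∣ a k * (p.1 k ^ 2 * p.2 k ^ 3) := by
      have e : a k * (p.1 k ^ 2 * p.2 k ^ 3) = -(p.1 i * p.2 i) * (a i * p.1 i * p.2 i ^ 2)
          + (p.1 j * p.2 j) * (-(a j * p.1 j * p.2 j ^ 2)) := by linear_combination heq
      rw [e]
      exact dvd_add ((h1.neg_right).mul_right _) (h2.mul_right _)
    have h4 : ¬ q ∣ a k := fun h5 => hq.not_isUnit (ha.isUnit_of_dvd' h5 h1)
    have h6 : q ∣ p.1 k * p.2 k := by
      rcases hq.dvd_or_dvd h3 with h5 | h5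
      · exact absurd h5 h4
      · rcases hq.dvd_or_dvd h5 with h7 | h7
        · exact (hq.dvd_of_dvd_pow h7).mul_right _
        · exact (hq.dvd_of_dvd_pow h7).mul_left _
    have hall : ∀ l, q ∣ p.1 l * p.2 l := by
      intro l
      rcases fin3_cases i j k hij hik hjk l with rfl | rfl | rfl
      · exact h1
      · exact h2
      · exact h6
    have h7 : q ∣ ((Int.gcd (p.1 0 * p.2 0) (Int.gcd (p.1 1 * p.2 1) (p.1 2 * p.2 2)) : ℕ) : ℤ) :=
      Int.dvd_coe_gcd (hall 0) (Int.dvd_coe_gcd (hall 1) (hall 2))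
    rw [hg] at h7
    exact hq.not_isUnit (isUnit_of_dvd_one (by exact_mod_cast h7))

end FB

set_option maxHeartbeats 1000000 in
theorem N0_fibre_bound (ε : ℝ) (hε : 0 < ε) :
    ∃ C : ℝ, 0 < C ∧ ∀ (a : Fin 3 → ℤ) (X Y : Fin 3 → ℝ) (B : ℝ),
      2 ≤ B → (∀ i, a i ≠ 0) → (∀ i, Squarefree (a i)) →
      (∀ i j, i ≠ j → IsCoprime (a i) (a j)) →
      (∀ i, 1 ≤ X i) → (∀ i, 1 ≤ Y i) →
      (∀ i, X i ^ 2 * Y i ^ 3 ≤ 32 * B / |(a i : ℝ)|) →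
      ∀ i j k : Fin 3, i ≠ j → i ≠ k → j ≠ k →
      ∀ xi xj yk : ℤ, 0 < xi → 0 < xj → 0 < yk →
        (({t : ℤ × ℤ × ℤ |
            ((fun l => if l = i then xi else if l = j then xj else t.1),
             (fun l => if l = k then yk else if l = i then t.2.1 else t.2.2)) ∈
              S0 a X Y}).ncard : ℝ) ≤
          C * (1 + (Y i * Y j) ^ ((2 : ℝ) / 3) * Y k ^ (-2 : ℝ)) * B ^ ε := by
  classical
  obtain ⟨C, hC, hfib⟩ := FB.fibre ε 6 hε (by norm_num)
  refine ⟨4 * C, by positivity, ?_⟩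
  intro a X Y B hB ha _ _ hX hY hXY i j k hij hik hjk xi xj yk hxi hxj hyk
  set A := {t : ℤ × ℤ × ℤ |
            ((fun l => if l = i then xi else if l = j then xj else t.1),
             (fun l => if l = k then yk else if l = i then t.2.1 else t.2.2)) ∈
              S0 a X Y} with hA
  have hB0 : 0 < B := by linarith
  have hYi := hY i
  have hYj := hY j
  have hYk := hY k
  set R := (Y i * Y j) ^ ((2 : ℝ) / 3) * Y k ^ (-2 : ℝ) with hR
  have hR0 : 0 ≤ R := by positivity
  have hBε : 0 < B ^ ε := by positivity
  rcases A.eq_empty_or_nonempty with hAe | ⟨t0, ht0⟩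
  · rw [hAe, Set.ncard_empty, Nat.cast_zero]
    positivity
  -- facts about members
  have facts : ∀ t ∈ A, (0 < t.1 ∧ 0 < t.2.1 ∧ 0 < t.2.2) ∧ ((t.2.1 : ℝ) ≤ Y i ∧ (t.2.2 : ℝ) ≤ Y j) ∧
      ((xi : ℝ) ≤ X i ∧ (xj : ℝ) ≤ X j ∧ Y k / 2 < (yk:ℝ) ∧ (yk : ℝ) ≤ Y k) ∧
      a i * xi ^ 2 * t.2.1 ^ 3 + a j * xj ^ 2 * t.2.2 ^ 3 + a k * t.1 ^ 2 * yk ^ 3 = 0 ∧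
      (IsCoprime (xi * t.2.1) (xj * t.2.2) ∧ IsCoprime (xi * t.2.1) (t.1 * yk) ∧
        IsCoprime (xj * t.2.2) (t.1 * yk)) ∧ (IsCoprime (a i) (t.1 * yk) ∧ IsCoprime (a j) (t.1 * yk)) := by
    intro t ht
    have ht' : ((fun l => if l = i then xi else if l = j then xj else t.1),
             (fun l => if l = k then yk else if l = i then t.2.1 else t.2.2)) ∈ S0 a X Y := ht
    have q1 := FB.S0_eq ht' hij hik hjk
    have q2 := FB.S0_cop ht' hij hik hjk
    have q3 := FB.S0_cop ht' hik hij hjk.symm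
    have q4 := FB.S0_cop ht' hjk hij.symm hik.symm
    have q5 := FB.S0_a ht' i k
    have q6 := FB.S0_a ht' j k
    obtain ⟨r1, r2, r3, r4, -⟩ := ht'
    have r1k := r1 k
    have r2i := r2 i
    have r2j := r2 j
    have r3i := (r3 i).2
    have r3j := (r3 j).2
    have r4i := (r4 i).2
    have r4j := (r4 j).2
    have r4k := r4 k
    simp only [if_true, hij, hik, hjk, hij.symm, hik.symm, hjk.symm, if_false] at *
    exact ⟨⟨r1k, r2i, r2j⟩, ⟨r4i, r4j⟩, ⟨r3i, r3j, r4k.1, r4k.2⟩, q1, ⟨q2, q3, q4⟩, q5, q6⟩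
  obtain ⟨⟨f1, f2, f3⟩, ⟨f4, f5⟩, ⟨f6, f7, f8, f9⟩, f10, ⟨f11, f12, f13⟩, f14, f15⟩ := facts t0 ht0
  -- size bounds
  have h32 : 32 * B ≤ B ^ (6:ℝ) := by
    have : B ^ (6:ℝ) = B ^ 5 * B := by
      rw [show (6:ℝ) = ((6:ℕ):ℝ) by norm_num, Real.rpow_natCast]; ring
    rw [this]
    have : (2:ℝ) ^ 5 ≤ B ^ 5 := by gcongr
    norm_num at this
    gcongr
  have hprod : ∀ l, |(a l : ℝ)| * (X l ^ 2 * Y l ^ 3) ≤ 32 * B := by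
    intro l
    have h1 : 0 < |(a l : ℝ)| := abs_pos.mpr (by exact_mod_cast ha l)
    have h2 := hXY l
    rw [le_div_iff₀ h1] at h2
    linarith
  have ha1 : ∀ l, 1 ≤ |(a l : ℝ)| := by
    intro l
    have : 1 ≤ |a l| := Int.one_le_abs (ha l)
    rw [← Int.cast_abs]
    exact_mod_cast this
  have haX : ∀ l, |(a l : ℝ)| * X l ^ 2 ≤ 32 * B := by
    intro l
    refine le_trans ?_ (hprod l)
    rw [← mul_assoc]
    exact le_mul_of_one_le_right (by positivity) (one_le_pow₀ (hY l))
  have haa : ∀ l, |(a l : ℝ)| ≤ 32 * B := fun l =>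
    le_trans (le_mul_of_one_le_right (by positivity) (one_le_pow₀ (hX l))) (haX l)
  have hYB : ∀ l, Y l ≤ 32 * B := by
    intro l
    refine le_trans ?_ (hprod l)
    have h1 : Y l ≤ Y l ^ 3 := le_self_pow₀ (hY l) (by norm_num)
    have h2 : 1 ≤ X l ^ 2 := one_le_pow₀ (hX l)
    have h3 : 0 ≤ Y l ^ 3 := by have := hY l; positivity
    calc Y l ≤ Y l ^ 3 := h1
      _ ≤ X l ^ 2 * Y l ^ 3 := le_mul_of_one_le_left h3 h2
      _ ≤ _ := le_mul_of_one_le_left (by positivity) (ha1 l)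
  obtain ⟨n, rfl⟩ : ∃ n : ℕ, yk = n := ⟨yk.toNat, (Int.toNat_of_nonneg hyk.le).symm⟩
  have hn : 0 < n := by exact_mod_cast hyk
  have hyf : 0 < ⌊Y i⌋ := Int.floor_pos.mpr hYi
  have hzf : 0 < ⌊Y j⌋ := Int.floor_pos.mpr hYj
  set S := (Finset.Icc 1 ⌊Y i⌋ ×ˢ Finset.Icc 1 ⌊Y j⌋).filter (fun s : ℤ × ℤ => ∃ x, (x, s) ∈ A) with hS
  have hcard : A.ncard ≤ S.card := by
    rw [← Set.ncard_coe_finset]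
    refine Set.ncard_le_ncard_of_injOn Prod.snd ?_ ?_ (Finset.finite_toSet _)
    · intro t ht
      obtain ⟨⟨g1, g2, g3⟩, ⟨g4, g5⟩, -⟩ := facts t ht
      rw [Finset.mem_coe, hS, Finset.mem_filter, Finset.mem_product, Finset.mem_Icc, Finset.mem_Icc]
      exact ⟨⟨⟨g2, Int.le_floor.mpr g4⟩, ⟨g3, Int.le_floor.mpr g5⟩⟩, t.1, ht⟩
    · intro t ht t' ht' htt
      obtain ⟨⟨g1, -⟩, -, -, g2, -⟩ := facts t ht
      obtain ⟨⟨g1', -⟩, -, -, g2', -⟩ := facts t' ht'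
      have htt2 : t.2 = t'.2 := htt
      rw [htt2] at g2
      have hc : a k * (n:ℤ) ^ 3 ≠ 0 := mul_ne_zero (ha k) (pow_ne_zero _ hyk.ne')
      have h1 : a k * (n:ℤ) ^ 3 * t.1 ^ 2 = a k * (n:ℤ) ^ 3 * t'.1 ^ 2 := by linear_combination g2 - g2'
      have h2 := mul_left_cancel₀ hc h1
      have h3 : t.1 = t'.1 := (pow_left_inj₀ g1.le g1'.le (by norm_num)).mp h2
      exact Prod.ext h3 htt2
  have hbound : ∀ (l : Fin 3) (x : ℤ), 0 < x → (x:ℝ) ≤ X l → |((a l * x ^ 2 : ℤ) : ℝ)| ≤ B ^ (6:ℝ) := by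
    intro l x hx0 hx
    have : (0:ℝ) < x := by exact_mod_cast hx0
    push_cast
    rw [abs_mul, abs_of_pos (a := (x:ℝ)^2) (by positivity)]
    refine le_trans ?_ ((haX l).trans h32)
    gcongr
  have hmain := hfib B n (a i * xi ^ 2) (a j * xj ^ 2) (a k) ⌊Y i⌋ ⌊Y j⌋ S hB hn
    (mul_ne_zero (ha i) (pow_ne_zero _ hxi.ne')) (mul_ne_zero (ha j) (pow_ne_zero _ hxj.ne')) (ha k) hyf hzf
    (hbound i xi hxi f6) (hbound j xj hxj f7) ((haa k).trans h32)
    (le_trans (by exact_mod_cast f9) ((hYB k).trans h32))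
    ((Int.floor_le _).trans ((hYB i).trans h32)) ((Int.floor_le _).trans ((hYB j).trans h32))
    (IsCoprime.mul_left f14.of_mul_right_right (f12.of_mul_left_left.of_mul_right_right.pow_left))
    (IsCoprime.mul_left f15.of_mul_right_right (f13.of_mul_left_left.of_mul_right_right.pow_left))
    (by
      intro s hs
      rw [hS, Finset.mem_filter, Finset.mem_product, Finset.mem_Icc, Finset.mem_Icc] at hs
      obtain ⟨⟨⟨b1, b2⟩, ⟨b3, b4⟩⟩, x, hx⟩ := hs
      obtain ⟨⟨g1, g2, g3⟩, -, -, g10, ⟨g11, g12, g13⟩, -⟩ := facts _ hx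
      refine ⟨⟨by omega, b2⟩, ⟨by omega, b4⟩, g11.of_mul_left_right.of_mul_right_right,
        g12.of_mul_left_right.of_mul_right_right, g13.of_mul_left_right.of_mul_right_right, x, g1.ne', ?_⟩
      linear_combination g10)
  have hn0 : (0:ℝ) < n := by exact_mod_cast hn
  have hyf0 : (0:ℝ) < ⌊Y i⌋ := by exact_mod_cast hyf
  have hzf0 : (0:ℝ) < ⌊Y j⌋ := by exact_mod_cast hzf
  have hYk0 : 0 < Y k := by linarith
  have hratio : (((⌊Y i⌋ : ℤ):ℝ) * (⌊Y j⌋ : ℤ) / (n:ℝ) ^ 3) ^ ((2:ℝ)/3) ≤ 4 * R := by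
    have h1 : ((⌊Y i⌋ : ℤ):ℝ) * (⌊Y j⌋ : ℤ) / (n:ℝ) ^ 3 ≤ Y i * Y j / (Y k / 2) ^ 3 := by
      have hf8 : Y k / 2 ≤ n := by
        have h9 : Y k / 2 < (n:ℝ) := by exact_mod_cast f8
        exact h9.le
      have e1 := Int.floor_le (Y i)
      have e2 := Int.floor_le (Y j)
      gcongr
    refine (Real.rpow_le_rpow (by positivity) h1 (by norm_num)).trans (le_of_eq ?_)
    rw [Real.div_rpow (by positivity) (by positivity), ← Real.rpow_natCast (Y k / 2) 3,
      ← Real.rpow_mul (by positivity), hR]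
    rw [show ((3:ℕ):ℝ) * (2/3) = 2 by norm_num, Real.rpow_neg hYk0.le]
    rw [show (2:ℝ) = ((2:ℕ):ℝ) by norm_num, Real.rpow_natCast, Real.rpow_natCast]
    push_cast
    field_simp
    norm_num
  calc (A.ncard : ℝ) ≤ S.card := by exact_mod_cast hcard
    _ ≤ _ := hmain
    _ ≤ C * (4 * (1 + R)) * B ^ ε := by
      gcongr
      linarith
    _ = _ := by ring
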